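/- arXiv:cs/0510044 — 3 statements merged into one kernel-verified Lean document; each statement's English description precedes it below -/
import Mathlib

section
/- Fix σ > 0, α > 0, and a > 0. Then there exists a constant C > 0 such that for every N ≥ 1, setting K = ⌈αN⌉ and letting the entries s_{ia} (i ∈ [K], a ∈ [N]) be i.i.d. uniform on {+1, −1}, with probability at least 1 − C·N^{−a} the signature matrix s has the following property: for every y ∈ ℝ^N and every i ∈ [K], the limits L_i^{(∞)} = lim_{t→∞} L_i^{(t)} and G_i^{(∞)} = lim_{t→∞} G_i^{(t)} of the BP outputs exist, and G_i^{(∞)}/L_i^{(∞)} equals the i-th coordinate of the MMSE estimate x̂(y) = (σ²·I_K + S̃ᵀS̃)⁻¹·S̃ᵀ·y. -/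
open Finset Matrix

namespace BP

variable {K N : ℕ}

/-- Chip-to-user variance message λ̂_{a→i} computed from user-to-chip messages `lam`. -/
noncomputable def lamHat (σ : ℝ) (s : Fin K → Fin N → ℝ)
    (lam : Fin K → Fin N → ℝ) (a : Fin N) (i : Fin K) : ℝ :=
  σ ^ 2 + (1 / (N : ℝ)) * ∑ k ∈ Finset.univ.erase i, s k a ^ 2 / lam k a

/-- User-to-chip variance messages λ^{(t)}_{i→a}. -/
noncomputable def lam (σ : ℝ) (s : Fin K → Fin N → ℝ) : ℕ → Fin K → Fin N → ℝ
  | 0 => fun _ _ => 1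
  | t + 1 => fun i a =>
      1 + (1 / (N : ℝ)) * ∑ b ∈ Finset.univ.erase a,
        s i b ^ 2 / lamHat σ s (lam σ s t) b i

/-- Chip-to-user mean message γ̂_{a→i} computed from time-`t` messages. -/
noncomputable def gamHat (s : Fin K → Fin N → ℝ) (y : Fin N → ℝ)
    (lamt gamt : Fin K → Fin N → ℝ) (a : Fin N) (i : Fin K) : ℝ :=
  y a - (1 / Real.sqrt N) * ∑ k ∈ Finset.univ.erase i, (s k a / lamt k a) * gamt k a

/-- User-to-chip mean messages γ^{(t)}_{i→a}. -/
noncomputable def gam (σ : ℝ) (s : Fin K → Fin N → ℝ) (y : Fin N → ℝ) :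
    ℕ → Fin K → Fin N → ℝ
  | 0 => fun _ _ => 0
  | t + 1 => fun i a =>
      (1 / Real.sqrt N) * ∑ b ∈ Finset.univ.erase a,
        (s i b / lamHat σ s (lam σ s t) b i) *
          gamHat s y (lam σ s t) (gam σ s y t) b i

/-- BP output G_i^{(t)} (with the convention G_i^{(0)} = 0). -/
noncomputable def Gout (σ : ℝ) (s : Fin K → Fin N → ℝ) (y : Fin N → ℝ) :
    ℕ → Fin K → ℝ
  | 0 => fun _ => 0
  | t + 1 => fun i =>
      (1 / Real.sqrt N) * ∑ b : Fin N,
        (s i b / lamHat σ s (lam σ s t) b i) *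
          gamHat s y (lam σ s t) (gam σ s y t) b i

/-- BP output L_i^{(t)} (with the convention L_i^{(0)} = 1). -/
noncomputable def Lout (σ : ℝ) (s : Fin K → Fin N → ℝ) : ℕ → Fin K → ℝ
  | 0 => fun _ => 1
  | t + 1 => fun i =>
      1 + (1 / (N : ℝ)) * ∑ b : Fin N, s i b ^ 2 / lamHat σ s (lam σ s t) b i

end BP
/-- Convert a Boolean matrix into a ±1 signature matrix. -/
def toSign {K N : ℕ} (s : Fin K → Fin N → Bool) : Fin K → Fin N → ℝ :=
  fun i a => if s i a then 1 else -1

/-- The N×K matrix S̃ with entries S̃_{ai} = s_{ia}/√N. -/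
noncomputable def Stilde {K N : ℕ} (s : Fin K → Fin N → ℝ) : Matrix (Fin N) (Fin K) ℝ :=
  Matrix.of fun a i => s i a / Real.sqrt N

/-- The MMSE estimate x̂(y) = (σ²·I + S̃ᵀS̃)⁻¹ S̃ᵀ y. -/
noncomputable def mmseEstimate {K N : ℕ} (σ : ℝ) (s : Fin K → Fin N → ℝ)
    (y : Fin N → ℝ) : Fin K → ℝ :=
  ((σ ^ 2 • (1 : Matrix (Fin K) (Fin K) ℝ) + (Stilde s)ᵀ * Stilde s)⁻¹).mulVec
    ((Stilde s)ᵀ.mulVec y)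

/-!
With high probability the largest eigenvalue of `A = S̃ᵀ S̃` is below the threshold
`2 * ((N - 1) / N + (K - 1) / N) + σ²`, and below this threshold BP converges to the MMSE estimate
deterministically.

On a `±1` matrix the variance messages depend on neither endpoint, so they follow a scalar monotone
recursion; the mean outputs `G` then obey a linear second-order recurrence whose coefficients
converge. In an eigenbasis of `A` it decouples into scalar recurrences, and the eigenvalue bound is
exactly what puts the roots of their limiting characteristic polynomials inside the unit disc. The
fixed point solves the normal equations of the MMSE estimate up to the factor `lim L`.

The eigenvalue bound is Markov's inequality for `tr A ^ Q` with `Q` of order `log N`. For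
`S = √N S̃ᵀ`, integration by parts over the signs gives a quadratic recursion for
`E tr (S Sᵀ) ^ q`, similar to that of the Catalan numbers, which bounds this moment by
`(2 * (N + K + O(Q³))) ^ Q` up to a factor `O(N)`. As `2 * (N + K)` is smaller than `N` times
the threshold by a constant factor, a large multiple of `log N` as `Q` makes the failure
probability `O(N ^ (-a))`.
-/

namespace BeliefPropagation

section RademacherMean

lemma monomial_eq_X_mul {ι : Type*} {d : ι →₀ ℕ} {e : ι} (he : d e ≠ 0) (c : ℕ) :
    MvPolynomial.monomial d c =
      MvPolynomial.X e * MvPolynomial.monomial (d - Finsupp.single e 1) c := by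
  rw [MvPolynomial.X, MvPolynomial.monomial_mul, one_mul, add_tsub_cancel_of_le]
  simpa [Nat.one_le_iff_ne_zero] using he

lemma pderiv_monomial_eq_natCast_mul {ι : Type*} (d : ι →₀ ℕ) (e : ι) (c : ℕ) :
    MvPolynomial.pderiv e (MvPolynomial.monomial d c) =
      (d e : MvPolynomial ι ℕ) * MvPolynomial.monomial (d - Finsupp.single e 1) c := by
  rw [MvPolynomial.pderiv_monomial, ← nsmul_eq_mul, MvPolynomial.smul_monomial, nsmul_eq_mul,
    Nat.cast_id, mul_comm]

variable {ι : Type*} [Fintype ι] [DecidableEq ι]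

/-- The expectation of `F(ε)` for independent uniform signs `ε`, with `true` and `false` standing
for `1` and `-1`. Coefficients in `ℕ` make the expectation monotone in the coefficients, which is
what the inequalities below rest on. -/
noncomputable def rademacherMean : MvPolynomial ι ℕ →+ ℝ :=
  ((Fintype.card (ι → Bool) : ℝ)⁻¹ • ∑ ε : ι → Bool,
    (MvPolynomial.eval₂Hom (Nat.castRingHom ℝ) fun e => bif ε e then 1 else -1).toAddMonoidHom)

lemma rademacherMean_apply (F : MvPolynomial ι ℕ) :
    rademacherMean F = (Fintype.card (ι → Bool) : ℝ)⁻¹ *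
      ∑ ε : ι → Bool, F.eval₂ (Nat.castRingHom ℝ) fun e => bif ε e then 1 else -1 := by
  simp [rademacherMean]

lemma rademacherMean_natCast_mul (n : ℕ) (F : MvPolynomial ι ℕ) :
    rademacherMean ((n : MvPolynomial ι ℕ) * F) = n * rademacherMean F := by
  rw [← nsmul_eq_mul, map_nsmul, nsmul_eq_mul]

lemma rademacherMean_one : rademacherMean (1 : MvPolynomial ι ℕ) = 1 := by
  simp [rademacherMean_apply]

lemma rademacherMean_X_mul_X_mul (e : ι) (F : MvPolynomial ι ℕ) :
    rademacherMean (MvPolynomial.X e * (MvPolynomial.X e * F)) = rademacherMean F := by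
  simp only [rademacherMean_apply, MvPolynomial.eval₂_mul, MvPolynomial.eval₂_X, ← mul_assoc]
  congr! with ε
  cases ε e <;> simp

lemma rademacherMean_monomial (d : ι →₀ ℕ) (c : ℕ) [Decidable (∀ e, Even (d e))] :
    rademacherMean (MvPolynomial.monomial d c) = if ∀ e, Even (d e) then (c : ℝ) else 0 := by
  have sum_signs_pow (k : ℕ) :
      ∑ b : Bool, (bif b then 1 else -1 : ℝ) ^ k = if Even k then 2 else 0 := by
    rcases k.even_or_odd with hk | hk
    · simp [hk, hk.neg_one_pow, one_add_one_eq_two]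
    · simp [Nat.not_even_iff_odd.mpr hk, hk.neg_one_pow]
  have sum_prod : ∑ ε : ι → Bool, ∏ e, (bif ε e then 1 else -1 : ℝ) ^ d e =
      ∏ e, if Even (d e) then 2 else 0 := by
    simp only [← sum_signs_pow, Finset.prod_univ_sum, Fintype.piFinset_univ]
  simp only [rademacherMean_apply, MvPolynomial.eval₂_monomial, Nat.coe_castRingHom,
    Finsupp.prod_fintype _ _ fun _ => pow_zero _, ← Finset.mul_sum, sum_prod,
    Finset.prod_ite_zero, Finset.mem_univ, true_imp_iff]
  split_ifs <;> simp [mul_left_comm]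

lemma rademacherMean_nonneg (F : MvPolynomial ι ℕ) : 0 ≤ rademacherMean F := by
  induction F using MvPolynomial.induction_on' with
  | monomial d c => rw [rademacherMean_monomial]; positivity
  | add F G hF hG => rw [map_add]; positivity

/-- A discrete form of Gaussian integration by parts; only an inequality, because each sign
satisfies `ε² = 1`. -/
lemma rademacherMean_X_mul_le (e : ι) (F : MvPolynomial ι ℕ) :
    rademacherMean (MvPolynomial.X e * F) ≤ rademacherMean (MvPolynomial.pderiv e F) := by
  induction F using MvPolynomial.induction_on' with
  | monomial d c =>
    by_cases he : d e = 0
    · have odd_exponent : ¬ ∀ f, Even ((Finsupp.single e 1 + d : ι →₀ ℕ) f) := fun h => by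
        simpa [he] using h e
      rw [MvPolynomial.X, MvPolynomial.monomial_mul, rademacherMean_monomial, if_neg odd_exponent]
      exact rademacherMean_nonneg _
    · rw [pderiv_monomial_eq_natCast_mul, rademacherMean_natCast_mul, monomial_eq_X_mul he,
        rademacherMean_X_mul_X_mul]
      exact le_mul_of_one_le_left (rademacherMean_nonneg _)
        (mod_cast Nat.one_le_iff_ne_zero.mpr he)
  | add F G hF hG => simp only [mul_add, map_add]; gcongr

lemma rademacherMean_monomial_mul_monomial_le (d₁ d₂ : ι →₀ ℕ) (c₁ c₂ : ℕ) :
    rademacherMean (MvPolynomial.monomial d₁ c₁ * MvPolynomial.monomial d₂ c₂) ≤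
      rademacherMean (MvPolynomial.monomial d₁ c₁) * rademacherMean (MvPolynomial.monomial d₂ c₂) +
        ∑ e, rademacherMean (MvPolynomial.pderiv e (MvPolynomial.monomial d₁ c₁) *
          MvPolynomial.pderiv e (MvPolynomial.monomial d₂ c₂)) := by
  have product_nonneg := mul_nonneg (rademacherMean_nonneg (MvPolynomial.monomial d₁ c₁))
    (rademacherMean_nonneg (MvPolynomial.monomial d₂ c₂))
  have gradient_nonneg (e : ι) := rademacherMean_nonneg
    (MvPolynomial.pderiv e (MvPolynomial.monomial d₁ c₁) *
      MvPolynomial.pderiv e (MvPolynomial.monomial d₂ c₂))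
  have sum_nonneg := Finset.sum_nonneg fun e (_ : e ∈ Finset.univ) => gradient_nonneg e
  by_cases heven : ∀ e, Even ((d₁ + d₂) e)
  swap
  · rw [MvPolynomial.monomial_mul, rademacherMean_monomial, if_neg heven]
    positivity
  by_cases h₁ : ∀ e, Even (d₁ e)
  · have h₂ : ∀ e, Even (d₂ e) := fun e => (Nat.even_add.mp (heven e)).mp (h₁ e)
    rw [MvPolynomial.monomial_mul] at *
    simp only [rademacherMean_monomial, heven, h₁, h₂, implies_true, if_true] at *
    push_cast
    linarith
  · obtain ⟨e, he₁⟩ := not_forall.mp h₁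
    have he₂ : ¬ Even (d₂ e) := fun h => he₁ ((Nat.even_add.mp (heven e)).mpr h)
    have ne_zero {m : ℕ} (hm : ¬ Even m) : m ≠ 0 := fun h => hm (h ▸ Even.zero)
    have le_gradient :
        rademacherMean (MvPolynomial.monomial d₁ c₁ * MvPolynomial.monomial d₂ c₂) ≤
          rademacherMean (MvPolynomial.pderiv e (MvPolynomial.monomial d₁ c₁) *
            MvPolynomial.pderiv e (MvPolynomial.monomial d₂ c₂)) := by
      rw [pderiv_monomial_eq_natCast_mul, pderiv_monomial_eq_natCast_mul, mul_mul_mul_comm,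
        ← Nat.cast_mul, rademacherMean_natCast_mul, monomial_eq_X_mul (ne_zero he₁),
        monomial_eq_X_mul (ne_zero he₂), mul_mul_mul_comm, mul_assoc, rademacherMean_X_mul_X_mul]
      exact le_mul_of_one_le_left (rademacherMean_nonneg _)
        (mod_cast Nat.one_le_iff_ne_zero.mpr (mul_ne_zero (ne_zero he₁) (ne_zero he₂)))
    linarith [Finset.single_le_sum (fun f _ => gradient_nonneg f) (Finset.mem_univ e)]

/-- A Poincaré-type decoupling bound: the covariance is at most the correlation of gradients. -/
lemma rademacherMean_mul_le (F G : MvPolynomial ι ℕ) :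
    rademacherMean (F * G) ≤ rademacherMean F * rademacherMean G +
      ∑ e, rademacherMean (MvPolynomial.pderiv e F * MvPolynomial.pderiv e G) := by
  induction F using MvPolynomial.induction_on' with
  | monomial d₁ c₁ =>
    induction G using MvPolynomial.induction_on' with
    | monomial d₂ c₂ => exact rademacherMean_monomial_mul_monomial_le d₁ d₂ c₁ c₂
    | add G₁ G₂ h₁ h₂ =>
      simp only [mul_add, map_add, Finset.sum_add_distrib]
      linarith
  | add F₁ F₂ h₁ h₂ =>
    simp only [add_mul, map_add, Finset.sum_add_distrib]
    linarith

end RademacherMean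

section MatrixDerivation

variable {R A l m n : Type*} [CommSemiring R] [CommSemiring A] [Algebra R A]

lemma map_derivation_mul [Fintype m] (D : Derivation R A A) (M : Matrix l m A) (P : Matrix m n A) :
    (M * P).map D = M.map D * P + M * P.map D := by
  ext x y
  simp only [Matrix.map_apply, Matrix.mul_apply, Matrix.add_apply, map_sum, Derivation.leibniz,
    smul_eq_mul, Finset.sum_add_distrib]
  simp only [add_comm, mul_comm]

variable [Fintype m] [DecidableEq m]

lemma map_derivation_pow (D : Derivation R A A) (M : Matrix m m A) (q : ℕ) :
    (M ^ q).map D = ∑ p ∈ range q, M ^ p * M.map D * M ^ (q - 1 - p) := by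
  induction q with
  | zero => ext x y; by_cases h : x = y <;> simp [h]
  | succ q ih =>
    rw [pow_succ, map_derivation_mul, ih, Finset.sum_range_succ, Finset.sum_mul,
      Nat.add_sub_cancel, Nat.sub_self, pow_zero, mul_one]
    congr 1
    refine Finset.sum_congr rfl fun p hp => ?_
    rw [Finset.mem_range] at hp
    rw [mul_assoc, ← pow_succ, show q - 1 - p + 1 = q - p by lia]

lemma derivation_trace_pow (D : Derivation R A A) (M : Matrix m m A) (q : ℕ) :
    D (M ^ q).trace = q * (M ^ (q - 1) * M.map D).trace := by
  have cyclic : ∀ p ∈ range q,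
      (M ^ p * M.map D * M ^ (q - 1 - p)).trace = (M ^ (q - 1) * M.map D).trace := by
    intro p hp
    rw [Finset.mem_range] at hp
    rw [Matrix.trace_mul_comm, ← mul_assoc, ← pow_add, Nat.sub_add_cancel (by lia)]
  calc D (M ^ q).trace = ((M ^ q).map D).trace := by simp [Matrix.trace]
    _ = q * (M ^ (q - 1) * M.map D).trace := by
      rw [map_derivation_pow, Matrix.trace_sum, Finset.sum_congr rfl cyclic, Finset.sum_const,
        Finset.card_range, nsmul_eq_mul]

end MatrixDerivation

lemma mul_single_one_mul_apply {R l m n o : Type*} [CommSemiring R] [Fintype m] [DecidableEq m]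
    [Fintype n] [DecidableEq n] (M : Matrix l m R) (x : m) (y : n) (P : Matrix n o R) (i : l)
    (j : o) : (M * Matrix.single x y (1 : R) * P) i j = M i x * P y j := by
  simp [Matrix.mul_apply, Matrix.single_apply, ite_and]

lemma pderiv_mvPolynomialX {I J : Type*} [DecidableEq I] [DecidableEq J] (i : I) (a : J) :
    (Matrix.mvPolynomialX I J ℕ).map (MvPolynomial.pderiv (i, a)) =
      Matrix.single i a (1 : MvPolynomial (I × J) ℕ) := by
  ext j b
  simp [Matrix.single_apply, MvPolynomial.pderiv_X, Pi.single_apply, eq_comm]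

section GenericGram

variable (I J : Type*) [Fintype J]

/-- The Gram matrix `S Sᵀ` of the rows of the generic `I × J` matrix `S`, whose entries are the
indeterminates `X (i, a)`. -/
noncomputable def genericGram : Matrix I I (MvPolynomial (I × J) ℕ) :=
  Matrix.mvPolynomialX I J ℕ * (Matrix.mvPolynomialX I J ℕ)ᵀ

variable {I J}

lemma pderiv_genericGram [DecidableEq I] [DecidableEq J] (i : I) (a : J) :
    (genericGram I J).map (MvPolynomial.pderiv (i, a)) =
      Matrix.single i a (1 : MvPolynomial (I × J) ℕ) * (Matrix.mvPolynomialX I J ℕ)ᵀ +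
        Matrix.mvPolynomialX I J ℕ * Matrix.single a i (1 : MvPolynomial (I × J) ℕ) := by
  rw [genericGram, map_derivation_mul, Matrix.transpose_map, pderiv_mvPolynomialX,
    Matrix.transpose_single]

variable [Fintype I] [DecidableEq I]

lemma transpose_genericGram_pow (q : ℕ) : (genericGram I J ^ q)ᵀ = genericGram I J ^ q := by
  simp [Matrix.transpose_pow, genericGram, Matrix.transpose_mul]

lemma pderiv_trace_genericGram_pow (i : I) (a : J) (q : ℕ) :
    MvPolynomial.pderiv (i, a) (genericGram I J ^ q).trace =
      (2 * q : ℕ) * (genericGram I J ^ (q - 1) * Matrix.mvPolynomialX I J ℕ) i a := by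
  classical
  have transposed_term :
      (genericGram I J ^ (q - 1) * (Matrix.single i a (1 : MvPolynomial (I × J) ℕ) *
        (Matrix.mvPolynomialX I J ℕ)ᵀ)).trace =
        (genericGram I J ^ (q - 1) * Matrix.mvPolynomialX I J ℕ) i a := by
    rw [← Matrix.trace_transpose, Matrix.transpose_mul, Matrix.transpose_mul,
      transpose_genericGram_pow, Matrix.transpose_transpose, Matrix.transpose_single,
      Matrix.trace_mul_comm, ← Matrix.mul_assoc, Matrix.trace_mul_single]
    simp
  rw [derivation_trace_pow, pderiv_genericGram, Matrix.mul_add, Matrix.trace_add, transposed_term,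
    ← Matrix.mul_assoc, Matrix.trace_mul_single]
  simp
  ring

lemma sum_genericGram_pow_mul_mul (p r : ℕ) :
    ∑ i : I, ∑ a : J, (genericGram I J ^ p * Matrix.mvPolynomialX I J ℕ) i a *
        (genericGram I J ^ r * Matrix.mvPolynomialX I J ℕ) i a =
      (genericGram I J ^ (p + r + 1)).trace := by
  have split : genericGram I J ^ (p + r + 1) =
      genericGram I J ^ p * Matrix.mvPolynomialX I J ℕ *
        (genericGram I J ^ r * Matrix.mvPolynomialX I J ℕ)ᵀ := by
    rw [Matrix.transpose_mul, transpose_genericGram_pow, Matrix.mul_assoc,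
      ← Matrix.mul_assoc (Matrix.mvPolynomialX I J ℕ), ← genericGram, ← pow_succ', ← pow_add]
    rfl
  rw [split, Matrix.trace]
  simp only [Matrix.diag_apply, Matrix.mul_apply (N := (_ * _)ᵀ), Matrix.transpose_apply]

lemma pderiv_genericGram_pow_mul_mvPolynomialX (i : I) (a : J) (q : ℕ) :
    MvPolynomial.pderiv (i, a) ((genericGram I J ^ q * Matrix.mvPolynomialX I J ℕ) i a) =
      (genericGram I J ^ q) i i + ∑ p ∈ range q, ((genericGram I J ^ p) i i *
          ((Matrix.mvPolynomialX I J ℕ)ᵀ * genericGram I J ^ (q - 1 - p) *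
            Matrix.mvPolynomialX I J ℕ) a a +
        (genericGram I J ^ p * Matrix.mvPolynomialX I J ℕ) i a *
          (genericGram I J ^ (q - 1 - p) * Matrix.mvPolynomialX I J ℕ) i a) := by
  classical
  have product_rule := map_derivation_mul (MvPolynomial.pderiv (i, a)) (genericGram I J ^ q)
    (Matrix.mvPolynomialX I J ℕ)
  have entry := congr_fun₂ product_rule i a
  rw [Matrix.map_apply] at entry
  rw [entry, pderiv_mvPolynomialX, map_derivation_pow, add_comm, Matrix.add_apply, Matrix.sum_mul,
    Matrix.sum_apply]
  congr 1
  · simp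
  · refine Finset.sum_congr rfl fun p _ => ?_
    rw [pderiv_genericGram, Matrix.mul_add, Matrix.add_mul, Matrix.add_mul, Matrix.add_apply,
      ← mul_single_one_mul_apply (genericGram I J ^ p),
      ← mul_single_one_mul_apply (genericGram I J ^ p * _)]
    simp only [Matrix.mul_assoc]

lemma trace_genericGram_pow_mul_trace (p r : ℕ) :
    (genericGram I J ^ p).trace * (genericGram I J ^ (r + 1)).trace =
      ∑ i : I, ∑ a : J, (genericGram I J ^ p) i i *
        ((Matrix.mvPolynomialX I J ℕ)ᵀ * genericGram I J ^ r * Matrix.mvPolynomialX I J ℕ) a a := by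
  have cyclic : (genericGram I J ^ (r + 1)).trace =
      ((Matrix.mvPolynomialX I J ℕ)ᵀ * genericGram I J ^ r * Matrix.mvPolynomialX I J ℕ).trace := by
    rw [Matrix.trace_mul_comm, ← Matrix.mul_assoc, ← genericGram, pow_succ']
  rw [cyclic]
  simp only [Matrix.trace, Matrix.diag_apply, Finset.sum_mul_sum]

lemma sum_pderiv_genericGram_pow_mul_mvPolynomialX (q : ℕ) :
    ∑ i : I, ∑ a : J, MvPolynomial.pderiv (i, a)
        ((genericGram I J ^ q * Matrix.mvPolynomialX I J ℕ) i a) =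
      Fintype.card J * (genericGram I J ^ q).trace +
        ∑ p ∈ range q, ((genericGram I J ^ p).trace * (genericGram I J ^ (q - p)).trace +
          (genericGram I J ^ q).trace) := by
  have exchange (f : ℕ → I → J → MvPolynomial (I × J) ℕ) :
      ∑ i, ∑ a, ∑ p ∈ range q, f p i a = ∑ p ∈ range q, ∑ i, ∑ a, f p i a := by
    rw [Finset.sum_congr rfl fun i _ => Finset.sum_comm, Finset.sum_comm]
  simp only [pderiv_genericGram_pow_mul_mvPolynomialX, Finset.sum_add_distrib (s := univ),
    exchange, sum_genericGram_pow_mul_mul]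
  congr 1
  · simp [Matrix.trace, Finset.mul_sum]
  · refine Finset.sum_congr rfl fun p hp => ?_
    rw [Finset.mem_range] at hp
    rw [← trace_genericGram_pow_mul_trace, show q - 1 - p + 1 = q - p by lia,
      show p + (q - 1 - p) + 1 = q by lia]

end GenericGram

section TraceMoment

variable {I J : Type*} [Fintype I] [DecidableEq I] [Fintype J] [DecidableEq J]

variable (I J) in
/-- The moment `E tr (S Sᵀ) ^ q` of an `I × J` matrix `S` of independent uniform signs. -/
noncomputable def traceMoment (q : ℕ) : ℝ :=
  rademacherMean (genericGram I J ^ q).trace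

lemma traceMoment_nonneg (q : ℕ) : 0 ≤ traceMoment I J q :=
  rademacherMean_nonneg _

lemma traceMoment_zero : traceMoment I J 0 = Fintype.card I := by
  simpa [traceMoment, rademacherMean_one] using
    rademacherMean_natCast_mul (ι := I × J) (Fintype.card I) 1

lemma rademacherMean_trace_mul_trace_le (p r : ℕ) :
    rademacherMean ((genericGram I J ^ p).trace * (genericGram I J ^ r).trace) ≤
      traceMoment I J p * traceMoment I J r + 4 * p * r * traceMoment I J (p + r - 1) := by
  refine (rademacherMean_mul_le _ _).trans_eq ?_
  have gradient_product (i : I) (a : J) :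
      MvPolynomial.pderiv (i, a) (genericGram I J ^ p).trace *
          MvPolynomial.pderiv (i, a) (genericGram I J ^ r).trace =
        (4 * p * r : ℕ) * ((genericGram I J ^ (p - 1) * Matrix.mvPolynomialX I J ℕ) i a *
          (genericGram I J ^ (r - 1) * Matrix.mvPolynomialX I J ℕ) i a) := by
    rw [pderiv_trace_genericGram_pow, pderiv_trace_genericGram_pow]
    push_cast
    ring
  rw [← map_sum, Fintype.sum_prod_type]
  simp only [gradient_product, ← Finset.mul_sum, sum_genericGram_pow_mul_mul,
    rademacherMean_natCast_mul]
  rcases p with - | p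
  · simp [traceMoment]
  rcases r with - | r
  · simp [traceMoment]
  rw [show p + 1 - 1 + (r + 1 - 1) + 1 = p + 1 + (r + 1) - 1 by lia]
  simp only [traceMoment]
  push_cast
  ring

lemma traceMoment_succ_le_sum (q : ℕ) :
    traceMoment I J (q + 1) ≤ (Fintype.card J + q) * traceMoment I J q +
      ∑ p ∈ range q, (traceMoment I J p * traceMoment I J (q - p) +
        4 * p * (q - p : ℕ) * traceMoment I J (q - 1)) := by
  calc traceMoment I J (q + 1)
      = ∑ i : I, ∑ a : J, rademacherMean (MvPolynomial.X (i, a) *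
          (genericGram I J ^ q * Matrix.mvPolynomialX I J ℕ) i a) := by
        simp only [traceMoment, ← map_sum]
        rw [← zero_add q, ← sum_genericGram_pow_mul_mul]
        simp
    _ ≤ rademacherMean (∑ i : I, ∑ a : J, MvPolynomial.pderiv (i, a)
          ((genericGram I J ^ q * Matrix.mvPolynomialX I J ℕ) i a)) := by
        simp only [map_sum]
        gcongr
        exact rademacherMean_X_mul_le _ _
    _ = (Fintype.card J + q) * traceMoment I J q + ∑ p ∈ range q,
          rademacherMean ((genericGram I J ^ p).trace * (genericGram I J ^ (q - p)).trace) := by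
        rw [sum_pderiv_genericGram_pow_mul_mvPolynomialX, map_add, rademacherMean_natCast_mul,
          map_sum]
        simp only [map_add, Finset.sum_add_distrib, Finset.sum_const, Finset.card_range,
          nsmul_eq_mul, traceMoment]
        ring
    _ ≤ _ := by
        gcongr with p hp
        rw [Finset.mem_range] at hp
        have := rademacherMean_trace_mul_trace_le (I := I) (J := J) p (q - p)
        rwa [show p + (q - p) - 1 = q - 1 by lia] at this

/-- Dropping the off-diagonal entries of the last factor of `(S Sᵀ) ^ (q + 1)` leaves
`(S Sᵀ) i i = |J|`. -/
lemma card_mul_traceMoment_le (q : ℕ) :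
    Fintype.card J * traceMoment I J q ≤ traceMoment I J (q + 1) := by
  have diagonal_term (i : I) : rademacherMean ((genericGram I J ^ q) i i * genericGram I J i i) =
      Fintype.card J * rademacherMean ((genericGram I J ^ q) i i) := by
    have diagonal_entry : genericGram I J i i =
        ∑ a, MvPolynomial.X (i, a) * MvPolynomial.X (i, a) := by
      simp [genericGram, Matrix.mul_apply]
    rw [diagonal_entry, Finset.mul_sum, map_sum]
    simp only [mul_comm ((genericGram I J ^ q) i i), mul_assoc, rademacherMean_X_mul_X_mul,
      Finset.sum_const, Finset.card_univ, nsmul_eq_mul]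
  calc Fintype.card J * traceMoment I J q
      = ∑ i, rademacherMean ((genericGram I J ^ q) i i * genericGram I J i i) := by
        simp only [diagonal_term, ← Finset.mul_sum, ← map_sum]
        rfl
    _ ≤ ∑ i, ∑ j, rademacherMean ((genericGram I J ^ q) i j * genericGram I J j i) := by
        gcongr with i
        exact Finset.single_le_sum
          (f := fun j => rademacherMean ((genericGram I J ^ q) i j * genericGram I J j i))
          (fun _ _ => rademacherMean_nonneg _) (Finset.mem_univ i)
    _ = traceMoment I J (q + 1) := by
        simp [traceMoment, Matrix.trace, pow_succ, Matrix.mul_apply]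

lemma traceMoment_succ_le [Nonempty J] (q : ℕ) :
    traceMoment I J (q + 1) ≤ (Fintype.card J + q + 4 * q ^ 3) * traceMoment I J q +
      ∑ p ∈ range q, traceMoment I J p * traceMoment I J (q - p) := by
  have pred_le (hq : 0 < q) : traceMoment I J (q - 1) ≤ traceMoment I J q := by
    have := card_mul_traceMoment_le (I := I) (J := J) (q - 1)
    rw [Nat.sub_add_cancel hq] at this
    exact (le_mul_of_one_le_left (traceMoment_nonneg _) (mod_cast Fintype.card_pos)).trans this
  have correction_le : ∑ p ∈ range q, 4 * p * (q - p : ℕ) * traceMoment I J (q - 1) ≤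
      4 * q ^ 3 * traceMoment I J q := by
    calc ∑ p ∈ range q, (4 * p * (q - p : ℕ) * traceMoment I J (q - 1))
        ≤ ∑ p ∈ range q, (4 * q * q * traceMoment I J q) := by
          gcongr with p hp
          · exact traceMoment_nonneg _
          · exact (Finset.mem_range.mp hp).le
          · exact Nat.sub_le q p
          · exact pred_le (Nat.zero_lt_of_lt (Finset.mem_range.mp hp))
      _ = 4 * q ^ 3 * traceMoment I J q := by
          rw [Finset.sum_const, Finset.card_range, nsmul_eq_mul]
          ring
  have := traceMoment_succ_le_sum (I := I) (J := J) q
  rw [Finset.sum_add_distrib] at this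
  linarith

end TraceMoment

lemma sum_convolution_le {u : ℕ → ℝ} (hu : ∀ q, 0 ≤ u q) (n : ℕ) :
    ∑ q ∈ range n, ∑ p ∈ range q, u p * u (q - p) ≤
      (∑ q ∈ range n, u q) * (∑ q ∈ range n, u q - u 0) := by
  have full_convolution_le : ∑ q ∈ range n, ∑ p ∈ range (q + 1), u p * u (q - p) ≤
      (∑ q ∈ range n, u q) * ∑ q ∈ range n, u q := by
    rw [Finset.sum_range_diag_flip n fun p r => u p * u r, Finset.sum_mul_sum]
    gcongr with p
    · exact fun _ _ _ => mul_nonneg (hu _) (hu _)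
    · exact Nat.sub_le n p
  simp only [Finset.sum_range_succ, Finset.sum_add_distrib, Nat.sub_self, ← Finset.sum_mul]
    at full_convolution_le
  linarith

lemma sum_le_of_convolution_recurrence {u : ℕ → ℝ} {A : ℝ} {Q : ℕ} (hA : 0 < A)
    (hu : ∀ q, 0 ≤ u q)
    (hrec : ∀ q < Q, 2 * (A + u 0) * u (q + 1) ≤ A * u q + ∑ p ∈ range q, u p * u (q - p)) :
    ∑ q ∈ range (Q + 1), u q ≤ (A + 3 * u 0) / 2 := by
  have A_add_pos : 0 < 2 * (A + u 0) := by linarith [hu 0]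
  induction Q with
  | zero => simp only [zero_add, Finset.sum_range_one]; linarith [hu 0]
  | succ Q ih =>
    have F_le := ih fun q hq => hrec q (by lia)
    have u_zero_le := Finset.single_le_sum (fun q _ => hu q) (Finset.mem_range.mpr Q.succ_pos)
    have summed : 2 * (A + u 0) * ∑ q ∈ range (Q + 1), u (q + 1) ≤
        A * ∑ q ∈ range (Q + 1), u q +
          (∑ q ∈ range (Q + 1), u q) * (∑ q ∈ range (Q + 1), u q - u 0) := by
      refine le_trans ?_ (add_le_add_right (sum_convolution_le hu (Q + 1)) _)
      rw [Finset.mul_sum, Finset.mul_sum, ← Finset.sum_add_distrib]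
      gcongr with q hq
      exact hrec q (Finset.mem_range.mp hq)
    rw [Finset.sum_range_succ']
    set F := ∑ q ∈ range (Q + 1), u q
    refine le_of_mul_le_mul_left ?_ A_add_pos
    nlinarith [mul_nonneg (sub_nonneg.mpr F_le) (add_nonneg hA.le (hu 0)),
      mul_nonneg (sub_nonneg.mpr F_le) (sub_nonneg.mpr u_zero_le), sq_nonneg (A - u 0)]

lemma le_mul_pow_of_convolution_recurrence {m : ℕ → ℝ} {A : ℝ} {Q : ℕ} (hA : 0 < A)
    (hm : ∀ q, 0 ≤ m q)
    (hrec : ∀ q < Q, m (q + 1) ≤ A * m q + ∑ p ∈ range q, m p * m (q - p)) :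
    m Q ≤ (A + 3 * m 0) / 2 * (2 * (A + m 0)) ^ Q := by
  have ρ_pos : 0 < 2 * (A + m 0) := by linarith [hm 0]
  set ρ := 2 * (A + m 0)
  set u : ℕ → ℝ := fun q => m q / ρ ^ q
  have u_nonneg (q : ℕ) : 0 ≤ u q := div_nonneg (hm q) (by positivity)
  have u_zero : u 0 = m 0 := by simp [u]
  have rescaled : ∀ q < Q, ρ * u (q + 1) ≤ A * u q + ∑ p ∈ range q, u p * u (q - p) := by
    intro q hq
    have convolution : ∑ p ∈ range q, u p * u (q - p) =
        (∑ p ∈ range q, m p * m (q - p)) / ρ ^ q := by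
      rw [Finset.sum_div]
      refine Finset.sum_congr rfl fun p hp => ?_
      rw [div_mul_div_comm, ← pow_add, Nat.add_sub_cancel' (Finset.mem_range.mp hp).le]
    rw [convolution]
    simp only [u]
    rw [pow_succ, ← mul_div_assoc, mul_comm (ρ ^ q), mul_div_mul_left _ _ ρ_pos.ne',
      ← mul_div_assoc, ← add_div]
    gcongr
    exact hrec q hq
  have sum_le := sum_le_of_convolution_recurrence hA u_nonneg (by rwa [u_zero])
  have u_le := (Finset.single_le_sum (fun q _ => u_nonneg q)
    (Finset.mem_range.mpr Q.lt_succ_self)).trans sum_le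
  rwa [u_zero, div_le_iff₀ (by positivity)] at u_le

lemma traceMoment_le {I J : Type*} [Fintype I] [DecidableEq I] [Fintype J] [DecidableEq J]
    [Nonempty J] (Q : ℕ) :
    traceMoment I J Q ≤
      (Fintype.card J + Q + 4 * Q ^ 3 + 3 * Fintype.card I) / 2 *
        (2 * (Fintype.card J + Q + 4 * Q ^ 3 + Fintype.card I)) ^ Q := by
  have : 0 < (Fintype.card J : ℝ) := mod_cast Fintype.card_pos
  rw [← traceMoment_zero (I := I) (J := J)]
  refine le_mul_pow_of_convolution_recurrence (by positivity) traceMoment_nonneg fun q hq => ?_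
  refine (traceMoment_succ_le q).trans ?_
  gcongr
  exact traceMoment_nonneg q

section SecondOrderRecurrence

open Filter Topology

lemma tendsto_zero_of_le_mul_add {a κ ε : ℕ → ℝ} {κ₀ : ℝ} (ha : ∀ t, 0 ≤ a t)
    (hκ : Tendsto κ atTop (𝓝 κ₀)) (hκ_lt : κ₀ < 1) (hε : Tendsto ε atTop (𝓝 0))
    (hrec : ∀ t, a (t + 1) ≤ κ t * a t + ε t) : Tendsto a atTop (𝓝 0) := by
  refine tendsto_order.2 ⟨fun b hb => .of_forall fun t => hb.trans_le (ha t), fun η hη => ?_⟩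
  obtain ⟨κ₁, κ₁_gt, κ₁_lt⟩ := exists_between (max_lt hκ_lt one_pos)
  obtain ⟨κ₀_lt, κ₁_pos⟩ := max_lt_iff.mp κ₁_gt
  obtain ⟨T, hT⟩ := eventually_atTop.1 ((hκ.eventually_lt_const κ₀_lt).and
    (hε.eventually_lt_const (mul_pos (sub_pos.2 κ₁_lt) (half_pos hη))))
  have geometric (m : ℕ) : a (T + m) - η / 2 ≤ κ₁ ^ m * (a T - η / 2) := by
    refine le_geom (u := fun m => a (T + m) - η / 2) κ₁_pos.le m fun k _ => ?_
    obtain ⟨κ_lt, ε_lt⟩ := hT (T + k) (Nat.le_add_right T k)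
    have := mul_le_mul_of_nonneg_right κ_lt.le (ha (T + k))
    rw [← add_assoc]
    linarith [hrec (T + k)]
  have geometric_tendsto : Tendsto (fun m => κ₁ ^ m * (a T - η / 2)) atTop (𝓝 0) := by
    simpa using (tendsto_pow_atTop_nhds_zero_of_lt_one κ₁_pos.le κ₁_lt).mul_const (a T - η / 2)
  obtain ⟨M, hM⟩ := eventually_atTop.1 (geometric_tendsto.eventually_lt_const (half_pos hη))
  filter_upwards [eventually_ge_atTop (T + M)] with t ht
  obtain ⟨m, rfl⟩ := Nat.exists_eq_add_of_le (le_of_add_le_left ht)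
  linarith [geometric m, hM m (by lia)]

lemma tendsto_zero_of_triangular_recurrence {u x δ ρ : ℕ → ℝ} {q₁ q₂ : ℝ} (hu : ∀ t, 0 ≤ u t)
    (hx : ∀ t, 0 ≤ x t) (hq₁ : q₁ < 1) (hq₂ : q₂ < 1) (hδ : Tendsto δ atTop (𝓝 0))
    (hρ : Tendsto ρ atTop (𝓝 0)) (hu_succ : ∀ t, u (t + 1) ≤ q₁ * u t + x t)
    (hx_succ : ∀ t, x (t + 1) ≤ q₂ * x t + (δ t * (u t + x t) + ρ t)) :
    Tendsto u atTop (𝓝 0) := by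
  -- With this weight, `u + M x` contracts by `max q₁ ((1 + q₂) / 2)` up to vanishing terms.
  set M := 1 + 2 / (1 - q₂) with hM
  set κ₀ := max q₁ ((1 + q₂) / 2)
  have gap_pos : 0 < 1 - q₂ := sub_pos.2 hq₂
  have one_le_M : 1 ≤ M := le_add_of_nonneg_right (by positivity)
  have M_mul_gap : M * (1 - q₂) = 3 - q₂ := by
    rw [hM, add_mul, div_mul_cancel₀ _ gap_pos.ne']
    ring
  have κ₀_lt : κ₀ < 1 := max_lt hq₁ (by linarith)
  have weighted_tendsto : Tendsto (fun t => u t + M * x t) atTop (𝓝 0) := by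
    refine tendsto_zero_of_le_mul_add (κ := fun t => κ₀ + M * |δ t|) (ε := fun t => M * ρ t)
      (fun t => add_nonneg (hu t) (mul_nonneg (by positivity) (hx t))) ?_ κ₀_lt ?_ fun t => ?_
    · simpa using (hδ.abs.const_mul M).const_add κ₀
    · simpa using hρ.const_mul M
    have u_part : q₁ * u t ≤ κ₀ * u t := mul_le_mul_of_nonneg_right (le_max_left _ _) (hu t)
    have x_part : (M * q₂ + 1) * x t ≤ κ₀ * (M * x t) := by
      rw [← mul_assoc]
      refine mul_le_mul_of_nonneg_right ?_ (hx t)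
      nlinarith [le_max_right q₁ ((1 + q₂) / 2)]
    have δ_part : M * (δ t * (u t + x t)) ≤ M * |δ t| * (u t + M * x t) := by
      rw [mul_assoc]
      gcongr
      · exact add_nonneg (hu t) (hx t)
      · exact le_abs_self _
      · exact le_mul_of_one_le_left (hx t) one_le_M
    linarith [hu_succ t, mul_le_mul_of_nonneg_left (hx_succ t) (zero_le_one.trans one_le_M)]
  refine squeeze_zero hu (fun t => ?_) weighted_tendsto
  exact le_add_of_nonneg_right (mul_nonneg (by positivity) (hx t))

/-- With `x t = e (t + 1) - r₁ * e t` the recurrence becomes triangular up to vanishing terms. -/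
lemma tendsto_zero_of_second_order_recurrence {𝕜 : Type*} [NormedField 𝕜] {e h d r : ℕ → 𝕜}
    {r₁ r₂ : 𝕜} (hr₁ : ‖r₁‖ < 1) (hr₂ : ‖r₂‖ < 1) (hh : Tendsto h atTop (𝓝 (r₁ + r₂)))
    (hd : Tendsto d atTop (𝓝 (r₁ * r₂))) (hr : Tendsto r atTop (𝓝 0))
    (hrec : ∀ t, e (t + 2) = h t * e (t + 1) - d t * e t + r t) : Tendsto e atTop (𝓝 0) := by
  set x : ℕ → 𝕜 := fun t => e (t + 1) - r₁ * e t with hx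
  have e_succ (t : ℕ) : ‖e (t + 1)‖ ≤ ‖r₁‖ * ‖e t‖ + ‖x t‖ := by
    rw [← norm_mul]
    exact (congr_arg norm (add_sub_cancel _ _).symm).trans_le (norm_add_le _ _)
  have e_succ' (t : ℕ) : ‖e (t + 1)‖ ≤ ‖e t‖ + ‖x t‖ :=
    (e_succ t).trans (add_le_add_left (mul_le_of_le_one_left (norm_nonneg _) hr₁.le) _)
  have x_succ (t : ℕ) : x (t + 1) = r₂ * x t +
      (((h t - (r₁ + r₂)) * e (t + 1) - (d t - r₁ * r₂) * e t) + r t) := by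
    simp only [hx, hrec]
    ring
  refine tendsto_zero_iff_norm_tendsto_zero.2 (tendsto_zero_of_triangular_recurrence
    (x := fun t => ‖x t‖) (δ := fun t => ‖h t - (r₁ + r₂)‖ + ‖d t - r₁ * r₂‖)
    (ρ := fun t => ‖r t‖) (fun t => norm_nonneg (e t)) (fun t => norm_nonneg (x t)) hr₁ hr₂ ?_
    (tendsto_zero_iff_norm_tendsto_zero.1 hr) e_succ fun t => ?_)
  · simpa using (tendsto_iff_norm_sub_tendsto_zero.1 hh).add
      (tendsto_iff_norm_sub_tendsto_zero.1 hd)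
  · rw [x_succ, add_mul]
    refine norm_add_le_of_le (norm_mul _ _).le (norm_add_le_of_le
      (norm_sub_le_of_le ?_ ?_) le_rfl)
    · exact (norm_mul_le _ _).trans (mul_le_mul_of_nonneg_left (e_succ' t) (norm_nonneg _))
    · refine (norm_mul_le _ _).trans (mul_le_mul_of_nonneg_left ?_ (norm_nonneg _))
      exact le_add_of_nonneg_right (norm_nonneg _)

/-- The Jury stability criterion for quadratic polynomials. -/
lemma norm_lt_one_of_sq_sub_mul_add_eq_zero {h d : ℝ} (hd : d < 1) (hh : |h| < 1 + d) {z : ℂ}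
    (hz : z ^ 2 - h * z + d = 0) : ‖z‖ < 1 := by
  have re_eq : z.re ^ 2 - z.im ^ 2 - h * z.re + d = 0 := by
    simpa [sq] using congr_arg Complex.re hz
  have im_eq : z.im * (2 * z.re - h) = 0 := by
    have := congr_arg Complex.im hz
    simp only [sq, Complex.add_im, Complex.sub_im, Complex.mul_im, Complex.ofReal_re,
      Complex.ofReal_im, Complex.zero_im] at this
    linarith
  rcases mul_eq_zero.1 im_eq with im_zero | h_eq
  · have norm_eq : ‖z‖ = |z.re| := Complex.abs_re_eq_norm.2 im_zero |>.symm
    by_contra! one_le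
    rw [norm_eq] at one_le
    have := le_abs_self (h * z.re)
    rw [abs_mul] at this
    nlinarith [sq_abs z.re]
  · have norm_sq_eq : ‖z‖ ^ 2 = d := by
      rw [Complex.sq_norm, Complex.normSq_apply]
      linear_combination z.re * h_eq - re_eq
    exact (sq_lt_one_iff₀ (norm_nonneg z)).1 (norm_sq_eq.trans_lt hd)

lemma exists_add_eq_mul_eq_norm_lt_one {h d : ℝ} (hd : d < 1) (hh : |h| < 1 + d) :
    ∃ r₁ r₂ : ℂ, r₁ + r₂ = h ∧ r₁ * r₂ = d ∧ ‖r₁‖ < 1 ∧ ‖r₂‖ < 1 := by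
  obtain ⟨w, hw⟩ := IsAlgClosed.exists_eq_mul_self ((h : ℂ) ^ 2 - 4 * d)
  refine ⟨(h + w) / 2, (h - w) / 2, by ring, by linear_combination hw / 4,
    norm_lt_one_of_sq_sub_mul_add_eq_zero hd hh ?_, norm_lt_one_of_sq_sub_mul_add_eq_zero hd hh ?_⟩
  · linear_combination -hw / 4
  · linear_combination -hw / 4

lemma tendsto_of_second_order_recurrence {g h d f : ℕ → ℝ} {h₀ d₀ f₀ l : ℝ} (hd₀ : d₀ < 1)
    (hh₀ : |h₀| < 1 + d₀) (hh : Tendsto h atTop (𝓝 h₀)) (hd : Tendsto d atTop (𝓝 d₀))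
    (hf : Tendsto f atTop (𝓝 f₀)) (hl : h₀ * l - d₀ * l + f₀ = l)
    (hrec : ∀ t, g (t + 2) = h t * g (t + 1) - d t * g t + f t) : Tendsto g atTop (𝓝 l) := by
  obtain ⟨r₁, r₂, sum_eq, prod_eq, hr₁, hr₂⟩ := exists_add_eq_mul_eq_norm_lt_one hd₀ hh₀
  have coe_tendsto {v : ℕ → ℝ} {v₀ : ℝ} (hv : Tendsto v atTop (𝓝 v₀)) :
      Tendsto (fun t => (v t : ℂ)) atTop (𝓝 v₀) := (Complex.continuous_ofReal.tendsto v₀).comp hv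
  have residual_tendsto : Tendsto (fun t => h t * l - d t * l + f t - l) atTop (𝓝 0) := by
    simpa [hl] using (((hh.mul_const l).sub (hd.mul_const l)).add hf).sub_const l
  have error_tendsto : Tendsto (fun t => ((g t - l : ℝ) : ℂ)) atTop (𝓝 0) := by
    refine tendsto_zero_of_second_order_recurrence (r := fun t => _) hr₁ hr₂
      (sum_eq ▸ coe_tendsto hh) (prod_eq ▸ coe_tendsto hd)
      (by simpa using coe_tendsto residual_tendsto) fun t => ?_
    rw [hrec]
    push_cast
    ring
  simpa using ((Complex.continuous_re.tendsto 0).comp error_tendsto).add_const l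

lemma star_eigenvectorUnitary_mul {ι : Type*} [Fintype ι] [DecidableEq ι] {A : Matrix ι ι ℝ}
    (hA : A.IsHermitian) :
    star (hA.eigenvectorUnitary : Matrix ι ι ℝ) * A =
      diagonal hA.eigenvalues * star (hA.eigenvectorUnitary : Matrix ι ι ℝ) := by
  have spectral := congr_arg (star (hA.eigenvectorUnitary : Matrix ι ι ℝ) * ·) hA.spectral_theorem
  simpa [Unitary.conjStarAlgAut_apply, ← mul_assoc, Function.comp_def] using spectral

/-- In an eigenbasis of `A` the recurrence decouples into scalar ones. -/
lemma tendsto_of_second_order_mulVec_recurrence {ι : Type*} [Fintype ι] [DecidableEq ι]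
    {A : Matrix ι ι ℝ} (hA : A.IsHermitian) {u f : ℕ → ι → ℝ} {β θ d : ℕ → ℝ} {x f₀ : ι → ℝ}
    {β₀ θ₀ d₀ : ℝ} (hd₀ : d₀ < 1) (hstable : ∀ j, |β₀ - θ₀ * hA.eigenvalues j| < 1 + d₀)
    (hβ : Tendsto β atTop (𝓝 β₀)) (hθ : Tendsto θ atTop (𝓝 θ₀)) (hd : Tendsto d atTop (𝓝 d₀))
    (hf : Tendsto f atTop (𝓝 f₀)) (hx : β₀ • x - θ₀ • A *ᵥ x - d₀ • x + f₀ = x)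
    (hrec : ∀ t, u (t + 2) = β t • u (t + 1) - θ t • A *ᵥ u (t + 1) - d t • u t + f t) :
    Tendsto u atTop (𝓝 x) := by
  set U : Matrix ι ι ℝ := ↑hA.eigenvectorUnitary with hU
  have star_mulVec (v : ι → ℝ) (j : ι) :
      (star U *ᵥ (A *ᵥ v)) j = hA.eigenvalues j * (star U *ᵥ v) j := by
    rw [mulVec_mulVec, star_eigenvectorUnitary_mul, ← mulVec_mulVec, mulVec_diagonal]
  have mul_star_mulVec (v : ι → ℝ) : U *ᵥ (star U *ᵥ v) = v := by
    rw [mulVec_mulVec, hU, Unitary.mul_star_self_of_mem hA.eigenvectorUnitary.2, one_mulVec]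
  have mulVec_continuous (B : Matrix ι ι ℝ) : Continuous (B *ᵥ ·) := by fun_prop
  have coordinates_tendsto : Tendsto (fun t => star U *ᵥ u t) atTop (𝓝 (star U *ᵥ x)) := by
    refine tendsto_pi_nhds.2 fun j => tendsto_of_second_order_recurrence
      (h := fun t => β t - θ t * hA.eigenvalues j) (f := fun t => (star U *ᵥ f t) j)
      (f₀ := (star U *ᵥ f₀) j) hd₀
      (hstable j) (hβ.sub (hθ.mul_const _)) hd
      (((continuous_apply j).comp (mulVec_continuous _)).tendsto _ |>.comp hf) ?_ fun t => ?_
    · nth_rw 3 [← hx]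
      simp only [mulVec_add, mulVec_sub, mulVec_smul, Pi.add_apply, Pi.sub_apply, Pi.smul_apply,
        star_mulVec, smul_eq_mul]
      ring
    · simp only [hrec, mulVec_add, mulVec_sub, mulVec_smul, Pi.add_apply, Pi.sub_apply,
        Pi.smul_apply, star_mulVec, smul_eq_mul]
      ring
  simpa only [Function.comp_def, mul_star_mulVec] using
    ((mulVec_continuous U).tendsto _).comp coordinates_tendsto

end SecondOrderRecurrence

section VarianceRecursion

open Filter Topology

/-- The common value of the user-to-chip variance messages on a `±1` signature matrix, with noise
variance `v`, `n = (N - 1) / N` and `k = (K - 1) / N`. -/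
noncomputable def varianceSeq (v n k : ℝ) : ℕ → ℝ
  | 0 => 1
  | t + 1 => 1 + n / (v + k / varianceSeq v n k t)

variable {v n k : ℝ}

lemma one_le_varianceSeq (hv : 0 ≤ v) (hn : 0 ≤ n) (hk : 0 ≤ k) (t : ℕ) :
    1 ≤ varianceSeq v n k t := by
  induction t with
  | zero => exact le_rfl
  | succ t ih => exact le_add_of_nonneg_right (by positivity)

lemma monotone_varianceSeq (hv : 0 < v) (hn : 0 ≤ n) (hk : 0 ≤ k) :
    Monotone (varianceSeq v n k) := by
  have seq_pos (t : ℕ) : 0 < varianceSeq v n k t :=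
    one_pos.trans_le (one_le_varianceSeq hv.le hn hk t)
  refine monotone_nat_of_le_succ fun t => ?_
  induction t with
  | zero => exact one_le_varianceSeq hv.le hn hk 1
  | succ t ih =>
    have := seq_pos t
    have := seq_pos (t + 1)
    change 1 + n / (v + k / varianceSeq v n k t) ≤ 1 + n / (v + k / varianceSeq v n k (t + 1))
    gcongr

lemma varianceSeq_le (hv : 0 < v) (hn : 0 ≤ n) (hk : 0 ≤ k) (t : ℕ) :
    varianceSeq v n k t ≤ 1 + n / v := by
  cases t with
  | zero => exact le_add_of_nonneg_right (by positivity)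
  | succ t =>
    have := one_pos.trans_le (one_le_varianceSeq hv.le hn hk t)
    have : 0 ≤ k / varianceSeq v n k t := by positivity
    change 1 + n / (v + k / varianceSeq v n k t) ≤ 1 + n / v
    gcongr
    exact le_add_of_nonneg_right this

lemma exists_tendsto_varianceSeq (hv : 0 < v) (hn : 0 ≤ n) (hk : 0 ≤ k) :
    ∃ l, 1 ≤ l ∧ l = 1 + n / (v + k / l) ∧ Tendsto (varianceSeq v n k) atTop (𝓝 l) := by
  have lim : Tendsto (varianceSeq v n k) atTop (𝓝 (⨆ t, varianceSeq v n k t)) :=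
    tendsto_atTop_ciSup (monotone_varianceSeq hv hn hk)
      ⟨1 + n / v, Set.forall_mem_range.2 (varianceSeq_le hv hn hk)⟩
  have one_le := ge_of_tendsto' lim (one_le_varianceSeq hv.le hn hk)
  refine ⟨_, one_le, tendsto_nhds_unique (lim.comp (tendsto_add_atTop_nat 1)) ?_, lim⟩
  have denom_ne : v + k / (⨆ t, varianceSeq v n k t) ≠ 0 := by positivity
  exact (tendsto_const_nhds.div ((tendsto_const_nhds.div lim (by positivity)).const_add v)
    denom_ne).const_add 1

end VarianceRecursion

section SignMessages

/-- The weight `(m - 1) / N` of a normalised sum over `m` indices with one left out, as it appears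
in the message updates for `m = N` and `m = K`. -/
noncomputable def looRatio (m N : ℕ) : ℝ := (m - 1) / N

/-- The common value of the messages `λ^{(t)}_{i→a}` on a `±1` signature matrix. -/
noncomputable def lamSeq (σ : ℝ) (K N : ℕ) : ℕ → ℝ :=
  varianceSeq (σ ^ 2) (looRatio N N) (looRatio K N)

/-- The common value of the messages `λ̂^{(t)}_{a→i}` on a `±1` signature matrix. -/
noncomputable def lamHatSeq (σ : ℝ) (K N : ℕ) (t : ℕ) : ℝ :=
  σ ^ 2 + looRatio K N / lamSeq σ K N t

lemma looRatio_nonneg {m : ℕ} (hm : 1 ≤ m) (N : ℕ) : 0 ≤ looRatio m N :=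
  div_nonneg (sub_nonneg.2 (by exact_mod_cast hm)) N.cast_nonneg

variable {K N : ℕ} {σ : ℝ} {s : Fin K → Fin N → ℝ}

lemma Stilde_mul_self (hs : ∀ i a, s i a ^ 2 = 1) (a : Fin N) (i : Fin K) :
    Stilde s a i * Stilde s a i = (N : ℝ)⁻¹ := by
  simp only [Stilde, of_apply]
  rw [← sq, div_pow, hs, Real.sq_sqrt N.cast_nonneg, one_div]

lemma sum_erase_const_div {m : ℕ} (j : Fin m) (c : ℝ) (N : ℕ) :
    1 / (N : ℝ) * ∑ _k ∈ univ.erase j, 1 / c = looRatio m N / c := by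
  rw [sum_const, card_erase_of_mem (mem_univ j), card_fin, nsmul_eq_mul, Nat.cast_pred j.pos,
    looRatio]
  ring

lemma lam_eq (hs : ∀ i a, s i a ^ 2 = 1) (t : ℕ) (i : Fin K) (a : Fin N) :
    BP.lam σ s t i a = lamSeq σ K N t := by
  induction t generalizing i a with
  | zero => rfl
  | succ t ih =>
    simp only [BP.lam, BP.lamHat, hs, ih, sum_erase_const_div]
    rfl

lemma lamHat_eq (hs : ∀ i a, s i a ^ 2 = 1) (t : ℕ) (a : Fin N) (i : Fin K) :
    BP.lamHat σ s (BP.lam σ s t) a i = lamHatSeq σ K N t := by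
  simp only [BP.lamHat, hs, lam_eq hs, sum_erase_const_div]
  rfl

lemma Lout_succ (hs : ∀ i a, s i a ^ 2 = 1) (hN : N ≠ 0) (t : ℕ) (i : Fin K) :
    BP.Lout σ s (t + 1) i = 1 + 1 / lamHatSeq σ K N t := by
  simp only [BP.Lout, hs, lamHat_eq hs, sum_const, card_univ, Fintype.card_fin, nsmul_eq_mul]
  field_simp

/-- The mean message `γ̂^{(t)}_{a→i}` without the exclusion of the recipient `i`. -/
noncomputable def chipResidual (σ : ℝ) (s : Fin K → Fin N → ℝ) (y : Fin N → ℝ) (t : ℕ) (a : Fin N) :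
    ℝ :=
  y a - ∑ k, Stilde s a k * BP.gam σ s y t k a / lamSeq σ K N t

variable {y : Fin N → ℝ}

lemma gamHat_eq (hs : ∀ i a, s i a ^ 2 = 1) (t : ℕ) (a : Fin N) (i : Fin K) :
    BP.gamHat s y (BP.lam σ s t) (BP.gam σ s y t) a i =
      chipResidual σ s y t a + Stilde s a i * BP.gam σ s y t i a / lamSeq σ K N t := by
  have summand (k : Fin K) : 1 / √(N : ℝ) * (s k a / lamSeq σ K N t * BP.gam σ s y t k a) =
      Stilde s a k * BP.gam σ s y t k a / lamSeq σ K N t := by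
    simp only [Stilde, of_apply]
    ring
  rw [chipResidual, ← add_sum_erase univ _ (mem_univ i), BP.gamHat, mul_sum]
  simp only [lam_eq hs, summand]
  ring

lemma Gout_succ_eq_sum (hs : ∀ i a, s i a ^ 2 = 1) (t : ℕ) (i : Fin K) :
    BP.Gout σ s y (t + 1) i = ∑ b, Stilde s b i *
      BP.gamHat s y (BP.lam σ s t) (BP.gam σ s y t) b i / lamHatSeq σ K N t := by
  simp only [BP.Gout, lamHat_eq hs, mul_sum, Stilde, of_apply]
  exact sum_congr rfl fun b _ => by ring

lemma gam_succ (hs : ∀ i a, s i a ^ 2 = 1) (t : ℕ) (i : Fin K) (a : Fin N) :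
    BP.gam σ s y (t + 1) i a = BP.Gout σ s y (t + 1) i -
      Stilde s a i * BP.gamHat s y (BP.lam σ s t) (BP.gam σ s y t) a i / lamHatSeq σ K N t := by
  rw [Gout_succ_eq_sum hs, ← add_sum_erase univ _ (mem_univ a), add_sub_cancel_left]
  simp only [BP.gam, lamHat_eq hs, mul_sum, Stilde, of_apply]
  exact sum_congr rfl fun b _ => by ring

lemma sum_gam (hs : ∀ i a, s i a ^ 2 = 1) (t : ℕ) (i : Fin K) :
    ∑ a, BP.gam σ s y t i a = (N - 1) * BP.Gout σ s y t i := by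
  cases t with
  | zero => simp [BP.gam, BP.Gout]
  | succ t =>
    simp only [gam_succ hs, sum_sub_distrib, ← Gout_succ_eq_sum hs, sum_const, card_univ,
      Fintype.card_fin, nsmul_eq_mul]
    ring

lemma sum_gamHat (hs : ∀ i a, s i a ^ 2 = 1) (t : ℕ) (a : Fin N) :
    ∑ k, BP.gamHat s y (BP.lam σ s t) (BP.gam σ s y t) a k =
      (K - 1) * chipResidual σ s y t a + y a := by
  simp only [gamHat_eq hs, sum_add_distrib, sum_const, card_univ, Fintype.card_fin, nsmul_eq_mul]
  rw [chipResidual]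
  ring

lemma Gout_succ (hs : ∀ i a, s i a ^ 2 = 1) (t : ℕ) :
    BP.Gout σ s y (t + 1) = (1 / lamHatSeq σ K N t) • (Stilde s)ᵀ *ᵥ chipResidual σ s y t +
      (looRatio N N / (lamSeq σ K N t * lamHatSeq σ K N t)) • BP.Gout σ s y t := by
  ext i
  have summand (b : Fin N) : Stilde s b i *
      (chipResidual σ s y t b + Stilde s b i * BP.gam σ s y t i b / lamSeq σ K N t) /
        lamHatSeq σ K N t = 1 / lamHatSeq σ K N t * (Stilde s b i * chipResidual σ s y t b) +
      (N : ℝ)⁻¹ / (lamSeq σ K N t * lamHatSeq σ K N t) * BP.gam σ s y t i b := by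
    rw [← Stilde_mul_self hs b i]
    ring
  simp only [Gout_succ_eq_sum hs, gamHat_eq hs, summand, sum_add_distrib, ← mul_sum, sum_gam hs,
    looRatio, Pi.add_apply, Pi.smul_apply, smul_eq_mul, mulVec, dotProduct, transpose_apply]
  ring

lemma chipResidual_succ (hs : ∀ i a, s i a ^ 2 = 1) (t : ℕ) :
    chipResidual σ s y (t + 1) = (1 + 1 / (N * lamHatSeq σ K N t * lamSeq σ K N (t + 1))) • y -
      (1 / lamSeq σ K N (t + 1)) • Stilde s *ᵥ BP.Gout σ s y (t + 1) +
      (looRatio K N / (lamHatSeq σ K N t * lamSeq σ K N (t + 1))) • chipResidual σ s y t := by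
  ext a
  have summand (k : Fin K) :
      Stilde s a k * BP.gam σ s y (t + 1) k a / lamSeq σ K N (t + 1) =
        1 / lamSeq σ K N (t + 1) * (Stilde s a k * BP.Gout σ s y (t + 1) k) -
        (N : ℝ)⁻¹ / (lamHatSeq σ K N t * lamSeq σ K N (t + 1)) *
          BP.gamHat s y (BP.lam σ s t) (BP.gam σ s y t) a k := by
    rw [gam_succ hs, ← Stilde_mul_self hs a k]
    ring
  rw [chipResidual]
  simp only [summand, sum_sub_distrib, ← mul_sum, sum_gamHat hs, looRatio, Pi.add_apply,
    Pi.sub_apply, Pi.smul_apply, smul_eq_mul, mulVec, dotProduct]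
  ring

lemma Gout_add_two (hs : ∀ i a, s i a ^ 2 = 1) {t : ℕ} (ht : lamHatSeq σ K N t ≠ 0) :
    BP.Gout σ s y (t + 2) =
      ((looRatio N N + looRatio K N) / (lamSeq σ K N (t + 1) * lamHatSeq σ K N (t + 1))) •
        BP.Gout σ s y (t + 1) -
      (1 / (lamSeq σ K N (t + 1) * lamHatSeq σ K N (t + 1))) •
        ((Stilde s)ᵀ * Stilde s) *ᵥ BP.Gout σ s y (t + 1) -
      (looRatio N N * looRatio K N / (lamSeq σ K N (t + 1) * lamHatSeq σ K N (t + 1) *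
        (lamSeq σ K N t * lamHatSeq σ K N t))) • BP.Gout σ s y t +
      ((1 + 1 / (N * lamHatSeq σ K N t * lamSeq σ K N (t + 1))) / lamHatSeq σ K N (t + 1)) •
        (Stilde s)ᵀ *ᵥ y := by
  have transpose_mulVec_residual : (Stilde s)ᵀ *ᵥ chipResidual σ s y t = lamHatSeq σ K N t •
      (BP.Gout σ s y (t + 1) -
        (looRatio N N / (lamSeq σ K N t * lamHatSeq σ K N t)) • BP.Gout σ s y t) := by
    rw [Gout_succ hs, add_sub_cancel_right, smul_smul, mul_one_div_cancel ht, one_smul]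
  rw [Gout_succ hs (t + 1), chipResidual_succ hs]
  simp only [mulVec_add, mulVec_sub, mulVec_smul, transpose_mulVec_residual, mulVec_mulVec]
  ext i
  simp only [Pi.add_apply, Pi.sub_apply, Pi.smul_apply, smul_eq_mul]
  field_simp
  ring

end SignMessages

section DeterministicConvergence

open Filter Topology

lemma one_add_mul_div_sq_eq {v n k l q : ℝ} (hl_pos : 0 < l) (hq_pos : 0 < q)
    (hl : l = 1 + n / q) (hq : q = v + k / l) :
    1 + n * k / (l * q * (l * q)) = (n + k + v) / (l * q) := by
  have sub_n : l * q - n = q := by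
    nth_rw 1 [hl]
    field_simp
    ring
  have sub_k : l * q - k = v * l := by
    nth_rw 1 [hq]
    field_simp
    ring
  field_simp
  linear_combination (l * q - k) * sub_n + q * sub_k

lemma mul_div_sq_lt_one {v n k l q : ℝ} (hv : 0 < v) (hn : 0 ≤ n) (hk : 0 ≤ k) (hl_pos : 0 < l)
    (hq_pos : 0 < q) (hl : l = 1 + n / q) (hq : q = v + k / l) :
    n * k / (l * q * (l * q)) < 1 := by
  have n_lt : n < l * q := by
    rw [hl, add_mul, div_mul_cancel₀ n hq_pos.ne']
    linarith
  have k_lt : k < l * q := by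
    rw [hq, mul_add, mul_div_cancel₀ k hl_pos.ne']
    linarith [mul_pos hl_pos hv]
  rw [div_lt_one (by positivity)]
  exact mul_lt_mul'' n_lt k_lt hn hk

lemma source_gain_eq {N : ℕ} (hN : N ≠ 0) {l q : ℝ} (hl_ne : l ≠ 0) (hq_ne : q ≠ 0)
    (hl : l = 1 + looRatio N N / q) : (1 + 1 / (N * q * l)) / q = (1 + 1 / q) / (l * q) := by
  rw [looRatio] at hl
  field_simp at hl ⊢
  linear_combination hl

variable {K N : ℕ} {σ : ℝ} {s : Fin K → Fin N → ℝ}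

lemma lamHatSeq_pos (hσ : 0 < σ) (hK : 1 ≤ K) (hN : 1 ≤ N) (t : ℕ) : 0 < lamHatSeq σ K N t := by
  have lamSeq_pos : 0 < lamSeq σ K N t := one_pos.trans_le
    (one_le_varianceSeq (sq_nonneg σ) (looRatio_nonneg hN N) (looRatio_nonneg hK N) t)
  exact add_pos_of_pos_of_nonneg (pow_pos hσ 2) (div_nonneg (looRatio_nonneg hK N) lamSeq_pos.le)

lemma exists_tendsto_lamSeq (hσ : 0 < σ) (hK : 1 ≤ K) (hN : 1 ≤ N) :
    ∃ l q, 0 < l ∧ 0 < q ∧ l = 1 + looRatio N N / q ∧ q = σ ^ 2 + looRatio K N / l ∧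
      Tendsto (lamSeq σ K N) atTop (𝓝 l) ∧ Tendsto (lamHatSeq σ K N) atTop (𝓝 q) := by
  have κ_nonneg := looRatio_nonneg hK N
  obtain ⟨l, one_le, fixed, lim⟩ :=
    exists_tendsto_varianceSeq (pow_pos hσ 2) (looRatio_nonneg hN N) κ_nonneg
  have l_pos := one_pos.trans_le one_le
  exact ⟨l, σ ^ 2 + looRatio K N / l, l_pos, by positivity, fixed, rfl, lim,
    (tendsto_const_nhds.div lim l_pos.ne').const_add (σ ^ 2)⟩

lemma posSemidef_Stilde_gram : ((Stilde s)ᵀ * Stilde s).PosSemidef := by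
  simpa using posSemidef_conjTranspose_mul_self (Stilde s)

lemma Stilde_gram_mulVec_mmseEstimate (hσ : σ ≠ 0) (y : Fin N → ℝ) :
    ((Stilde s)ᵀ * Stilde s) *ᵥ mmseEstimate σ s y =
      (Stilde s)ᵀ *ᵥ y - σ ^ 2 • mmseEstimate σ s y := by
  have posDef : (σ ^ 2 • (1 : Matrix (Fin K) (Fin K) ℝ) + (Stilde s)ᵀ * Stilde s).PosDef :=
    (PosDef.one.smul (by positivity)).add_posSemidef posSemidef_Stilde_gram
  have normal_eq : (σ ^ 2 • (1 : Matrix (Fin K) (Fin K) ℝ) + (Stilde s)ᵀ * Stilde s) *ᵥ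
      mmseEstimate σ s y = (Stilde s)ᵀ *ᵥ y := by
    rw [mmseEstimate, mulVec_mulVec, mul_nonsing_inv _ posDef.det_pos.ne'.isUnit, one_mulVec]
  rw [← normal_eq, add_mulVec, smul_mulVec, one_mulVec, add_sub_cancel_left]

/-- The bound on the eigenvalues of `S̃ᵀ S̃` below which BP converges on a `±1` signature matrix. -/
noncomputable def stabilityThreshold (σ : ℝ) (K N : ℕ) : ℝ :=
  2 * (looRatio N N + looRatio K N) + σ ^ 2

lemma tendsto_Gout (hσ : 0 < σ) (hs : ∀ i a, s i a ^ 2 = 1) (hK : 1 ≤ K) (hN : 1 ≤ N)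
    (hA : ((Stilde s)ᵀ * Stilde s).IsHermitian)
    (hlt : ∀ j, hA.eigenvalues j < stabilityThreshold σ K N) {l q : ℝ}
    (hl_pos : 0 < l) (hq_pos : 0 < q) (hl : l = 1 + looRatio N N / q)
    (hq : q = σ ^ 2 + looRatio K N / l) (hl_lim : Tendsto (lamSeq σ K N) atTop (𝓝 l))
    (hq_lim : Tendsto (lamHatSeq σ K N) atTop (𝓝 q)) (y : Fin N → ℝ) :
    Tendsto (BP.Gout σ s y) atTop (𝓝 ((1 + 1 / q) • mmseEstimate σ s y)) := by
  have ν_nonneg := looRatio_nonneg hN N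
  have κ_nonneg := looRatio_nonneg hK N
  have d_eq := one_add_mul_div_sq_eq hl_pos hq_pos hl hq
  have p_lim := hl_lim.mul hq_lim
  have p_pos := mul_pos hl_pos hq_pos
  have shift {u : ℕ → ℝ} {u₀ : ℝ} (hu : Tendsto u atTop (𝓝 u₀)) :
      Tendsto (fun t => u (t + 1)) atTop (𝓝 u₀) := hu.comp (tendsto_add_atTop_nat 1)
  have inv_p_lim (c : ℝ) := tendsto_const_nhds (x := c) |>.div (shift p_lim) p_pos.ne'
  have eigenvalues_nonneg (j : Fin K) : 0 ≤ hA.eigenvalues j :=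
    posSemidef_Stilde_gram.eigenvalues_nonneg j
  refine tendsto_of_second_order_mulVec_recurrence hA
    (mul_div_sq_lt_one (pow_pos hσ 2) ν_nonneg κ_nonneg hl_pos hq_pos hl hq) (fun j => ?_)
    (inv_p_lim _) (inv_p_lim 1)
    (tendsto_const_nhds.div ((shift p_lim).mul p_lim) (by positivity))
    (((tendsto_const_nhds.div ((hq_lim.const_mul (N : ℝ)).mul (shift hl_lim)) (by positivity)
      |>.const_add 1).div (shift hq_lim) hq_pos.ne').smul_const ((Stilde s)ᵀ *ᵥ y)) ?_
    fun t => Gout_add_two hs (lamHatSeq_pos hσ hK hN t).ne'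
  · have lt_threshold := hlt j
    rw [stabilityThreshold] at lt_threshold
    rw [d_eq, one_div_mul_eq_div, ← sub_div, abs_div, abs_of_pos p_pos]
    gcongr
    exact abs_lt.2 ⟨by linarith, by linarith [eigenvalues_nonneg j, pow_pos hσ 2]⟩
  · rw [mulVec_smul, Stilde_gram_mulVec_mmseEstimate hσ.ne',
      source_gain_eq (by positivity) hl_pos.ne' hq_pos.ne' hl]
    ext i
    simp only [Pi.add_apply, Pi.sub_apply, Pi.smul_apply, smul_eq_mul]
    linear_combination -(1 + 1 / q) * mmseEstimate σ s y i * d_eq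

/-- The property of a signature matrix asserted by the theorem: for every received vector the BP
outputs converge and the ratio of their limits is the MMSE estimate. -/
def BPComputesMMSE (σ : ℝ) (s : Fin K → Fin N → ℝ) : Prop :=
  ∀ (y : Fin N → ℝ) (i : Fin K), ∃ Linf Ginf : ℝ,
    Tendsto (fun t => BP.Lout σ s t i) atTop (𝓝 Linf) ∧
    Tendsto (fun t => BP.Gout σ s y t i) atTop (𝓝 Ginf) ∧
    Ginf / Linf = mmseEstimate σ s y i

lemma bpComputesMMSE_of_eigenvalues_lt (hσ : 0 < σ) (hs : ∀ i a, s i a ^ 2 = 1) (hN : 1 ≤ N)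
    (hA : ((Stilde s)ᵀ * Stilde s).IsHermitian)
    (hlt : ∀ j, hA.eigenvalues j < stabilityThreshold σ K N) :
    BPComputesMMSE σ s := by
  intro y i
  obtain ⟨l, q, l_pos, q_pos, hl, hq, l_lim, q_lim⟩ := exists_tendsto_lamSeq hσ i.pos hN
  refine ⟨1 + 1 / q, _, ?_, tendsto_pi_nhds.1
    (tendsto_Gout hσ hs i.pos hN hA hlt l_pos q_pos hl hq l_lim q_lim y) i,
    mul_div_cancel_left₀ _ (by positivity)⟩
  rw [← tendsto_add_atTop_iff_nat 1]
  simp only [Lout_succ hs (Nat.one_le_iff_ne_zero.1 hN)]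
  exact (tendsto_const_nhds.div q_lim q_pos.ne').const_add 1

end DeterministicConvergence

section TailBound

lemma trace_pow_eq_sum_eigenvalues_pow {n : Type*} [Fintype n] [DecidableEq n] {A : Matrix n n ℝ}
    (hA : A.IsHermitian) (q : ℕ) : (A ^ q).trace = ∑ j, hA.eigenvalues j ^ q := by
  conv_lhs => rw [hA.spectral_theorem, ← map_pow, Unitary.conjStarAlgAut_apply,
    Matrix.trace_mul_cycle, Unitary.coe_star_mul_self, one_mul, Matrix.diagonal_pow,
    Matrix.trace_diagonal]
  simp

lemma eigenvalues_pow_le_trace_pow {n : Type*} [Fintype n] [DecidableEq n] {A : Matrix n n ℝ}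
    (hA : A.PosSemidef) (q : ℕ) (j : n) : hA.1.eigenvalues j ^ q ≤ (A ^ q).trace := by
  rw [trace_pow_eq_sum_eigenvalues_pow hA.1]
  exact Finset.single_le_sum (f := fun j => hA.1.eigenvalues j ^ q)
    (fun j _ => pow_nonneg (hA.eigenvalues_nonneg j) q) (Finset.mem_univ j)

variable {K N : ℕ}

lemma toSign_sq (s : Fin K → Fin N → Bool) (i : Fin K) (a : Fin N) : toSign s i a ^ 2 = 1 := by
  rw [toSign]
  split_ifs <;> norm_num

lemma map_eval₂_genericGram (hN : N ≠ 0) (s : Fin K → Fin N → Bool) :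
    (MvPolynomial.eval₂Hom (Nat.castRingHom ℝ) fun e : Fin K × Fin N =>
        bif s e.1 e.2 then 1 else -1).mapMatrix (genericGram (Fin K) (Fin N)) =
      (N : ℝ) • ((Stilde (toSign s))ᵀ * Stilde (toSign s)) := by
  ext i j
  have sqrt_mul_sqrt : √(N : ℝ) * √N = N := Real.mul_self_sqrt N.cast_nonneg
  simp only [genericGram, RingHom.mapMatrix_apply, Matrix.map_apply, Matrix.mul_apply,
    Matrix.transpose_apply, Matrix.mvPolynomialX_apply, map_sum, map_mul,
    MvPolynomial.eval₂Hom_X', Matrix.smul_apply, smul_eq_mul, Stilde,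
    Matrix.of_apply, div_mul_div_comm, sqrt_mul_sqrt, ← Finset.sum_div, toSign, cond_eq_ite]
  field_simp

lemma sum_trace_Stilde_gram_pow (hN : N ≠ 0) (q : ℕ) :
    ∑ s : Fin K → Fin N → Bool, (((Stilde (toSign s))ᵀ * Stilde (toSign s)) ^ q).trace =
      2 ^ (K * N) * (traceMoment (Fin K) (Fin N) q / N ^ q) := by
  have trace_eval (s : Fin K → Fin N → Bool) :
      (genericGram (Fin K) (Fin N) ^ q).trace.eval₂ (Nat.castRingHom ℝ)
          (fun e => bif s e.1 e.2 then 1 else -1) =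
        N ^ q * (((Stilde (toSign s))ᵀ * Stilde (toSign s)) ^ q).trace := by
    rw [← MvPolynomial.coe_eval₂Hom, AddMonoidHom.map_trace, ← smul_eq_mul, ← Matrix.trace_smul,
      ← smul_pow, ← map_eval₂_genericGram hN, ← map_pow]
    rfl
  rw [traceMoment, rademacherMean_apply, ← (Equiv.curry (Fin K) (Fin N) Bool).symm.sum_comp]
  simp only [Equiv.curry_symm_apply, Function.uncurry_def, trace_eval, ← Finset.mul_sum]
  simp
  field_simp

lemma stabilityThreshold_pos {σ : ℝ} (hσ : σ ≠ 0) (hK : 1 ≤ K) (hN : 1 ≤ N) :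
    0 < stabilityThreshold σ K N := by
  have := looRatio_nonneg hN N
  have := looRatio_nonneg hK N
  rw [stabilityThreshold]
  positivity

lemma stabilityThreshold_pow_le_trace_pow {σ : ℝ} (hσ : 0 < σ) (hK : 1 ≤ K) (hN : 1 ≤ N)
    {s : Fin K → Fin N → Bool} (hs : ¬ BPComputesMMSE σ (toSign s)) (Q : ℕ) :
    stabilityThreshold σ K N ^ Q ≤
      (((Stilde (toSign s))ᵀ * Stilde (toSign s)) ^ Q).trace := by
  have gram_posSemidef := posSemidef_Stilde_gram (s := toSign s)
  obtain ⟨j, le_eigenvalue⟩ :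
      ∃ j, stabilityThreshold σ K N ≤ gram_posSemidef.1.eigenvalues j := by
    by_contra! hlt
    exact hs (bpComputesMMSE_of_eigenvalues_lt hσ (toSign_sq s) hN gram_posSemidef.1 hlt)
  exact (pow_le_pow_left₀ (stabilityThreshold_pos hσ.ne' hK hN).le le_eigenvalue Q).trans
    (eigenvalues_pow_le_trace_pow gram_posSemidef Q j)

/-- Markov's inequality for the trace of the `Q`-th power of `S̃ᵀ S̃`. -/
lemma le_card_bpComputesMMSE {σ : ℝ} (hσ : 0 < σ) (hK : 1 ≤ K) (hN : 1 ≤ N) (Q : ℕ) :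
    (1 - traceMoment (Fin K) (Fin N) Q / (N * stabilityThreshold σ K N) ^ Q) * 2 ^ (K * N) ≤
      Nat.card {s : Fin K → Fin N → Bool // BPComputesMMSE σ (toSign s)} := by
  classical
  have threshold_pow_pos := pow_pos (stabilityThreshold_pos hσ.ne' hK hN) Q
  let bad : Finset (Fin K → Fin N → Bool) := {s | ¬ BPComputesMMSE σ (toSign s)}
  have card_good_add_card_bad :
      (Nat.card {s : Fin K → Fin N → Bool // BPComputesMMSE σ (toSign s)} + #bad : ℝ) =
        2 ^ (K * N) := by
    rw [Nat.card_eq_fintype_card, Fintype.card_subtype, ← Nat.cast_add,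
      Finset.card_filter_add_card_filter_not]
    simp [← pow_mul, mul_comm N]
  have card_bad_le : #bad * stabilityThreshold σ K N ^ Q ≤
      2 ^ (K * N) * (traceMoment (Fin K) (Fin N) Q / N ^ Q) := by
    rw [← nsmul_eq_mul, ← sum_trace_Stilde_gram_pow (Nat.one_le_iff_ne_zero.1 hN)]
    refine (Finset.card_nsmul_le_sum _ _ _ fun s hs =>
      stabilityThreshold_pow_le_trace_pow hσ hK hN (Finset.mem_filter.1 hs).2 Q).trans ?_
    refine Finset.sum_le_sum_of_subset_of_nonneg (Finset.subset_univ _) fun s _ _ => ?_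
    exact (posSemidef_Stilde_gram.pow Q).trace_nonneg
  rw [← le_div_iff₀ threshold_pow_pos, mul_div_assoc, div_div, ← mul_pow] at card_bad_le
  linarith

end TailBound

section Asymptotics

open Filter Topology Asymptotics

lemma isLittleO_natCeil_mul_log_pow {c : ℝ} (hc : 0 < c) (n : ℕ) :
    (fun N : ℕ => (⌈c * Real.log N⌉₊ : ℝ) ^ n) =o[atTop] fun N => (N : ℝ) := by
  have log_tendsto : Tendsto (fun N : ℕ => c * Real.log N) atTop atTop :=
    (Real.tendsto_log_atTop.comp tendsto_natCast_atTop_atTop).const_mul_atTop hc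
  have ceil_isBigO : (fun N : ℕ => (⌈c * Real.log N⌉₊ : ℝ)) =O[atTop] fun N => Real.log N :=
    (isEquivalent_nat_ceil.isBigO.comp_tendsto log_tendsto).trans
      (isBigO_const_mul_self c _ _)
  exact (ceil_isBigO.pow n).trans_isLittleO
    (Real.isLittleO_pow_log_id_atTop.comp_tendsto tendsto_natCast_atTop_atTop)

lemma rpow_le_pow_natCeil_log {x ρ : ℝ} (hx : 0 < x) (hρ : 1 < ρ) (b : ℝ) :
    x ^ b ≤ ρ ^ ⌈b / Real.log ρ * Real.log x⌉₊ := by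
  have := one_pos.trans hρ
  rw [← Real.log_le_log_iff (by positivity) (by positivity), Real.log_rpow hx, Real.log_pow,
    ← div_le_iff₀ (Real.log_pos hρ), mul_div_right_comm]
  exact Nat.le_ceil _

lemma tendsto_natCeil_mul_div {α : ℝ} (hα : 0 ≤ α) :
    Tendsto (fun N : ℕ => (⌈α * N⌉₊ : ℝ) / N) atTop (𝓝 α) :=
  (tendsto_nat_ceil_mul_div_atTop hα).comp tendsto_natCast_atTop_atTop

lemma tendsto_natCast_div_self : Tendsto (fun N : ℕ => (N : ℝ) / N) atTop (𝓝 1) :=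
  tendsto_const_nhds.congr' <| (eventually_ne_atTop 0).mono fun _ hN =>
    (div_self (Nat.cast_ne_zero.2 hN)).symm

lemma tendsto_stabilityThreshold (σ : ℝ) {α : ℝ} (hα : 0 ≤ α) :
    Tendsto (fun N : ℕ => stabilityThreshold σ ⌈α * N⌉₊ N) atTop
      (𝓝 (2 * (1 + α) + σ ^ 2)) := by
  have inv_tendsto := tendsto_inv_atTop_nhds_zero_nat (𝕜 := ℝ)
  have self_tendsto : Tendsto (fun N : ℕ => looRatio N N) atTop (𝓝 1) := by
    simpa [looRatio, sub_div] using tendsto_natCast_div_self.sub inv_tendsto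
  have load_tendsto : Tendsto (fun N : ℕ => looRatio ⌈α * N⌉₊ N) atTop (𝓝 α) := by
    simpa [looRatio, sub_div] using (tendsto_natCeil_mul_div hα).sub inv_tendsto
  exact ((self_tendsto.add load_tendsto).const_mul 2).add_const (σ ^ 2)

lemma tendsto_moment_bound_div {α c : ℝ} (hα : 0 ≤ α) (hc : 0 < c) (m : ℝ) :
    Tendsto (fun N : ℕ => (N + ⌈c * Real.log N⌉₊ + 4 * ⌈c * Real.log N⌉₊ ^ 3 + m * ⌈α * N⌉₊) / N)
      atTop (𝓝 (1 + m * α)) := by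
  have power_tendsto (n : ℕ) := (isLittleO_natCeil_mul_log_pow hc n).tendsto_div_nhds_zero
  have limit := ((tendsto_natCast_div_self.add (power_tendsto 1)).add
    ((power_tendsto 3).const_mul 4)).add ((tendsto_natCeil_mul_div hα).const_mul m)
  simpa only [add_div, mul_div_assoc, pow_one, mul_zero, add_zero] using limit

lemma exists_eventually_mul_moment_bound_le_threshold {σ α : ℝ} (hσ : σ ≠ 0) (hα : 0 ≤ α) :
    ∃ ρ > 1, ∀ c > 0, ∀ᶠ N : ℕ in atTop,
      ρ * (2 * (N + ⌈c * Real.log N⌉₊ + 4 * ⌈c * Real.log N⌉₊ ^ 3 + ⌈α * N⌉₊)) ≤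
        N * stabilityThreshold σ ⌈α * N⌉₊ N := by
  refine ⟨1 + σ ^ 2 / (4 * (1 + α)), lt_add_of_pos_right 1 (by positivity), fun c hc => ?_⟩
  have limit_lt : (1 + σ ^ 2 / (4 * (1 + α))) * (2 * (1 + 1 * α)) < 2 * (1 + α) + σ ^ 2 := by
    have : σ ^ 2 / (4 * (1 + α)) * (2 * (1 + α)) = σ ^ 2 / 2 := by field_simp; ring
    nlinarith [sq_pos_of_ne_zero hσ]
  filter_upwards [(((tendsto_moment_bound_div hα hc 1).const_mul 2).const_mul _).eventually_lt
    (tendsto_stabilityThreshold σ hα) limit_lt, eventually_gt_atTop 0] with N hlt hN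
  rw [one_mul, ← mul_div_assoc, ← mul_div_assoc, div_lt_iff₀' (Nat.cast_pos.2 hN)] at hlt
  exact hlt.le

lemma traceMoment_div_pow_le {K N q : ℕ} {ρ a T : ℝ} (hN : 1 ≤ N) (hρ : 0 < ρ)
    (hNρ : (N : ℝ) ^ (a + 1) ≤ ρ ^ q) (hρT : ρ * (2 * (N + q + 4 * q ^ 3 + K)) ≤ T) :
    traceMoment (Fin K) (Fin N) q / T ^ q ≤
      (N + q + 4 * q ^ 3 + 3 * K) / N / 2 * (N : ℝ) ^ (-a) := by
  have N_pos : (0 : ℝ) < N := by exact_mod_cast hN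
  have : Nonempty (Fin N) := ⟨⟨0, hN⟩⟩
  have N_rpow : (N : ℝ) ^ (-a) * (N : ℝ) ^ (a + 1) = N := by
    rw [← Real.rpow_add N_pos, neg_add_cancel_left, Real.rpow_one]
  have base_pow_le : (N : ℝ) ^ (a + 1) * (2 * (N + q + 4 * q ^ 3 + K)) ^ q ≤ T ^ q :=
    calc _ ≤ ρ ^ q * (2 * (N + q + 4 * q ^ 3 + K) : ℝ) ^ q := by gcongr
      _ = (ρ * (2 * (N + q + 4 * q ^ 3 + K))) ^ q := (mul_pow _ _ _).symm
      _ ≤ T ^ q := by gcongr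
  have T_pos : 0 < T := lt_of_lt_of_le (by positivity) hρT
  rw [div_le_iff₀ (by positivity)]
  calc traceMoment (Fin K) (Fin N) q
      ≤ (N + q + 4 * q ^ 3 + 3 * K) / 2 * (2 * (N + q + 4 * q ^ 3 + K)) ^ q := by
        simpa only [Fintype.card_fin] using traceMoment_le (I := Fin K) (J := Fin N) q
    _ = (N + q + 4 * q ^ 3 + 3 * K) / N / 2 * (N : ℝ) ^ (-a) *
          ((N : ℝ) ^ (a + 1) * (2 * (N + q + 4 * q ^ 3 + K)) ^ q) := by
        rw [mul_assoc _ ((N : ℝ) ^ (-a)), ← mul_assoc ((N : ℝ) ^ (-a)), N_rpow]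
        field_simp
    _ ≤ (N + q + 4 * q ^ 3 + 3 * K) / N / 2 * (N : ℝ) ^ (-a) * T ^ q := by gcongr

lemma exists_isBigO_traceMoment_div {σ α a : ℝ} (hσ : σ ≠ 0) (hα : 0 < α) (ha : 0 < a) :
    ∃ Q : ℕ → ℕ, (fun N : ℕ => traceMoment (Fin ⌈α * N⌉₊) (Fin N) (Q N) /
        (N * stabilityThreshold σ ⌈α * N⌉₊ N) ^ Q N) =O[atTop] fun N => (N : ℝ) ^ (-a) := by
  obtain ⟨ρ, one_lt_ρ, threshold_ge⟩ := exists_eventually_mul_moment_bound_le_threshold hσ hα.le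
  have c_pos : 0 < (a + 1) / Real.log ρ := div_pos (by positivity) (Real.log_pos one_lt_ρ)
  have prefactor_isBigO := ((tendsto_moment_bound_div hα.le c_pos 3).div_const 2).isBigO_one ℝ
  refine ⟨fun N => ⌈(a + 1) / Real.log ρ * Real.log N⌉₊, IsBigO.trans (.of_bound' ?_)
    ((prefactor_isBigO.mul (isBigO_refl (fun N : ℕ => (N : ℝ) ^ (-a)) atTop)).congr_right
      fun N => one_mul _)⟩
  filter_upwards [threshold_ge _ c_pos, eventually_ge_atTop 1] with N hρ hN
  have N_pos : (0 : ℝ) < N := by exact_mod_cast hN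
  have threshold_pos := mul_pos N_pos
    (stabilityThreshold_pos hσ (Nat.one_le_ceil_iff.2 (mul_pos hα N_pos)) hN)
  rw [Real.norm_of_nonneg (div_nonneg (traceMoment_nonneg _) (by positivity)),
    Real.norm_of_nonneg (by positivity)]
  exact traceMoment_div_pow_le hN (one_pos.trans one_lt_ρ)
    (rpow_le_pow_natCeil_log N_pos one_lt_ρ (a + 1)) hρ

end Asymptotics

end BeliefPropagation

/-- **Theorem 1.** With high probability (at least 1 − C·N^{−a}) over the
i.i.d. uniform ±1 signatures with K = ⌈αN⌉, the BP outputs L_i^{(t)}, G_i^{(t)} converge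
as t → ∞ for every received vector y, and the BP estimate G_i^{(∞)}/L_i^{(∞)} equals the
i-th coordinate of the MMSE estimate (σ²I + S̃ᵀS̃)⁻¹S̃ᵀy. -/
theorem bp_convergence_and_correctness (σ α a : ℝ) (hσ : 0 < σ) (hα : 0 < α) (ha : 0 < a) :
    ∃ C : ℝ, 0 < C ∧ ∀ N : ℕ, 1 ≤ N →
      (1 - C * (N : ℝ) ^ (-a)) * 2 ^ (⌈α * (N : ℝ)⌉₊ * N) ≤
        (Nat.card {s : Fin ⌈α * (N : ℝ)⌉₊ → Fin N → Bool //
          ∀ (y : Fin N → ℝ) (i : Fin ⌈α * (N : ℝ)⌉₊),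
            ∃ Linf Ginf : ℝ,
              Filter.Tendsto (fun t => BP.Lout σ (toSign s) t i)
                Filter.atTop (nhds Linf) ∧
              Filter.Tendsto (fun t => BP.Gout σ (toSign s) y t i)
                Filter.atTop (nhds Ginf) ∧
              Ginf / Linf = mmseEstimate σ (toSign s) y i} : ℝ) := by
  obtain ⟨Q, hQ⟩ := BeliefPropagation.exists_isBigO_traceMoment_div hσ.ne' hα ha
  obtain ⟨C, C_pos, failure_le⟩ := Asymptotics.bound_of_isBigO_nat_atTop hQ
  refine ⟨C, C_pos, fun N hN => ?_⟩
  have N_pos : (0 : ℝ) < N := by exact_mod_cast hN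
  have failure_le_rpow := (le_abs_self _).trans (failure_le (Real.rpow_pos_of_pos N_pos (-a)).ne')
  rw [Real.norm_of_nonneg (by positivity)] at failure_le_rpow
  refine le_trans ?_ (BeliefPropagation.le_card_bpComputesMMSE hσ
    (Nat.one_le_ceil_iff.2 (mul_pos hα N_pos)) hN (Q N))
  gcongr
end

section
/- For each α > 0 and each κ > 1 there exist a positive integer N₀ = N₀(α, κ) and a constant C(α, κ) > 0, both independent of N and t, such that for all integers N > N₀, all integers K with 1 ≤ K ≤ αN, and all integers t with 1 ≤ t ≤ (N/1000)^{1/6}: E Tr[(Ωᵗ)ᵀ·Ωᵗ] ≤ N^{2t+2}·α^{t+1}·(1 + C(α, κ)·t⁶·κᵗ/N), where the expectation is over the i.i.d. uniform ±1 entries s_{ia} of the signature matrix. -/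
open Matrix

/-- The NK×NK matrix Ω with Ω_{(i,a),(k,b)} = 0 if i = k or a = b, and
Ω_{(i,a),(k,b)} = s_{ib}·s_{kb} otherwise. -/
def Omega {K N : ℕ} (s : Fin K → Fin N → ℝ) :
    Matrix (Fin K × Fin N) (Fin K × Fin N) ℝ :=
  Matrix.of fun p q =>
    if p.1 = q.1 ∨ p.2 = q.2 then 0 else s p.1 q.2 * s q.1 q.2

/-!
Expanding the trace, the step `z i, z (i + 1)` contributes two signs that share a column, and the
column between the last factor `Ω` and the first factor `Ωᵀ` contributes a square. What remains is
a closed path of `2 * (2 * t - 1)` edges in the complete bipartite graph on rows and columns, which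
can backtrack only at one row and at one column, together with a free row and a free column. Its
expected sign is `1` if it traverses every edge an even number of times and `0` otherwise, so the
edges can be paired with edges carrying the same labels. For a fixed pairing the number of
labellings is `K ^ a * N ^ b`, where `a` and `b` count the orbits of edges under the pairing and
under adjacency at rows or at columns.

An orbit has at least four edges unless it contains a backtracking edge, and an orbit that is not
exceptional has exactly four. Away from the exceptional edges the pairing propagates along the path,
so few exceptional edges leave few pairings, while every six exceptional edges cost a power of `N`.
The leading term comes from the at most one pairing whose only exceptional edges are the two roots.
-/

open Finset

/-- A pairing of the elements of `J`: an involution without fixed points, sending each element to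
its partner. -/
structure IsPairing {J : Type*} (π : J → J) : Prop where
  involutive : Function.Involutive π
  ne_self : ∀ j, π j ≠ j

theorem exists_isPairing_of_even_card {J : Type*} [Finite J] (h : Even (Nat.card J)) :
    ∃ π : J → J, IsPairing π := by
  obtain ⟨r, hr⟩ := h
  let e : J ≃ Fin r ⊕ Fin r := (Finite.equivFinOfCardEq hr).trans finSumFinEquiv.symm
  refine ⟨fun j => e.symm (e j).swap, fun j => by simp, fun j hj => ?_⟩
  have hswap : (e j).swap = e j := by rw [← e.apply_symm_apply (e j).swap, hj]
  cases hej : e j <;> simp [hej] at hswap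

theorem exists_isPairing_comp_eq {J T : Type*} [Finite J] (f : J → T)
    (h : ∀ t, Even (Nat.card {j // f j = t})) :
    ∃ π : J → J, IsPairing π ∧ ∀ j, f (π j) = f j := by
  choose σ hσ using fun t => exists_isPairing_of_even_card (h t)
  have hcongr : ∀ {t : T} (j : {j // f j = t}), (σ (f j) ⟨j, rfl⟩ : J) = σ t j := by
    rintro _ ⟨j, rfl⟩
    rfl
  refine ⟨fun j => σ (f j) ⟨j, rfl⟩, ⟨fun j => ?_, fun j hj => ?_⟩, fun j => (σ _ _).2⟩
  · rw [hcongr, (hσ _).involutive]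
  · exact (hσ _).ne_self _ (Subtype.ext hj)

section JointOrbit

variable {J : Type*} (τ π : J → J)

/-- The orbits of `J` under the joint action of two maps `τ` and `π`. -/
abbrev JointOrbit : Type _ := Quot fun j k => τ j = k ∨ π j = k

/-- The joint orbit of `j` under `τ` and `π`. -/
def jointOrbit (j : J) : JointOrbit τ π := Quot.mk _ j

theorem jointOrbit_apply_left (j : J) : jointOrbit τ π (τ j) = jointOrbit τ π j :=
  (Quot.sound (.inl rfl)).symm

theorem jointOrbit_apply_right (j : J) : jointOrbit τ π (π j) = jointOrbit τ π j :=
  (Quot.sound (.inr rfl)).symm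

theorem card_invariant_eq_pow_card_jointOrbit (T : Type*) [Finite J] :
    Nat.card {f : J → T // (∀ j, f (τ j) = f j) ∧ ∀ j, f (π j) = f j} =
      Nat.card T ^ Nat.card (JointOrbit τ π) := by
  rw [← Nat.card_fun]
  refine Nat.card_congr
    { toFun := fun f => Quot.lift f.1 ?_
      invFun := fun g => ⟨g ∘ jointOrbit τ π, fun j => congrArg g (jointOrbit_apply_left τ π j),
        fun j => congrArg g (jointOrbit_apply_right τ π j)⟩
      left_inv := fun _ => rfl
      right_inv := fun g => funext (Quot.ind fun _ => rfl) }
  rintro j _ (rfl | rfl)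
  exacts [(f.2.1 j).symm, (f.2.2 j).symm]

open Classical in
/-- The elements of the joint orbit of `j`, as a finite set. -/
noncomputable def jointOrbitFinset [Fintype J] (j : J) : Finset J :=
  {k | jointOrbit τ π k = jointOrbit τ π j}

/-- An element is exceptional, relative to a root `r`, when its joint orbit contains `r` or has at
least six elements. If `τ` and `π` are pairings that agree only at `r` and `τ r`, all other orbits
have exactly four elements, hence are the most numerous possible. -/
def IsExceptional [Fintype J] (r j : J) : Prop :=
  jointOrbit τ π j = jointOrbit τ π r ∨ 6 ≤ #(jointOrbitFinset τ π j)

variable {τ π} [Fintype J]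

theorem mem_jointOrbitFinset {j k : J} :
    k ∈ jointOrbitFinset τ π j ↔ jointOrbit τ π k = jointOrbit τ π j := by
  simp [jointOrbitFinset]

theorem isExceptional_root (r : J) : IsExceptional τ π r r := .inl rfl

theorem isExceptional_congr {r j k : J} (h : jointOrbit τ π j = jointOrbit τ π k) :
    IsExceptional τ π r j ↔ IsExceptional τ π r k := by
  rw [IsExceptional, IsExceptional, jointOrbitFinset, jointOrbitFinset, h]

theorem isExceptional_left_iff {r j : J} : IsExceptional τ π r (τ j) ↔ IsExceptional τ π r j :=
  isExceptional_congr (jointOrbit_apply_left τ π j)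

theorem isExceptional_right_iff {r j : J} : IsExceptional τ π r (π j) ↔ IsExceptional τ π r j :=
  isExceptional_congr (jointOrbit_apply_right τ π j)

theorem two_le_card_jointOrbitFinset (hτ : IsPairing τ) (j : J) :
    2 ≤ #(jointOrbitFinset τ π j) := by
  classical
  rw [← card_pair (hτ.ne_self j)]
  refine card_le_card fun k hk => ?_
  simp only [mem_insert, mem_singleton] at hk
  rcases hk with rfl | rfl <;> simp only [mem_jointOrbitFinset, jointOrbit_apply_left]

theorem four_le_card_jointOrbitFinset (hτ : IsPairing τ) (hπ : IsPairing π) {j : J}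
    (hj : π j ≠ τ j) : 4 ≤ #(jointOrbitFinset τ π j) := by
  classical
  have hcard : #{j, τ j, π j, τ (π j)} = 4 := by
    have := hτ.ne_self
    have := hπ.ne_self
    have : ∀ k, τ (τ k) = k := hτ.involutive
    grind
  rw [← hcard]
  refine card_le_card fun k hk => ?_
  simp only [mem_insert, mem_singleton] at hk
  rcases hk with rfl | rfl | rfl | rfl <;>
    simp only [mem_jointOrbitFinset, jointOrbit_apply_left, jointOrbit_apply_right]

theorem six_le_card_jointOrbitFinset (hτ : IsPairing τ) (hπ : IsPairing π) {j : J}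
    (hj : π j ≠ τ j) (hcomm : τ (π j) ≠ π (τ j)) : 6 ≤ #(jointOrbitFinset τ π j) := by
  classical
  have hcard : #{j, τ j, π j, τ (π j), π (τ j), τ (π (τ j))} = 6 := by
    have := hτ.ne_self
    have := hπ.ne_self
    have : ∀ k, τ (τ k) = k := hτ.involutive
    have : ∀ k, π (π k) = k := hπ.involutive
    grind
  rw [← hcard]
  refine card_le_card fun k hk => ?_
  simp only [mem_insert, mem_singleton] at hk
  rcases hk with rfl | rfl | rfl | rfl | rfl | rfl <;>
    simp only [mem_jointOrbitFinset, jointOrbit_apply_left, jointOrbit_apply_right]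

section Root

variable {r : J} (hτ : IsPairing τ) (hπ : IsPairing π)
  (hr : ∀ j, j ≠ r → j ≠ τ r → π j ≠ τ j)

include hr

theorem ne_of_not_isExceptional {j : J} (hj : ¬IsExceptional τ π r j) : π j ≠ τ j := by
  refine hr j ?_ ?_ <;> rintro rfl <;> apply hj
  exacts [isExceptional_root _, isExceptional_left_iff.2 (isExceptional_root _)]

include hτ hπ

theorem comm_of_not_isExceptional {j : J} (hj : ¬IsExceptional τ π r j) : τ (π j) = π (τ j) := by
  by_contra hcomm
  exact hj (.inr (six_le_card_jointOrbitFinset hτ hπ (ne_of_not_isExceptional hr hj) hcomm))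

open Classical in
theorem twelve_add_card_isExceptional_le (j : J) :
    12 + #{k ∈ jointOrbitFinset τ π j | IsExceptional τ π r k} ≤
      3 * #(jointOrbitFinset τ π j) +
        if jointOrbit τ π j = jointOrbit τ π r then 8 else 0 := by
  have hle := card_filter_le (jointOrbitFinset τ π j) (IsExceptional τ π r)
  by_cases hj : IsExceptional τ π r j
  · have htwo := two_le_card_jointOrbitFinset (π := π) hτ j
    rcases hj with hj | hj
    · rw [if_pos hj]
      lia
    · lia
  · have hnone : #{k ∈ jointOrbitFinset τ π j | IsExceptional τ π r k} = 0 := by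
      rw [card_eq_zero, filter_eq_empty_iff]
      exact fun k hk => (isExceptional_congr (mem_jointOrbitFinset.1 hk)).not.2 hj
    have := four_le_card_jointOrbitFinset hτ hπ (ne_of_not_isExceptional hr hj)
    lia

open Classical in
theorem twelve_mul_card_jointOrbit_add_le :
    12 * Nat.card (JointOrbit τ π) + #{j | IsExceptional τ π r j} ≤ 3 * Fintype.card J + 8 := by
  let := Fintype.ofFinite (JointOrbit τ π)
  calc 12 * Nat.card (JointOrbit τ π) + #{j | IsExceptional τ π r j}
    _ = ∑ q : JointOrbit τ π,
          (12 + #{k ∈ {k | jointOrbit τ π k = q} | IsExceptional τ π r k}) := by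
      rw [card_eq_sum_card_fiberwise (f := jointOrbit τ π) (t := univ) (by simp),
        sum_add_distrib, sum_const, smul_eq_mul, card_univ, Nat.card_eq_fintype_card, mul_comm]
      simp only [filter_filter, and_comm]
    _ ≤ ∑ q : JointOrbit τ π, (3 * #{k | jointOrbit τ π k = q} +
          if q = jointOrbit τ π r then 8 else 0) :=
      sum_le_sum fun q _ => by
        obtain ⟨j, rfl⟩ := q.exists_rep
        exact twelve_add_card_isExceptional_le hτ hπ hr j
    _ = 3 * Fintype.card J + 8 := by
      rw [sum_add_distrib, ← mul_sum, ← card_eq_sum_card_fiberwise (f := jointOrbit τ π) (by simp),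
        card_univ, sum_ite_eq' univ, if_pos (mem_univ _)]

end Root

end JointOrbit

/-! ### Pairings of the edges of a closed path -/

section EdgeCycle

variable {n : ℕ}

/-- The edge that meets the edge `j` in its endpoint of colour `c`, in the closed path of length
`2 * (n + 1)` whose edges `2 * k - 1` and `2 * k` meet in a vertex of colour `0` (a row) and whose
edges `2 * k` and `2 * k + 1` meet in a vertex of colour `1` (a column). -/
def adjEdge (c : Fin 2) (j : Fin ((n + 1) * 2)) : Fin ((n + 1) * 2) :=
  ⟨if j.1 % 2 = c then (if j.1 = 0 then 2 * n + 1 else j - 1)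
    else (if j.1 = 2 * n + 1 then 0 else j + 1), by split_ifs <;> lia⟩

theorem val_adjEdge (c : Fin 2) (j : Fin ((n + 1) * 2)) :
    (adjEdge c j : ℕ) = if j.1 % 2 = c then (if j.1 = 0 then 2 * n + 1 else j - 1)
      else (if j.1 = 2 * n + 1 then 0 else j + 1) := rfl

theorem isPairing_adjEdge (c : Fin 2) : IsPairing (adjEdge c : Fin ((n + 1) * 2) → _) where
  involutive j := by
    ext
    simp only [val_adjEdge]
    grind
  ne_self j := by
    rw [Fin.ne_iff_vne, val_adjEdge]
    grind

theorem modNat_adjEdge_ne (c : Fin 2) (j : Fin ((n + 1) * 2)) :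
    (adjEdge c j).modNat ≠ j.modNat := by
  rw [Fin.ne_iff_vne, Fin.coe_modNat, Fin.coe_modNat, val_adjEdge]
  grind

/-- One of the two edges at the vertex of colour `c` where backtracking is allowed: the row `0` and
the column `m`. -/
def rootEdge (m : Fin (n + 1)) (c : Fin 2) : Fin ((n + 1) * 2) :=
  ⟨if c = 0 then 0 else 2 * m + 1, by split_ifs <;> lia⟩

theorem modNat_rootEdge (m : Fin (n + 1)) (c : Fin 2) : (rootEdge m c).modNat = c := by
  ext
  rw [Fin.coe_modNat, rootEdge]
  fin_cases c <;> simp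

/-- A pairing of the edges is admissible if two edges that meet in a vertex are partners only at
the roots. -/
structure IsAdmissible (m : Fin (n + 1)) (π : Fin ((n + 1) * 2) → Fin ((n + 1) * 2)) : Prop
    extends IsPairing π where
  ne_adjEdge : ∀ c j, j ≠ rootEdge m c → j ≠ adjEdge c (rootEdge m c) → π j ≠ adjEdge c j

variable (m : Fin (n + 1)) (π : Fin ((n + 1) * 2) → Fin ((n + 1) * 2))

open Classical in
/-- The edges `j` that are exceptional with respect to the endpoint of `j` that comes first in the
cyclic order, whose colour is the parity of `j`. -/
noncomputable def exceptionalEdges : Finset (Fin ((n + 1) * 2)) :=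
  {j | IsExceptional (adjEdge j.modNat) π (rootEdge m j.modNat) j}

variable {m π}

theorem mem_exceptionalEdges {j : Fin ((n + 1) * 2)} :
    j ∈ exceptionalEdges m π ↔ IsExceptional (adjEdge j.modNat) π (rootEdge m j.modNat) j := by
  simp [exceptionalEdges]

theorem rootEdge_mem_exceptionalEdges (c : Fin 2) : rootEdge m c ∈ exceptionalEdges m π := by
  rw [mem_exceptionalEdges, modNat_rootEdge]
  exact isExceptional_root _

theorem mem_or_adjEdge_mem_exceptionalEdges {c : Fin 2} {j : Fin ((n + 1) * 2)}
    (hj : IsExceptional (adjEdge c) π (rootEdge m c) j) :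
    j ∈ exceptionalEdges m π ∨ adjEdge c j ∈ exceptionalEdges m π := by
  by_cases hc : j.modNat = c
  · left
    rwa [mem_exceptionalEdges, hc]
  · right
    have hadj : (adjEdge c j).modNat = c := by
      have := modNat_adjEdge_ne c j
      lia
    rwa [mem_exceptionalEdges, hadj, isExceptional_left_iff]

theorem apply_mem_or_adjEdge_apply_mem_exceptionalEdges {j : Fin ((n + 1) * 2)}
    (hj : j ∈ exceptionalEdges m π) :
    π j ∈ exceptionalEdges m π ∨ adjEdge j.modNat (π j) ∈ exceptionalEdges m π :=
  mem_or_adjEdge_mem_exceptionalEdges (isExceptional_right_iff.2 (mem_exceptionalEdges.1 hj))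

/-- Outside the exceptional edges the partner of `i + 1` is a cyclic neighbour of the partner of
`i`, on the same side of `i + 1` as the latter is of `i`. -/
theorem IsAdmissible.exists_pred_of_notMem (hπ : IsAdmissible m π) {j : Fin ((n + 1) * 2)}
    (hj : j ∉ exceptionalEdges m π) :
    ∃ i : Fin ((n + 1) * 2), i.1 + 1 = j ∧ π j = adjEdge j.modNat (π i) ∧ (π j < j ↔ π i < i) := by
  have hzero : j ≠ rootEdge m 0 := fun h => hj (h ▸ rootEdge_mem_exceptionalEdges 0)
  have hc : (j.modNat : ℕ) = j % 2 := j.coe_modNat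
  rw [mem_exceptionalEdges] at hj
  generalize j.modNat = c at *
  have hi : (adjEdge c j : ℕ) + 1 = j := by
    rw [Fin.ne_iff_vne, rootEdge] at hzero
    rw [val_adjEdge]
    grind
  have hcomm : π j = adjEdge c (π (adjEdge c j)) := by
    rw [← comm_of_not_isExceptional (isPairing_adjEdge c) hπ.toIsPairing (hπ.ne_adjEdge c) hj,
      (isPairing_adjEdge c).involutive]
  refine ⟨adjEdge c j, hi, hcomm, ?_⟩
  have hroot : π j ≠ rootEdge m c := by
    intro h
    exact hj (isExceptional_right_iff.1 (h ▸ isExceptional_root _))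
  have hadj : π (adjEdge c j) ≠ rootEdge m c := by
    intro h
    exact hj (isExceptional_left_iff.1 (isExceptional_right_iff.1 (h ▸ isExceptional_root _)))
  have hne := ne_of_not_isExceptional (hπ.ne_adjEdge c) hj
  have hne' : π (adjEdge c j) ≠ j := by
    rw [Ne, hπ.involutive.eq_iff]
    exact hne.symm
  have hfix := hπ.ne_self j
  have hfix' := hπ.ne_self (adjEdge c j)
  have hval := congrArg Fin.val hcomm
  rw [val_adjEdge] at hval
  simp only [Fin.ne_iff_vne, Fin.lt_def, rootEdge] at *
  grind

theorem IsAdmissible.apply_eq_of_eqOn_exceptionalEdges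
    {π' : Fin ((n + 1) * 2) → Fin ((n + 1) * 2)} (hπ : IsAdmissible m π) (hπ' : IsAdmissible m π')
    (hD : exceptionalEdges m π = exceptionalEdges m π') {c : Prop}
    (heq : ∀ j ∈ exceptionalEdges m π, (π j < j ↔ c) → π j = π' j)
    (j : Fin ((n + 1) * 2)) (hj : π j < j ↔ c) : π j = π' j := by
  induction hk : j.1 generalizing j with
  | zero =>
    refine heq j ?_ hj
    have : j = rootEdge m 0 := Fin.ext hk
    exact this ▸ rootEdge_mem_exceptionalEdges 0
  | succ k ih =>
    by_cases hmem : j ∈ exceptionalEdges m π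
    · exact heq j hmem hj
    · obtain ⟨i, hi, happ, hlt⟩ := hπ.exists_pred_of_notMem hmem
      obtain ⟨i', hi', happ', -⟩ := hπ'.exists_pred_of_notMem (hD ▸ hmem)
      obtain rfl : i = i' := by lia
      rw [happ, happ', ih i (hlt.symm.trans hj) (by lia)]

/-- The hypothesis determines `π` on one element of every pair, hence everywhere. -/
theorem IsAdmissible.eq_of_eqOn_exceptionalEdges
    {π' : Fin ((n + 1) * 2) → Fin ((n + 1) * 2)} (hπ : IsAdmissible m π) (hπ' : IsAdmissible m π')
    (hD : exceptionalEdges m π = exceptionalEdges m π') {c : Prop}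
    (heq : ∀ j ∈ exceptionalEdges m π, (π j < j ↔ c) → π j = π' j) : π = π' := by
  have happ := hπ.apply_eq_of_eqOn_exceptionalEdges hπ' hD heq
  funext j
  by_cases hj : π j < j ↔ c
  · exact happ j hj
  · have hlt : π (π j) < π j ↔ c := by
      rw [hπ.involutive]
      have := hπ.ne_self j
      grind
    have := happ (π j) hlt
    rw [hπ.involutive] at this
    rw [← hπ'.involutive.eq_iff, ← this]

variable (m) in
open Classical in
/-- The admissible pairings whose set of exceptional edges is `D`. -/
noncomputable def admissiblePairings (D : Finset (Fin ((n + 1) * 2))) :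
    Finset (Fin ((n + 1) * 2) → Fin ((n + 1) * 2)) :=
  {π | IsAdmissible m π ∧ exceptionalEdges m π = D}

theorem mem_admissiblePairings {D : Finset (Fin ((n + 1) * 2))} :
    π ∈ admissiblePairings m D ↔ IsAdmissible m π ∧ exceptionalEdges m π = D := by
  simp [admissiblePairings]

open Classical in
theorem card_le_of_subset_admissiblePairings {D U : Finset (Fin ((n + 1) * 2))} (hU : U ⊆ D)
    (hcard : #U ≤ #D / 2) {c : Prop} {A : Finset (Fin ((n + 1) * 2) → Fin ((n + 1) * 2))}
    (hA : A ⊆ admissiblePairings m D) (hmem : ∀ π ∈ A, ∀ j ∈ D, (π j < j ↔ c) → j ∈ U) :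
    #A ≤ (3 * #D) ^ (#D / 2) := by
  let E := D ∪ (D.image (adjEdge 0) ∪ D.image (adjEdge 1))
  have hE : #E ≤ 3 * #D := by
    have := card_union_le D (D.image (adjEdge 0) ∪ D.image (adjEdge 1))
    have := card_union_le (D.image (adjEdge 0)) (D.image (adjEdge 1))
    have := card_image_le (s := D) (f := adjEdge 0)
    have := card_image_le (s := D) (f := adjEdge 1)
    lia
  have hmaps : ∀ π ∈ A, ∀ j ∈ U, π j ∈ E := by
    intro π hπ j hj
    obtain ⟨-, rfl⟩ := mem_admissiblePairings.1 (hA hπ)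
    have := apply_mem_or_adjEdge_apply_mem_exceptionalEdges (hU hj)
    have := (isPairing_adjEdge j.modNat).involutive (π j)
    have : j.modNat = 0 ∨ j.modNat = 1 := by lia
    simp only [E, mem_union, mem_image]
    grind
  calc #A
    _ ≤ #(U.pi fun _ => E) := by
      refine card_le_card_of_injOn (fun π j _ => π j)
        (fun π hπ => mem_pi.2 (hmaps π hπ)) fun π hπ π' hπ' heq => ?_
      obtain ⟨hadm, rfl⟩ := mem_admissiblePairings.1 (hA hπ)
      obtain ⟨hadm', hD'⟩ := mem_admissiblePairings.1 (hA hπ')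
      exact hadm.eq_of_eqOn_exceptionalEdges hadm' hD'.symm fun j hj hlt =>
        congrFun (congrFun heq j) (hmem π hπ j hj hlt)
    _ = #E ^ #U := by rw [card_pi, prod_const]
    _ ≤ (3 * #D) ^ #U := Nat.pow_le_pow_left hE _
    _ ≤ (3 * #D) ^ (#D / 2) := by
      rcases D.eq_empty_or_nonempty with rfl | hD
      · simp [subset_empty.1 hU]
      · exact Nat.pow_le_pow_right (by have := hD.card_pos; lia) hcard

theorem card_admissiblePairings_filter_descents_eq_le {D S : Finset (Fin ((n + 1) * 2))}
    (hS : S ⊆ D) :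
    #{π ∈ admissiblePairings m D | {j ∈ D | π j < j} = S} ≤ (3 * #D) ^ (#D / 2) := by
  have hsplit := card_sdiff_add_card_eq_card hS
  by_cases hcard : #S ≤ #D / 2
  · refine card_le_of_subset_admissiblePairings hS hcard (filter_subset _ _) (c := True) ?_
    simp only [mem_filter]
    rintro π ⟨-, rfl⟩ j hj hlt
    simp_all
  · refine card_le_of_subset_admissiblePairings (sdiff_subset (s := D) (t := S)) (by lia)
      (filter_subset _ _) (c := False) ?_
    simp only [mem_filter]
    rintro π ⟨-, rfl⟩ j hj hlt
    simp_all

theorem card_admissiblePairings_le (D : Finset (Fin ((n + 1) * 2))) :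
    #(admissiblePairings m D) ≤ 2 ^ #D * (3 * #D) ^ (#D / 2) := by
  have hdesc (S) (hS : S ∈ D.powerset) :=
    card_admissiblePairings_filter_descents_eq_le (m := m) (mem_powerset.1 hS)
  have hmaps (π) (_ : π ∈ admissiblePairings m D) : {j ∈ D | π j < j} ∈ D.powerset :=
    mem_powerset.2 (filter_subset _ _)
  calc #(admissiblePairings m D)
    _ ≤ (3 * #D) ^ (#D / 2) * #D.powerset := card_le_mul_card_image_of_maps_to hmaps _ hdesc
    _ = 2 ^ #D * (3 * #D) ^ (#D / 2) := by rw [card_powerset, mul_comm]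

variable (m) in
/-- The edges that are exceptional in every pairing, one at each vertex where backtracking is
allowed. -/
def rootEdges : Finset (Fin ((n + 1) * 2)) := univ.image (rootEdge m)

theorem rootEdge_injective : Function.Injective (rootEdge m) :=
  Function.LeftInverse.injective (modNat_rootEdge m)

theorem card_rootEdges : #(rootEdges m) = 2 := card_image_of_injective _ rootEdge_injective

theorem rootEdges_subset_exceptionalEdges : rootEdges m ⊆ exceptionalEdges m π :=
  image_subset_iff.2 fun c _ => rootEdge_mem_exceptionalEdges c

theorem apply_rootEdge_of_exceptionalEdges_eq (hπ : IsPairing π)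
    (hD : exceptionalEdges m π = rootEdges m) (c : Fin 2) :
    π (rootEdge m c) = adjEdge c (rootEdge m c) := by
  have hroot {j} (hj : j ∈ exceptionalEdges m π) (hc : j.modNat = c) : j = rootEdge m c := by
    rw [hD, rootEdges] at hj
    obtain ⟨c', -, rfl⟩ := mem_image.1 hj
    rw [← hc, modNat_rootEdge]
  have hexc : IsExceptional (adjEdge c) π (rootEdge m c) (π (rootEdge m c)) :=
    isExceptional_right_iff.2 (isExceptional_root _)
  have hc : (π (rootEdge m c)).modNat ≠ c := by
    intro hc
    refine hπ.ne_self (rootEdge m c) (hroot ?_ hc)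
    rwa [mem_exceptionalEdges, hc]
  have hc' : (adjEdge c (π (rootEdge m c))).modNat = c := by
    have := modNat_adjEdge_ne c (π (rootEdge m c))
    lia
  rw [← (isPairing_adjEdge c).involutive.eq_iff]
  refine hroot ?_ hc'
  rwa [mem_exceptionalEdges, hc', isExceptional_left_iff]

theorem card_admissiblePairings_rootEdges_le_one : #(admissiblePairings m (rootEdges m)) ≤ 1 := by
  refine card_le_one.2 fun π hπ π' hπ' => ?_
  obtain ⟨hadm, hD⟩ := mem_admissiblePairings.1 hπ
  obtain ⟨hadm', hD'⟩ := mem_admissiblePairings.1 hπ'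
  refine hadm.eq_of_eqOn_exceptionalEdges hadm' (hD.trans hD'.symm) (c := True) fun j hj _ => ?_
  rw [hD, rootEdges] at hj
  obtain ⟨c, -, rfl⟩ := mem_image.1 hj
  rw [apply_rootEdge_of_exceptionalEdges_eq hadm.toIsPairing hD,
    apply_rootEdge_of_exceptionalEdges_eq hadm'.toIsPairing hD']

open Classical in
theorem two_mul_card_exceptionalEdges_filter_le (c : Fin 2) :
    2 * #{j ∈ exceptionalEdges m π | j.modNat = c} ≤
      #{j | IsExceptional (adjEdge c) π (rootEdge m c) j} := by
  let A := {j ∈ exceptionalEdges m π | j.modNat = c}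
  have hA {j} (hj : j ∈ A) : IsExceptional (adjEdge c) π (rootEdge m c) j ∧ j.modNat = c := by
    obtain ⟨hmem, rfl⟩ := mem_filter.1 hj
    exact ⟨mem_exceptionalEdges.1 hmem, rfl⟩
  have hdisj : Disjoint A (A.image (adjEdge c)) := by
    rw [disjoint_left]
    rintro j hj hj'
    obtain ⟨k, hk, rfl⟩ := mem_image.1 hj'
    exact modNat_adjEdge_ne c k ((hA hj).2.trans (hA hk).2.symm)
  calc 2 * #A
    _ = #(A ∪ A.image (adjEdge c)) := by
      rw [card_union_of_disjoint hdisj,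
        card_image_of_injective _ (isPairing_adjEdge c).involutive.injective, two_mul]
    _ ≤ _ := by
      refine card_le_card (union_subset (fun j hj => ?_) (image_subset_iff.2 fun j hj => ?_))
      · exact mem_filter.2 ⟨mem_univ _, (hA hj).1⟩
      · exact mem_filter.2 ⟨mem_univ _, isExceptional_left_iff.2 (hA hj).1⟩

theorem IsAdmissible.card_jointOrbit_le (hπ : IsAdmissible m π) (c : Fin 2) :
    6 * Nat.card (JointOrbit (adjEdge c) π) + #{j ∈ exceptionalEdges m π | j.modNat = c} ≤
      3 * n + 7 := by
  classical
  have hcount := twelve_mul_card_jointOrbit_add_le (isPairing_adjEdge c) hπ.toIsPairing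
    (hπ.ne_adjEdge c)
  have hcolour := two_mul_card_exceptionalEdges_filter_le (m := m) (π := π) c
  rw [Fintype.card_fin] at hcount
  lia

theorem IsAdmissible.card_jointOrbit_add_card_jointOrbit_le (hπ : IsAdmissible m π) :
    6 * (Nat.card (JointOrbit (adjEdge 0) π) + Nat.card (JointOrbit (adjEdge 1) π)) +
      #(exceptionalEdges m π) ≤ 6 * n + 14 := by
  have h0 := hπ.card_jointOrbit_le 0
  have h1 := hπ.card_jointOrbit_le 1
  have hsplit := card_eq_sum_card_fiberwise (f := Fin.modNat) (s := exceptionalEdges m π)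
    (t := univ) (by simp)
  rw [Fin.sum_univ_two] at hsplit
  lia

end EdgeCycle

/-! ### Numerical estimates -/

section Estimates

open Nat

theorem summable_pow_div_sqrt_factorial (x : ℝ) : Summable fun n : ℕ => x ^ n / √(n ! : ℝ) := by
  have hsum : Summable fun n : ℕ => (((2 * x) ^ 2) ^ n / n ! + (1 / 4 : ℝ) ^ n) / 2 :=
    ((Real.summable_pow_div_factorial _).add
      (summable_geometric_of_lt_one (by norm_num) (by norm_num))).div_const 2
  refine hsum.of_norm_bounded fun n => ?_
  have hfact : √(n ! : ℝ) ^ 2 = n ! := Real.sq_sqrt (by positivity)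
  have hsplit : x ^ n / √(n ! : ℝ) = (2 * x) ^ n / √(n ! : ℝ) * (1 / 2) ^ n := by
    rw [div_mul_eq_mul_div, ← mul_pow]
    ring_nf
  calc ‖x ^ n / √(n ! : ℝ)‖
    _ ≤ (((2 * x) ^ n / √(n ! : ℝ)) ^ 2 + ((1 / 2) ^ n) ^ 2) / 2 := by
      rw [hsplit, Real.norm_eq_abs, abs_mul]
      have := two_mul_le_add_sq |(2 * x) ^ n / √(n ! : ℝ)| |(1 / 2 : ℝ) ^ n|
      rw [sq_abs, sq_abs] at this
      linarith
    _ = (((2 * x) ^ 2) ^ n / n ! + (1 / 4 : ℝ) ^ n) / 2 := by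
      rw [div_pow, hfact, ← pow_mul, ← pow_mul, ← pow_mul, mul_comm n, pow_mul (1 / 2 : ℝ)]
      norm_num

theorem sixteen_le_exp_three : (16 : ℝ) ≤ Real.exp 3 := by
  have := Real.exp_one_gt_d9
  calc (16 : ℝ)
    _ ≤ 2.7 ^ 3 := by norm_num
    _ ≤ Real.exp 1 ^ 3 := by gcongr; linarith
    _ = Real.exp 3 := by rw [← Real.exp_nat_mul]; norm_num

theorem factorial_add_two_le (b : ℕ) : (b + 2)! ≤ 2 * 4 ^ b * b ! := by
  have hb : b + 1 ≤ 2 ^ b := Nat.lt_two_pow_self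
  calc (b + 2)! = (b + 2) * (b + 1) * b ! := by rw [factorial_succ, factorial_succ, mul_assoc]
    _ ≤ (2 * 2 ^ b) * 2 ^ b * b ! := by gcongr; lia
    _ = 2 * 4 ^ b * b ! := by rw [show 4 = 2 * 2 from rfl, mul_pow, mul_assoc 2]

theorem two_pow_mul_three_mul_pow_half_le (b : ℕ) :
    (2 : ℝ) ^ (b + 2) * (3 * (b + 2 : ℕ)) ^ ((b + 2) / 2) ≤
      2 * Real.exp 3 ^ (b + 2) * √(b ! : ℝ) := by
  set d := b + 2 with hd
  have hhalf : ((3 * d : ℝ) ^ (d / 2)) ^ 2 ≤ (3 * d : ℝ) ^ d := by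
    rw [← pow_mul]
    refine pow_le_pow_right₀ ?_ (Nat.div_mul_le_self _ _)
    norm_cast
    lia
  have hexp : (3 * d : ℝ) ^ d ≤ Real.exp 3 ^ d * d ! := by
    have := Real.pow_div_factorial_le_exp (x := 3 * d) (by positivity) d
    rwa [div_le_iff₀ (by positivity), mul_comm 3 (d : ℝ), Real.exp_nat_mul,
      mul_comm (d : ℝ)] at this
  have hfact : (d ! : ℝ) ≤ 2 * 4 ^ b * b ! := mod_cast factorial_add_two_le b
  refine abs_le_of_sq_le_sq' ?_ (by positivity) |>.2
  have hsqrt : √(b ! : ℝ) ^ 2 = b ! := Real.sq_sqrt (by positivity)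
  calc ((2 : ℝ) ^ d * (3 * d) ^ (d / 2)) ^ 2
    _ = 4 ^ d * ((3 * d) ^ (d / 2)) ^ 2 := by rw [mul_pow, ← pow_mul, mul_comm d, pow_mul]; norm_num
    _ ≤ 4 ^ d * (Real.exp 3 ^ d * (2 * 4 ^ b * b !)) := by
      gcongr
      exact hhalf.trans (hexp.trans (by gcongr))
    _ = 2 * 16 * 16 ^ b * (Real.exp 3 ^ d * b !) := by
      rw [hd, show (16 : ℝ) = 4 * 4 by norm_num, mul_pow 4 4 b]
      ring
    _ ≤ 4 * 16 ^ d * (Real.exp 3 ^ d * b !) := by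
      have : (0 : ℝ) < 16 ^ b := by positivity
      gcongr ?_ * _
      rw [hd, pow_add]
      linarith
    _ ≤ 4 * Real.exp 3 ^ d * (Real.exp 3 ^ d * b !) := by
      gcongr
      exact sixteen_le_exp_three
    _ = (2 * Real.exp 3 ^ d * √(b ! : ℝ)) ^ 2 := by
      rw [mul_pow _ (√_), hsqrt]
      ring

theorem pow_mul_le_pow_six_mul_pow {β t N : ℝ} (hβ : 0 ≤ β) (hβ1 : β ≤ 1) (ht : 1 ≤ t)
    (htN : t ^ 6 ≤ N) (hβN : 1 ≤ β * N) {b m : ℕ} (hb : b ≠ 0) (hbm : b ≤ 6 * m) :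
    (t * β) ^ b * N ≤ t ^ 6 * (β * N) ^ m := by
  obtain ⟨k, hk, hk'⟩ : ∃ k, k + 1 ≤ b ∧ k + 1 ≤ m ∧ b ≤ 6 * (k + 1) := ⟨(b - 1) / 6, by lia⟩
  have hN : 0 ≤ N := (by positivity : 0 ≤ t ^ 6).trans htN
  calc (t * β) ^ b * N
    _ = t ^ b * β ^ b * N := by rw [mul_pow]
    _ ≤ t ^ (6 * (k + 1)) * β ^ (k + 1) * N := by
      gcongr ?_ * ?_ * _
      · exact pow_le_pow_right₀ ht hk'.2
      · exact pow_le_pow_of_le_one hβ hβ1 hk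
    _ = t ^ 6 * (t ^ 6) ^ k * β ^ (k + 1) * N := by ring
    _ ≤ t ^ 6 * N ^ k * β ^ (k + 1) * N := by gcongr
    _ = t ^ 6 * (β * N) ^ (k + 1) := by ring
    _ ≤ t ^ 6 * (β * N) ^ m := by gcongr; exact hk'.1

theorem pow_mul_pow_mul_pow_le {α β K N : ℝ} (hβ : 0 ≤ β) (hβ1 : β ≤ 1) (hβα : β ≤ α) (hK : 0 ≤ K)
    (hN : 0 ≤ N) (hKN : K ≤ α * N) {a b t : ℕ} (ha : a ≤ t) (hb : b ≤ t) :
    K ^ a * N ^ b * (β * N) ^ (2 * t - (a + b)) ≤ α ^ t * N ^ (2 * t) := by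
  have hα : 0 ≤ α := hβ.trans hβα
  calc K ^ a * N ^ b * (β * N) ^ (2 * t - (a + b))
    _ = K ^ a * N ^ b * (β ^ ((t - a) + (t - b)) * N ^ (2 * t - (a + b))) := by
      rw [mul_pow]
      congr 3
      lia
    _ ≤ (α * N) ^ a * N ^ b * ((α ^ (t - a) * 1) * N ^ (2 * t - (a + b))) := by
      rw [pow_add]
      gcongr
      exact pow_le_one₀ hβ hβ1
    _ = α ^ (a + (t - a)) * N ^ (a + b + (2 * t - (a + b))) := by ring
    _ = α ^ t * N ^ (2 * t) := by congr 2 <;> lia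

/-- The constant of the moment bound; `b` counts the exceptional edges that are not roots. -/
noncomputable def momentConst (β : ℝ) : ℝ :=
  ∑' b : ℕ, 2 * Real.exp 3 ^ 2 * ((4 * Real.exp 3 / β) ^ b / √(b ! : ℝ))

theorem summable_momentConst (β : ℝ) :
    Summable fun b : ℕ => 2 * Real.exp 3 ^ 2 * ((4 * Real.exp 3 / β) ^ b / √(b ! : ℝ)) :=
  (summable_pow_div_sqrt_factorial _).mul_left _

theorem momentConst_pos {β : ℝ} (hβ : 0 < β) : 0 < momentConst β :=
  (summable_momentConst β).tsum_pos (fun b => by positivity) 0 (by positivity)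

theorem sum_powerset_le_momentConst {ι : Type*} {s : Finset ι} {β : ℝ} {t : ℕ} (hβ : 0 < β)
    (ht : 1 ≤ t) (hs : #s ≤ 4 * t) :
    ∑ B ∈ s.powerset, 2 * Real.exp 3 ^ (#B + 2) * √((#B)! : ℝ) / (t * β) ^ #B ≤
      momentConst β := by
  rw [sum_powerset_apply_card fun b => 2 * Real.exp 3 ^ (b + 2) * √(b ! : ℝ) / (t * β) ^ b]
  refine (sum_le_sum fun b _ => ?_).trans
    ((summable_momentConst β).sum_le_tsum _ fun b _ => by positivity)
  have hchoose : ((#s).choose b : ℝ) ≤ (4 * t) ^ b / b ! :=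
    (Nat.choose_le_pow_div b #s).trans (by gcongr; exact_mod_cast hs)
  have hsqrt : √(b ! : ℝ) ^ 2 = b ! := Real.sq_sqrt (by positivity)
  calc (#s).choose b • (2 * Real.exp 3 ^ (b + 2) * √(b ! : ℝ) / (t * β) ^ b)
    _ ≤ (4 * t) ^ b / b ! * (2 * Real.exp 3 ^ (b + 2) * √(b ! : ℝ) / (t * β) ^ b) := by
      rw [nsmul_eq_mul]
      gcongr
    _ = 2 * Real.exp 3 ^ 2 * ((4 * Real.exp 3 / β) ^ b / √(b ! : ℝ)) := by
      simp only [pow_add, div_pow, mul_pow]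
      field_simp
      rw [hsqrt]

end Estimates

/-! ### The sum over pairings -/

section PairingSum

open Nat

/-- The number of labellings of the rows by `K` and of the columns by `N` labels for which edges
paired by `π` carry equal labels; see `card_invariant_eq_pow_card_jointOrbit`. -/
noncomputable def pairingWeight {n : ℕ} (K N : ℕ) (π : Fin ((n + 1) * 2) → Fin ((n + 1) * 2)) : ℕ :=
  K ^ Nat.card (JointOrbit (adjEdge 0) π) * N ^ Nat.card (JointOrbit (adjEdge 1) π)

theorem IsAdmissible.card_jointOrbit_le_succ {h : ℕ} {m : Fin (2 * h + 1)}
    {π : Fin ((2 * h + 1) * 2) → Fin ((2 * h + 1) * 2)} (hπ : IsAdmissible m π) (c : Fin 2) :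
    Nat.card (JointOrbit (adjEdge c) π) ≤ h + 1 := by
  have hcard := hπ.card_jointOrbit_le c
  have hroot : 0 < #{j ∈ exceptionalEdges m π | j.modNat = c} :=
    card_pos.2 ⟨rootEdge m c, mem_filter.2 ⟨rootEdge_mem_exceptionalEdges c, modNat_rootEdge m c⟩⟩
  lia

variable {α β : ℝ} {K N h : ℕ} {m : Fin (2 * h + 1)}
  {π : Fin ((2 * h + 1) * 2) → Fin ((2 * h + 1) * 2)}
  (hβ : 0 < β) (hβ1 : β ≤ 1) (hβα : β ≤ α) (hKN : (K : ℝ) ≤ α * N) (hβN : 1 ≤ β * N)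

include hβ hβ1 hβα hKN

theorem IsAdmissible.exists_pairingWeight_mul_pow_le (hπ : IsAdmissible m π) :
    ∃ k, #(exceptionalEdges m π) ≤ 6 * k + 2 ∧
      pairingWeight K N π * (β * N) ^ k ≤ α ^ (h + 1) * N ^ (2 * (h + 1)) := by
  have hcard := hπ.card_jointOrbit_add_card_jointOrbit_le
  have hrow := hπ.card_jointOrbit_le_succ 0
  have hcol := hπ.card_jointOrbit_le_succ 1
  refine ⟨2 * (h + 1) - (Nat.card (JointOrbit (adjEdge 0) π) +
    Nat.card (JointOrbit (adjEdge 1) π)), by lia, ?_⟩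
  rw [pairingWeight]
  push_cast
  exact pow_mul_pow_mul_pow_le hβ.le hβ1 hβα (by positivity) (by positivity) hKN hrow hcol

include hβN

theorem IsAdmissible.pairingWeight_le (hπ : IsAdmissible m π) :
    (pairingWeight K N π : ℝ) ≤ α ^ (h + 1) * N ^ (2 * (h + 1)) := by
  obtain ⟨k, -, hk⟩ := hπ.exists_pairingWeight_mul_pow_le hβ hβ1 hβα hKN
  exact (le_mul_of_one_le_right (by positivity) (one_le_pow₀ hβN)).trans hk

variable (htN : ((h + 1 : ℕ) : ℝ) ^ 6 ≤ N)

include htN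

theorem IsAdmissible.pairingWeight_le_div (hπ : IsAdmissible m π) {b : ℕ} (hb : b ≠ 0)
    (hD : #(exceptionalEdges m π) = b + 2) :
    (pairingWeight K N π : ℝ) ≤ α ^ (h + 1) * N ^ (2 * (h + 1)) *
      (((h + 1 : ℕ) : ℝ) ^ 6 / N) / ((h + 1 : ℕ) * β) ^ b := by
  obtain ⟨k, hcard, hk⟩ := hπ.exists_pairingWeight_mul_pow_le hβ hβ1 hβα hKN
  set t : ℝ := ((h + 1 : ℕ) : ℝ) with ht
  have hN : (0 : ℝ) < N := pos_of_mul_pos_right (one_pos.trans_le hβN) hβ.le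
  have hpow : (t * β) ^ b * N ≤ t ^ 6 * (β * N) ^ k :=
    pow_mul_le_pow_six_mul_pow hβ.le hβ1 (by simp [ht]) htN hβN hb (by lia)
  rw [mul_div_assoc', div_div, le_div_iff₀ (by positivity)]
  calc pairingWeight K N π * (N * (t * β) ^ b)
    _ ≤ pairingWeight K N π * (t ^ 6 * (β * N) ^ k) := by
      rw [mul_comm (N : ℝ)]
      gcongr
    _ = pairingWeight K N π * (β * N) ^ k * t ^ 6 := by ring
    _ ≤ α ^ (h + 1) * N ^ (2 * (h + 1)) * t ^ 6 := by gcongr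

theorem sum_admissiblePairings_union_pairingWeight_le {B : Finset (Fin ((2 * h + 1) * 2))}
    (hB : Disjoint (rootEdges m) B) (hne : B ≠ ∅) :
    ∑ π ∈ admissiblePairings m (rootEdges m ∪ B), (pairingWeight K N π : ℝ) ≤
      α ^ (h + 1) * N ^ (2 * (h + 1)) * (((h + 1 : ℕ) : ℝ) ^ 6 / N *
        (2 * Real.exp 3 ^ (#B + 2) * √((#B)! : ℝ) / ((h + 1 : ℕ) * β) ^ #B)) := by
  have hα := hβ.trans_le hβα
  have hD : #(rootEdges m ∪ B) = #B + 2 := by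
    rw [card_union_of_disjoint hB, card_rootEdges, add_comm]
  have hcard : (#(admissiblePairings m (rootEdges m ∪ B)) : ℝ) ≤
      2 * Real.exp 3 ^ (#B + 2) * √((#B)! : ℝ) := by
    refine le_trans ?_ (two_pow_mul_three_mul_pow_half_le #B)
    rw [← hD]
    exact mod_cast card_admissiblePairings_le (rootEdges m ∪ B)
  calc ∑ π ∈ admissiblePairings m (rootEdges m ∪ B), (pairingWeight K N π : ℝ)
    _ ≤ #(admissiblePairings m (rootEdges m ∪ B)) • (α ^ (h + 1) * N ^ (2 * (h + 1)) *
        (((h + 1 : ℕ) : ℝ) ^ 6 / N) / ((h + 1 : ℕ) * β) ^ #B) := by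
      refine sum_le_card_nsmul _ _ _ fun π hπ => ?_
      obtain ⟨hadm, hexc⟩ := mem_admissiblePairings.1 hπ
      exact hadm.pairingWeight_le_div hβ hβ1 hβα hKN hβN htN
        (card_ne_zero.2 (nonempty_iff_ne_empty.2 hne)) (hexc ▸ hD)
    _ ≤ 2 * Real.exp 3 ^ (#B + 2) * √((#B)! : ℝ) * (α ^ (h + 1) * N ^ (2 * (h + 1)) *
        (((h + 1 : ℕ) : ℝ) ^ 6 / N) / ((h + 1 : ℕ) * β) ^ #B) := by
      rw [nsmul_eq_mul]
      gcongr
    _ = _ := by ring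

theorem sum_admissiblePairings_pairingWeight_le {B : Finset (Fin ((2 * h + 1) * 2))}
    (hB : Disjoint (rootEdges m) B) :
    ∑ π ∈ admissiblePairings m (rootEdges m ∪ B), (pairingWeight K N π : ℝ) ≤
      α ^ (h + 1) * N ^ (2 * (h + 1)) * ((if B = ∅ then 1 else 0) + ((h + 1 : ℕ) : ℝ) ^ 6 / N *
        (2 * Real.exp 3 ^ (#B + 2) * √((#B)! : ℝ) / ((h + 1 : ℕ) * β) ^ #B)) := by
  have hα := hβ.trans_le hβα
  rcases eq_or_ne B ∅ with rfl | hne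
  · have hone : (#(admissiblePairings m (rootEdges m)) : ℝ) ≤ 1 :=
      mod_cast card_admissiblePairings_rootEdges_le_one
    rw [union_empty, if_pos rfl, mul_add, mul_one]
    refine le_add_of_le_of_nonneg ?_ (by positivity)
    refine (sum_le_card_nsmul _ _ _ fun π hπ =>
      (mem_admissiblePairings.1 hπ).1.pairingWeight_le hβ hβ1 hβα hKN hβN).trans ?_
    rw [nsmul_eq_mul]
    exact mul_le_of_le_one_left (by positivity) hone
  · rw [if_neg hne, zero_add]
    exact sum_admissiblePairings_union_pairingWeight_le hβ hβ1 hβα hKN hβN htN hB hne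

open Classical in
theorem sum_isAdmissible_pairingWeight_le :
    ∑ π with IsAdmissible m π, (pairingWeight K N π : ℝ) ≤
      α ^ (h + 1) * N ^ (2 * (h + 1)) * (1 + momentConst β * ((h + 1 : ℕ) : ℝ) ^ 6 / N) := by
  have hα := hβ.trans_le hβα
  set s : Finset (Fin ((2 * h + 1) * 2)) := univ \ rootEdges m
  have hcard : #s ≤ 4 * (h + 1) := by
    have := card_le_univ s
    rw [Fintype.card_fin] at this
    lia
  have hfiber : ∀ B ∈ s.powerset, ∀ π, IsAdmissible m π ∧ exceptionalEdges m π \ rootEdges m = B ↔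
      π ∈ admissiblePairings m (rootEdges m ∪ B) := by
    intro B hB π
    have := rootEdges_subset_exceptionalEdges (m := m) (π := π)
    rw [mem_admissiblePairings]
    grind
  calc ∑ π with IsAdmissible m π, (pairingWeight K N π : ℝ)
    _ = ∑ B ∈ s.powerset,
        ∑ π ∈ admissiblePairings m (rootEdges m ∪ B), (pairingWeight K N π : ℝ) := by
      rw [← sum_fiberwise_of_maps_to (t := s.powerset)
        (g := fun π => exceptionalEdges m π \ rootEdges m)
        (fun π _ => mem_powerset.2 (sdiff_subset_sdiff (subset_univ _) subset_rfl))]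
      refine sum_congr rfl fun B hB => sum_congr ?_ fun _ _ => rfl
      ext π
      simp only [mem_filter, mem_univ, true_and, hfiber B hB]
    _ ≤ ∑ B ∈ s.powerset, α ^ (h + 1) * N ^ (2 * (h + 1)) *
        ((if B = ∅ then 1 else 0) + ((h + 1 : ℕ) : ℝ) ^ 6 / N *
          (2 * Real.exp 3 ^ (#B + 2) * √((#B)! : ℝ) / ((h + 1 : ℕ) * β) ^ #B)) := by
      refine sum_le_sum fun B hB => ?_
      exact sum_admissiblePairings_pairingWeight_le hβ hβ1 hβα hKN hβN htN
        (disjoint_of_subset_right (mem_powerset.1 hB) disjoint_sdiff)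
    _ ≤ _ := by
      rw [← mul_sum, sum_add_distrib, ← mul_sum, sum_ite_eq', if_pos (empty_mem_powerset _),
        mul_comm (momentConst β), mul_div_right_comm]
      gcongr
      exact sum_powerset_le_momentConst hβ (by lia) hcard

end PairingSum

/-! ### Labelled closed paths -/

section ClosedWalk

variable {n : ℕ} {I A : Type*}

/-- The position of the row at which the edge `j` ends; its column has position `j.divNat`. -/
def edgeRow (j : Fin ((n + 1) * 2)) : Fin (n + 1) :=
  if j.modNat = 0 then j.divNat else j.divNat + 1

theorem edgeRow_surjective : (edgeRow : Fin ((n + 1) * 2) → Fin (n + 1)).Surjective := by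
  intro k
  refine ⟨finProdFinEquiv (k, 0), ?_⟩
  have := finProdFinEquiv.symm_apply_apply (k, (0 : Fin 2))
  rw [finProdFinEquiv_symm_apply, Prod.mk.injEq] at this
  rw [edgeRow, this.1, if_pos this.2]

theorem divNat_surjective : (Fin.divNat : Fin ((n + 1) * 2) → Fin (n + 1)).Surjective :=
  fun k => ⟨finProdFinEquiv (k, 0), congrArg Prod.fst (finProdFinEquiv.symm_apply_apply (k, 0))⟩

theorem val_edgeRow (j : Fin ((n + 1) * 2)) :
    (edgeRow j : ℕ) = if j.1 = 2 * n + 1 then 0 else (j.1 + 1) / 2 := by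
  have hmod : j.modNat = 0 ↔ j.1 % 2 = 0 := by
    rw [Fin.ext_iff, Fin.coe_modNat, Fin.val_zero]
  have hdiv : (j.divNat : ℕ) = j / 2 := j.coe_divNat
  have hlast : j.divNat = Fin.last n ↔ j.1 / 2 = n := by
    rw [Fin.ext_iff, hdiv, Fin.val_last]
  unfold edgeRow
  split_ifs with hj hj' hj'
  · lia
  · lia
  · rw [hlast.2 (by lia), Fin.last_add_one, Fin.val_zero]
  · rw [Fin.val_add_one, if_neg (by lia)]
    lia

theorem edgeRow_adjEdge_zero (j : Fin ((n + 1) * 2)) : edgeRow (adjEdge 0 j) = edgeRow j := by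
  ext
  rw [val_edgeRow, val_edgeRow, val_adjEdge]
  grind

theorem divNat_adjEdge_one (j : Fin ((n + 1) * 2)) : (adjEdge 1 j).divNat = j.divNat := by
  ext
  rw [Fin.coe_divNat, Fin.coe_divNat, val_adjEdge]
  grind

theorem exists_divNat_adjEdge_zero {m : Fin (n + 1)} {j : Fin ((n + 1) * 2)}
    (hroot : j ≠ rootEdge m 0) (hadj : j ≠ adjEdge 0 (rootEdge m 0)) :
    ∃ k, k ≠ Fin.last n ∧ (j.divNat = k ∧ (adjEdge 0 j).divNat = k + 1 ∨
      j.divNat = k + 1 ∧ (adjEdge 0 j).divNat = k) := by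
  have hval := val_adjEdge 0 j
  rw [Fin.ne_iff_vne, val_adjEdge] at hadj
  rw [Fin.ne_iff_vne] at hroot
  simp only [rootEdge, if_true] at hroot hadj
  refine ⟨⟨(j - 1) / 2, by lia⟩, ?_, ?_⟩
  · rw [Fin.ne_iff_vne, Fin.val_last]
    grind
  · simp only [Fin.ext_iff, Fin.val_add_one, Fin.coe_divNat, Fin.val_last]
    grind

theorem edgeRow_adjEdge_one {m : Fin (n + 1)} {j : Fin ((n + 1) * 2)}
    (hroot : j ≠ rootEdge m 1) (hadj : j ≠ adjEdge 1 (rootEdge m 1)) :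
    j.divNat ≠ m ∧ (edgeRow j = j.divNat ∧ edgeRow (adjEdge 1 j) = j.divNat + 1 ∨
      edgeRow j = j.divNat + 1 ∧ edgeRow (adjEdge 1 j) = j.divNat) := by
  have hmod := modNat_adjEdge_ne 1 j
  refine ⟨?_, by rw [edgeRow, edgeRow, divNat_adjEdge_one]; grind⟩
  rw [Fin.ne_iff_vne, val_adjEdge] at hadj
  rw [Fin.ne_iff_vne] at hroot
  rw [Fin.ne_iff_vne, Fin.coe_divNat]
  simp only [rootEdge] at hroot hadj
  grind

/-- The entry of the signature matrix at the edge `j` of the closed path with rows `x` and columns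
`y`. -/
def edgeLabel (x : Fin (n + 1) → I) (y : Fin (n + 1) → A) (j : Fin ((n + 1) * 2)) : I × A :=
  (x (edgeRow j), y j.divNat)

theorem prod_edgeLabel {R : Type*} [CommMonoid R] (f : I → A → R) (x : Fin (n + 1) → I)
    (y : Fin (n + 1) → A) :
    ∏ j, f (edgeLabel x y j).1 (edgeLabel x y j).2 = ∏ k, f (x k) (y k) * f (x (k + 1)) (y k) := by
  rw [← finProdFinEquiv.prod_comp, Fintype.prod_prod_type]
  refine Fintype.prod_congr _ _ fun k => ?_
  have hsymm (c : Fin 2) := finProdFinEquiv.symm_apply_apply (k, c)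
  simp only [finProdFinEquiv_symm_apply, Prod.mk.injEq] at hsymm
  simp [edgeLabel, edgeRow, hsymm]

/-- The closed path with rows `x` and columns `y` may backtrack only at the row `0` and the
column `m`. -/
structure IsNonbacktracking (m : Fin (n + 1)) (x : Fin (n + 1) → I) (y : Fin (n + 1) → A) :
    Prop where
  row_ne : ∀ k, k ≠ m → x k ≠ x (k + 1)
  column_ne : ∀ k, k ≠ Fin.last n → y k ≠ y (k + 1)

theorem IsNonbacktracking.isAdmissible {m : Fin (n + 1)} {x : Fin (n + 1) → I}
    {y : Fin (n + 1) → A} (hxy : IsNonbacktracking m x y)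
    {π : Fin ((n + 1) * 2) → Fin ((n + 1) * 2)} (hπ : IsPairing π)
    (hlabel : ∀ j, edgeLabel x y (π j) = edgeLabel x y j) : IsAdmissible m π := by
  refine ⟨hπ, fun c j hroot hadj heq => ?_⟩
  have hx : x (edgeRow (adjEdge c j)) = x (edgeRow j) := heq ▸ congrArg Prod.fst (hlabel j)
  have hy : y (adjEdge c j).divNat = y j.divNat := heq ▸ congrArg Prod.snd (hlabel j)
  fin_cases c
  · obtain ⟨k, hk, hends⟩ := exists_divNat_adjEdge_zero hroot hadj
    have := hxy.column_ne k hk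
    grind
  · obtain ⟨hk, hends⟩ := edgeRow_adjEdge_one hroot hadj
    have := hxy.row_ne _ hk
    grind

theorem card_comp_invariant_le {J P : Type*} [Finite J] {τ π : J → J} {e : J → P}
    (he : e.Surjective) (hτ : ∀ j, e (τ j) = e j) (T : Type*) [Finite T] :
    Nat.card {x : P → T // ∀ j, x (e (π j)) = x (e j)} ≤
      Nat.card T ^ Nat.card (JointOrbit τ π) := by
  rw [← card_invariant_eq_pow_card_jointOrbit]
  refine Nat.card_le_card_of_injective
    (fun x => ⟨x.1 ∘ e, fun j => congrArg x.1 (hτ j), x.2⟩) fun x x' h => ?_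
  exact Subtype.ext (he.injective_comp_right (congrArg Subtype.val h))

open Classical in
theorem card_edgeLabel_comp_eq_le [Fintype I] [Fintype A]
    (π : Fin ((n + 1) * 2) → Fin ((n + 1) * 2)) :
    #{w : (Fin (n + 1) → I) × (Fin (n + 1) → A) |
      ∀ j, edgeLabel w.1 w.2 (π j) = edgeLabel w.1 w.2 j} ≤
    pairingWeight (Fintype.card I) (Fintype.card A) π := by
  have hrow := card_comp_invariant_le (π := π) edgeRow_surjective edgeRow_adjEdge_zero I
  have hcolumn := card_comp_invariant_le (π := π) divNat_surjective divNat_adjEdge_one A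
  rw [Nat.card_eq_fintype_card (α := I)] at hrow
  rw [Nat.card_eq_fintype_card (α := A)] at hcolumn
  rw [← Fintype.card_subtype, ← Nat.card_eq_fintype_card]
  refine le_trans ?_ (Nat.mul_le_mul hrow hcolumn)
  rw [← Nat.card_prod]
  refine Nat.card_le_card_of_injective
    (fun w => (⟨w.1.1, fun j => congrArg Prod.fst (w.2 j)⟩,
      ⟨w.1.2, fun j => congrArg Prod.snd (w.2 j)⟩)) fun w w' h => ?_
  exact Subtype.ext (Prod.ext (congrArg (·.1.1) h) (congrArg (·.2.1) h))

open Classical in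
theorem card_isNonbacktracking_even_le [Fintype I] [Fintype A] (m : Fin (n + 1)) :
    #{w : (Fin (n + 1) → I) × (Fin (n + 1) → A) | IsNonbacktracking m w.1 w.2 ∧
      ∀ e, Even (Nat.card {j // edgeLabel w.1 w.2 j = e})} ≤
    ∑ π with IsAdmissible m π, pairingWeight (Fintype.card I) (Fintype.card A) π := by
  refine (card_le_card fun w hw => ?_).trans
    (card_biUnion_le.trans (sum_le_sum fun π _ => card_edgeLabel_comp_eq_le π))
  obtain ⟨hnon, heven⟩ := (mem_filter.1 hw).2
  obtain ⟨π, hπ, hlabel⟩ := exists_isPairing_comp_eq _ heven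
  simp only [mem_biUnion, mem_filter, mem_univ, true_and]
  exact ⟨π, hnon.isAdmissible hπ hlabel, hlabel⟩

end ClosedWalk

/-! ### The trace as a sum over closed paths -/

theorem sum_eq_sum_insertNth {R V : Type*} [AddCommMonoid R] [Fintype V] {n : ℕ} (p : Fin (n + 1))
    (f : (Fin (n + 1) → V) → R) :
    ∑ z, f z = ∑ u, ∑ z : Fin n → V, f (p.insertNth u z) := by
  rw [← (Fin.insertNthEquiv (fun _ => V) p).sum_comp, Fintype.sum_prod_type]
  rfl

section Trace

variable {R V : Type*} [CommSemiring R] [Fintype V] [DecidableEq V] {n : ℕ}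

theorem list_prod_ofFn_apply (M : Fin (n + 1) → Matrix V V R) (u v : V) :
    (List.ofFn M).prod u v = ∑ z : Fin n → V,
      ∏ i, M i ((Fin.cons u z : Fin (n + 1) → V) i) ((Fin.snoc z v : Fin (n + 1) → V) i) := by
  induction n generalizing u with
  | zero => simp [Fin.snoc]
  | succ n ih =>
    rw [List.ofFn_succ, List.prod_cons, Matrix.mul_apply, sum_eq_sum_insertNth 0]
    refine Fintype.sum_congr _ _ fun w => ?_
    rw [ih, mul_sum]
    refine Fintype.sum_congr _ _ fun z => ?_
    have hsnoc : (Fin.snoc (Fin.cons w z : Fin (n + 1) → V) v : Fin (n + 2) → V) =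
        Fin.cons w (Fin.snoc z v : Fin (n + 1) → V) := (Fin.cons_snoc_eq_snoc_cons w z v).symm
    rw [Fin.insertNth_zero', hsnoc, Fin.prod_univ_succ (n := n + 1)]
    simp only [Fin.cons_zero, Fin.cons_succ]

theorem trace_list_prod_ofFn (M : Fin (n + 1) → Matrix V V R) :
    (List.ofFn M).prod.trace = ∑ z : Fin (n + 1) → V, ∏ i, M i (z i) (z (i + 1)) := by
  rw [sum_eq_sum_insertNth 0, Matrix.trace]
  refine Fintype.sum_congr _ _ fun u => ?_
  rw [Matrix.diag_apply, list_prod_ofFn_apply]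
  refine Fintype.sum_congr _ _ fun z => Fintype.prod_congr _ _ fun i => ?_
  have hrotate : (Fin.snoc z u : Fin (n + 1) → V) i = (Fin.cons u z : Fin (n + 1) → V) (i + 1) := by
    rw [← finRotate_apply]
    exact congrFun (Fin.snoc_eq_cons_rotate z u) i
  rw [Fin.insertNth_zero', hrotate]

theorem trace_transpose_pow_mul_pow (M : Matrix V V R) {a b k : ℕ} (hk : a + b = k) :
    ((M ^ b)ᵀ * M ^ a).trace =
      (List.ofFn fun i : Fin k => if i.1 < a then M else Mᵀ).prod.trace := by
  subst hk
  rw [Matrix.trace_mul_comm, Matrix.transpose_pow, List.ofFn_add, List.prod_append]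
  simp

end Trace

theorem sum_prod_sign {J T : Type*} [Fintype J] [Fintype T] [DecidableEq T] (e : J → T)
    [Decidable (∀ t, Even (Nat.card {j // e j = t}))] :
    ∑ s : T → Bool, ∏ j, (if s (e j) then (1 : ℝ) else -1) =
      if ∀ t, Even (Nat.card {j // e j = t}) then 2 ^ Fintype.card T else 0 := by
  calc ∑ s : T → Bool, ∏ j, (if s (e j) then (1 : ℝ) else -1)
    _ = ∑ s : T → Bool, ∏ t, (if s t then (1 : ℝ) else -1) ^ Nat.card {j // e j = t} := by
      refine Fintype.sum_congr _ _ fun s => ?_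
      rw [← Fintype.prod_fiberwise' e fun t => if s t then (1 : ℝ) else -1]
      simp only [prod_const, card_univ, Nat.card_eq_fintype_card]
    _ = ∏ t, (1 + (-1) ^ Nat.card {j // e j = t}) := by
      rw [← Fintype.prod_sum fun t (b : Bool) => (if b then (1 : ℝ) else -1) ^ _]
      simp
    _ = _ := by
      split_ifs with h
      · simp only [(h _).neg_one_pow, one_add_one_eq_two, prod_const, card_univ]
      · obtain ⟨t, ht⟩ := not_forall.1 h
        refine prod_eq_zero (mem_univ t) ?_
        rw [(Nat.not_even_iff_odd.1 ht).neg_one_pow, add_neg_cancel]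

section OmegaWalk

variable {n : ℕ} {I A : Type*}

/-- The column of the sign factors of the step from `z i` to `z (i + 1)` in the trace of
`Ω ^ (m + 1) * Ωᵀ ^ (n + 1 - m)`. -/
def stepColumn (m : Fin (n + 1)) (z : Fin (n + 2) → I × A) (i : Fin (n + 2)) : A :=
  if i.1 < m + 1 then (z (i + 1)).2 else (z i).2

/-- The rows visited by `z`, except the one at position `m + 1`, whose sign factors cancel. -/
def walkRows (m : Fin (n + 1)) (z : Fin (n + 2) → I × A) : Fin (n + 1) → I :=
  m.succ.removeNth fun i => (z i).1

/-- The columns visited by `z`, except the one at position `0`, which carries no sign factor. -/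
def walkColumns (z : Fin (n + 2) → I × A) : Fin (n + 1) → A :=
  (0 : Fin (n + 2)).removeNth fun i => (z i).2

theorem succ_succAbove_add_one {m k : Fin (n + 1)} (hk : k ≠ m) :
    m.succ.succAbove k + 1 = m.succ.succAbove (k + 1) := by
  rw [Fin.ne_iff_vne] at hk
  simp only [Fin.ext_iff, Fin.succAbove, Fin.lt_def, Fin.val_add_one, apply_ite Fin.val,
    Fin.val_succ, Fin.val_castSucc, Fin.val_last]
  grind

theorem castSucc_succAbove_add_one (m k : Fin (n + 1)) :
    m.castSucc.succAbove k + 1 = m.succ.succAbove (k + 1) := by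
  simp only [Fin.ext_iff, Fin.succAbove, Fin.lt_def, Fin.val_add_one, apply_ite Fin.val,
    Fin.val_succ, Fin.val_castSucc, Fin.val_last]
  grind

theorem stepColumn_succ_succAbove (m : Fin (n + 1)) (z : Fin (n + 2) → I × A) (k : Fin (n + 1)) :
    stepColumn m z (m.succ.succAbove k) = walkColumns z k := by
  rcases le_or_gt k m with hk | hk
  · rw [Fin.succAbove_of_castSucc_lt _ _ (Fin.castSucc_lt_succ_iff.2 hk), stepColumn,
      if_pos (by simpa [Nat.lt_succ_iff] using hk), Fin.coeSucc_eq_succ]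
    rfl
  · rw [Fin.succAbove_of_le_castSucc _ _ (by simpa [Fin.le_def] using hk), stepColumn,
      if_neg (by simpa using hk.le)]
    rfl

theorem stepColumn_castSucc_succAbove (m : Fin (n + 1)) (z : Fin (n + 2) → I × A)
    (k : Fin (n + 1)) : stepColumn m z (m.castSucc.succAbove k) = walkColumns z k := by
  rcases lt_or_ge k m with hk | hk
  · rw [Fin.succAbove_of_castSucc_lt _ _ (Fin.castSucc_lt_castSucc_iff.2 hk), stepColumn,
      if_pos (by simpa [Nat.lt_succ_iff] using hk.le), Fin.coeSucc_eq_succ]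
    rfl
  · rw [Fin.succAbove_of_le_castSucc _ _ (Fin.castSucc_le_castSucc_iff.2 hk), stepColumn,
      if_neg (by simpa using hk)]
    rfl

theorem prod_step (m : Fin (n + 1)) (z : Fin (n + 2) → I × A) {f : I → A → ℝ}
    (hf : ∀ i a, f i a * f i a = 1) :
    ∏ i, f (z i).1 (stepColumn m z i) * f (z (i + 1)).1 (stepColumn m z i) =
      ∏ j, f (edgeLabel (walkRows m z) (walkColumns z) j).1
        (edgeLabel (walkRows m z) (walkColumns z) j).2 := by
  have hsucc : stepColumn m z m.succ = (z m.succ).2 := by simp [stepColumn]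
  have hcast : stepColumn m z m.castSucc = (z m.succ).2 := by
    simp [stepColumn]
  rw [prod_edgeLabel, prod_mul_distrib, prod_mul_distrib,
    Fin.prod_univ_succAbove (fun i => f (z i).1 _) m.succ,
    Fin.prod_univ_succAbove (fun i => f (z (i + 1)).1 _) m.castSucc, mul_mul_mul_comm, hsucc, hcast,
    Fin.coeSucc_eq_succ, hf, one_mul]
  simp only [castSucc_succAbove_add_one, stepColumn_succ_succAbove, stepColumn_castSucc_succAbove]
  rfl

theorem isNonbacktracking_walk (m : Fin (n + 1)) {z : Fin (n + 2) → I × A}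
    (hz : ∀ i, (z i).1 ≠ (z (i + 1)).1 ∧ (z i).2 ≠ (z (i + 1)).2) :
    IsNonbacktracking m (walkRows m z) (walkColumns z) where
  row_ne k hk := by
    have := (hz (m.succ.succAbove k)).1
    rwa [succ_succAbove_add_one hk] at this
  column_ne k hk := by
    have := (hz k.succ).2
    have hsucc : k.succ + 1 = (k + 1).succ := by
      rw [Fin.ne_iff_vne, Fin.val_last] at hk
      ext
      rw [Fin.val_succ, Fin.val_add_one_of_lt' (by simp; lia), Fin.val_add_one_of_lt' (by lia),
        Fin.val_succ]
    rwa [hsucc] at this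

theorem sum_walkRows_walkColumns [Fintype I] [Fintype A] (m : Fin (n + 1))
    (g : (Fin (n + 1) → I) → (Fin (n + 1) → A) → ℝ) :
    ∑ z, g (walkRows m z) (walkColumns z) =
      Fintype.card I * Fintype.card A * ∑ w : _ × _, g w.1 w.2 := by
  have hrows (a : I) x (b : A) y : walkRows m ((Equiv.arrowProdEquivProdArrow _ (fun _ => I)
      fun _ => A).symm (m.succ.insertNth a x, (0 : Fin (n + 2)).insertNth b y)) = x :=
    Fin.removeNth_insertNth (α := fun _ => I) _ a x
  have hcolumns (a : I) x (b : A) y : walkColumns ((Equiv.arrowProdEquivProdArrow _ (fun _ => I)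
      fun _ => A).symm (m.succ.insertNth a x, (0 : Fin (n + 2)).insertNth b y)) = y :=
    Fin.removeNth_insertNth (α := fun _ => A) _ b y
  rw [← (Equiv.arrowProdEquivProdArrow _ (fun _ => I) fun _ => A).symm.sum_comp,
    Fintype.sum_prod_type, sum_eq_sum_insertNth m.succ]
  simp_rw [sum_eq_sum_insertNth (0 : Fin (n + 2)) (V := A), hrows, hcolumns, sum_const, card_univ,
    nsmul_eq_mul, ← mul_sum, Fintype.sum_prod_type, mul_assoc]

variable {K N : ℕ}

theorem prod_omega (m : Fin (n + 1)) {s : Fin K → Fin N → ℝ}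
    (hs : ∀ i a, s i a * s i a = 1) (z : Fin (n + 2) → Fin K × Fin N) :
    ∏ i : Fin (n + 2), (if i.1 < m + 1 then Omega s else (Omega s)ᵀ) (z i) (z (i + 1)) =
      if ∀ i, (z i).1 ≠ (z (i + 1)).1 ∧ (z i).2 ≠ (z (i + 1)).2 then
        ∏ j, s (edgeLabel (walkRows m z) (walkColumns z) j).1
          (edgeLabel (walkRows m z) (walkColumns z) j).2
      else 0 := by
  have hstep (i : Fin (n + 2)) :
      (if i.1 < m + 1 then Omega s else (Omega s)ᵀ) (z i) (z (i + 1)) =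
        if (z i).1 ≠ (z (i + 1)).1 ∧ (z i).2 ≠ (z (i + 1)).2 then
          s (z i).1 (stepColumn m z i) * s (z (i + 1)).1 (stepColumn m z i) else 0 := by
    rw [stepColumn]
    split_ifs <;> simp_all [Omega, eq_comm, mul_comm]
  simp_rw [hstep, prod_ite_zero, ← prod_step m z hs]
  simp

theorem sum_prod_toSign {J : Type*} [Fintype J] (e : J → Fin K × Fin N)
    [Decidable (∀ t, Even (Nat.card {j // e j = t}))] :
    ∑ s : Fin K → Fin N → Bool, ∏ j, toSign s (e j).1 (e j).2 =
      if ∀ t, Even (Nat.card {j // e j = t}) then 2 ^ (K * N) else 0 := by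
  rw [← (Equiv.curry (Fin K) (Fin N) Bool).sum_comp]
  have hcard : Fintype.card (Fin K × Fin N) = K * N := by
    rw [Fintype.card_prod, Fintype.card_fin, Fintype.card_fin]
  rw [← hcard]
  exact sum_prod_sign e

open Classical in
theorem sum_prod_omega_le (m : Fin (n + 1)) (z : Fin (n + 2) → Fin K × Fin N) :
    ∑ s : Fin K → Fin N → Bool, ∏ i : Fin (n + 2),
      (if i.1 < m + 1 then Omega (toSign s) else (Omega (toSign s))ᵀ) (z i) (z (i + 1)) ≤
    if IsNonbacktracking m (walkRows m z) (walkColumns z) ∧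
      ∀ e, Even (Nat.card {j // edgeLabel (walkRows m z) (walkColumns z) j = e})
    then 2 ^ (K * N) else 0 := by
  have hsign (s : Fin K → Fin N → Bool) (i a) : toSign s i a * toSign s i a = 1 := by
    unfold toSign
    split_ifs <;> norm_num
  simp_rw [prod_omega m (hsign _) z]
  by_cases hz : ∀ i, (z i).1 ≠ (z (i + 1)).1 ∧ (z i).2 ≠ (z (i + 1)).2
  · simp only [if_pos hz, sum_prod_toSign, isNonbacktracking_walk m hz, true_and, le_refl]
  · simp only [if_neg hz, sum_const_zero]
    positivity

open Classical in
theorem sum_trace_le (m : Fin (n + 1)) {b : ℕ} (hb : m + 1 + b = n + 2) :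
    ∑ s : Fin K → Fin N → Bool,
      ((Omega (toSign s) ^ b)ᵀ * Omega (toSign s) ^ (m + 1 : ℕ)).trace ≤
    K * N * 2 ^ (K * N) *
      (#{w : (Fin (n + 1) → Fin K) × (Fin (n + 1) → Fin N) | IsNonbacktracking m w.1 w.2 ∧
        ∀ e, Even (Nat.card {j // edgeLabel w.1 w.2 j = e})} : ℝ) := by
  simp_rw [trace_transpose_pow_mul_pow _ hb, trace_list_prod_ofFn]
  rw [sum_comm]
  refine (sum_le_sum fun z _ => sum_prod_omega_le m z).trans_eq ?_
  rw [sum_walkRows_walkColumns m fun x y => if IsNonbacktracking m x y ∧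
    ∀ e, Even (Nat.card {j // edgeLabel x y j = e}) then 2 ^ (K * N) else 0,
    Fintype.card_fin, Fintype.card_fin, ← sum_filter, sum_const, nsmul_eq_mul]
  ring

end OmegaWalk

theorem trace_moment_bound_general (α : ℝ) (hα : 0 < α) :
    ∃ C : ℝ, 0 < C ∧ ∀ N K t : ℕ, 1 ≤ K → (K : ℝ) ≤ α * N → 1 ≤ t → (t : ℝ) ^ 6 ≤ N →
      (∑ s : Fin K → Fin N → Bool,
          (((Omega (toSign s)) ^ t)ᵀ * (Omega (toSign s)) ^ t).trace) / 2 ^ (K * N) ≤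
        (N : ℝ) ^ (2 * t + 2) * α ^ (t + 1) * (1 + C * (t : ℝ) ^ 6 / N) := by
  classical
  refine ⟨momentConst (min 1 α), momentConst_pos (lt_min one_pos hα), fun N K t hK hKN ht htN => ?_⟩
  obtain ⟨h, rfl⟩ := Nat.exists_eq_add_of_le' ht
  have hone : (1 : ℝ) ≤ N := (one_le_pow₀ (mod_cast ht)).trans htN
  have hβN : 1 ≤ min 1 α * N := by
    rw [min_mul_of_nonneg _ _ (by positivity), one_mul]
    exact le_min hone (le_trans (mod_cast hK) hKN)
  let m : Fin (2 * h + 1) := ⟨h, by lia⟩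
  have hweight := sum_isAdmissible_pairingWeight_le (m := m) (lt_min one_pos hα) (min_le_left 1 α)
    (min_le_right 1 α) hKN hβN htN
  have hcard := card_isNonbacktracking_even_le (I := Fin K) (A := Fin N) m
  rw [Fintype.card_fin, Fintype.card_fin] at hcard
  rw [div_le_iff₀ (by positivity)]
  calc _ ≤ _ := sum_trace_le m (b := h + 1) (by simp only [m]; lia)
    _ ≤ α * N * N * 2 ^ (K * N) * (α ^ (h + 1) * N ^ (2 * (h + 1)) *
        (1 + momentConst (min 1 α) * ((h + 1 : ℕ) : ℝ) ^ 6 / N)) := by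
      gcongr
      exact le_trans (mod_cast hcard) hweight
    _ = _ := by ring

theorem pow_six_le_of_le_rpow {N t : ℝ} (hN : 0 ≤ N) (ht : 0 ≤ t)
    (h : t ≤ (N / 1000) ^ ((1 : ℝ) / 6)) : t ^ 6 ≤ N := by
  calc t ^ 6
    _ ≤ ((N / 1000) ^ ((1 : ℝ) / 6)) ^ 6 := by gcongr
    _ = N / 1000 := by
      rw [← Real.rpow_mul_natCast (by positivity)]
      norm_num
    _ ≤ N := div_le_self hN (by norm_num)

/-- **Lemma 2.** For each α > 0 and κ > 1 there exist N₀ and C(α,κ) > 0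
such that for N > N₀, 1 ≤ K ≤ αN and 1 ≤ t ≤ (N/1000)^{1/6},
E Tr[(Ωᵗ)ᵀ Ωᵗ] ≤ N^{2t+2} α^{t+1} (1 + C t⁶ κᵗ / N), the expectation being the uniform
average over the 2^{KN} sign matrices. -/
theorem trace_moment_bound (α κ : ℝ) (hα : 0 < α) (hκ : 1 < κ) :
    ∃ N₀ : ℕ, 0 < N₀ ∧ ∃ C : ℝ, 0 < C ∧
      ∀ N K t : ℕ, N₀ < N → 1 ≤ K → (K : ℝ) ≤ α * N → 1 ≤ t →
        (t : ℝ) ≤ ((N : ℝ) / 1000) ^ ((1 : ℝ) / 6) →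
        (∑ s : Fin K → Fin N → Bool,
            (((Omega (toSign s)) ^ t)ᵀ * (Omega (toSign s)) ^ t).trace) / 2 ^ (K * N) ≤
          (N : ℝ) ^ (2 * t + 2) * α ^ (t + 1) *
            (1 + C * (t : ℝ) ^ 6 * κ ^ t / N) := by
  obtain ⟨C, hC, hbound⟩ := trace_moment_bound_general α hα
  refine ⟨1, one_pos, C, hC, fun N K t _ hK hKN ht htN => ?_⟩
  refine (hbound N K t hK hKN ht (pow_six_le_of_le_rpow N.cast_nonneg t.cast_nonneg htN)).trans ?_
  gcongr ?_ * (1 + ?_ / _)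
  exact le_mul_of_one_le_right (by positivity) (one_le_pow₀ hκ.le)
end

section
/- Fix σ > 0 and α > 0. For each integer N ≥ 2 set K = ⌈αN⌉, and let the entries s_{ia} (i ∈ [K], a ∈ [N]) be i.i.d. uniform on {+1, −1}. Let λ*_N > 1 be the unique positive fixed point of λ ↦ 1 + ((N−1)/N)/(σ² + ((K−1)/N)/λ), set λ̂*_N = σ² + ((K−1)/N)/λ*_N and L^{(∞)}_N = 1 + 1/λ̂*_N. Define δ_i = 1/L^{(∞)}_N − [(I_K + σ^{−2}·S̃ᵀS̃)⁻¹]_{ii} and D = (1/K)·Σ_{i=1}^K δ_i². Then D → 0 in probability as N → ∞; that is, for every ε > 0, P(D > ε) → 0 as N → ∞. -/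
open Matrix

/-- The finite-size BP variance fixed-point map λ ↦ 1 + ((N−1)/N)/(σ² + ((K−1)/N)/λ). -/
noncomputable def bpVarMap (σ : ℝ) (K N : ℕ) (l : ℝ) : ℝ :=
  1 + (((N : ℝ) - 1) / (N : ℝ)) / (σ ^ 2 + (((K : ℝ) - 1) / (N : ℝ)) / l)

/-- λ̂*_N = σ² + ((K−1)/N)/λ*_N. -/
noncomputable def lamHatStar (σ : ℝ) (K N : ℕ) (lamStar : ℝ) : ℝ :=
  σ ^ 2 + (((K : ℝ) - 1) / (N : ℝ)) / lamStar

/-!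
Put `X = σ⁻¹ S̃`, `w = σ²` and `β = K / N`. By the Sherman–Morrison and Woodbury identities the
`i`-th posterior variance is `1 / (1 + qᵢ)`, where `qᵢ = xᵢᵀ (1 + ∑_{j ≠ i} xⱼ xⱼᵀ)⁻¹ xᵢ` is built
from the columns of `X`. The random column `xᵢ` is independent of the matrix in the middle, so
the second moment bound for quadratic forms in random signs makes `qᵢ` concentrate around
`tr (1 + ∑_{j ≠ i} xⱼ xⱼᵀ)⁻¹ / (w N)`, and a rank-one perturbation replaces this by
`ρ = tr (1 + X Xᵀ)⁻¹ / (w N)`, which does not depend on `i`; both mean square errors are `O(1 / N)`.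

It remains to compare `ρ` with `τ = 1 / λ̂*`. Computing the trace of the posterior covariance in two
ways shows that `ρ` solves `w x + β x / (1 + x) = 1` up to `β` times the fluctuation of the `qᵢ`,
and the BP fixed point equation shows that `τ` solves it up to `O(1 / N)`. Both lie in `[0, w⁻¹]`,
where the slope of the left side is at least `w + β / (1 + w⁻¹)²`, so `ρ - τ` is small. Altogether
the mean of `D` is at most `C / N` with `C` depending on `σ` only, whatever the ratio `K / N`, and
Markov's inequality concludes.
-/

open Finset
open scoped BigOperators

lemma posSemidef_mul_transpose {m n : Type*} [Finite m] [Fintype n] (X : Matrix m n ℝ) :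
    (X * Xᵀ).PosSemidef := by
  simpa using posSemidef_self_mul_conjTranspose X

lemma posDef_one_add_mul_transpose {m n : Type*} [Finite m] [DecidableEq m] [Fintype n]
    (X : Matrix m n ℝ) : (1 + X * Xᵀ).PosDef :=
  PosDef.one.add_posSemidef (posSemidef_mul_transpose X)

section GramResolvent

variable {m n : Type*} [Fintype m] [DecidableEq m] [Fintype n]

/-- The resolvent `(1 + X Xᵀ)⁻¹` of the Gram matrix of the rows of `X`. With `X = σ⁻¹ S̃`, the
posterior covariance `(1 + σ⁻² S̃ᵀ S̃)⁻¹` is `gramResolvent Xᵀ`. -/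
noncomputable def gramResolvent (X : Matrix m n ℝ) : Matrix m m ℝ := (1 + X * Xᵀ)⁻¹

/-- The leave-one-out quadratic form `xᵢᵀ (1 + ∑_{j ≠ i} xⱼ xⱼᵀ)⁻¹ xᵢ` in the columns `xⱼ` of `X`.
Column `i` is left out by setting it to zero, so that the index type stays the same. -/
noncomputable def cavityQuad [DecidableEq n] (X : Matrix m n ℝ) (i : n) : ℝ :=
  X.col i ⬝ᵥ gramResolvent (X.updateCol i 0) *ᵥ X.col i

lemma posDef_gramResolvent (X : Matrix m n ℝ) : (gramResolvent X).PosDef :=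
  (posDef_one_add_mul_transpose X).inv

lemma transpose_gramResolvent (X : Matrix m n ℝ) : (gramResolvent X)ᵀ = gramResolvent X :=
  (posDef_gramResolvent X).isHermitian

lemma gramResolvent_mul_one_add (X : Matrix m n ℝ) : gramResolvent X * (1 + X * Xᵀ) = 1 :=
  nonsing_inv_mul _ ((isUnit_iff_isUnit_det _).1 (posDef_one_add_mul_transpose X).isUnit)

lemma posSemidef_gramResolvent_sub_sq (X : Matrix m n ℝ) :
    (gramResolvent X - gramResolvent X * gramResolvent X).PosSemidef := by
  have factor : gramResolvent X - gramResolvent X * gramResolvent X =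
      (gramResolvent X * X) * (gramResolvent X * X)ᵀ := by
    have h := congrArg (· * gramResolvent X) (gramResolvent_mul_one_add X)
    simp only [Matrix.mul_add, Matrix.add_mul, Matrix.mul_one, Matrix.one_mul] at h
    rw [transpose_mul, transpose_gramResolvent, sub_eq_iff_eq_add']
    simpa only [Matrix.mul_assoc] using h.symm
  rw [factor]
  exact posSemidef_mul_transpose _

lemma posSemidef_one_sub_gramResolvent (X : Matrix m n ℝ) :
    (1 - gramResolvent X).PosSemidef := by
  have split : 1 - gramResolvent X = (1 - gramResolvent X) * (1 - gramResolvent X)ᵀ +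
      (gramResolvent X - gramResolvent X * gramResolvent X) := by
    rw [transpose_sub, transpose_one, transpose_gramResolvent]
    noncomm_ring
  rw [split]
  exact (posSemidef_mul_transpose _).add (posSemidef_gramResolvent_sub_sq X)

lemma trace_gramResolvent_nonneg (X : Matrix m n ℝ) : 0 ≤ (gramResolvent X).trace :=
  (posDef_gramResolvent X).posSemidef.trace_nonneg

lemma trace_gramResolvent_le_card (X : Matrix m n ℝ) :
    (gramResolvent X).trace ≤ Fintype.card m := by
  simpa using (posSemidef_one_sub_gramResolvent X).trace_nonneg

lemma sum_sq_gramResolvent_le_card (X : Matrix m n ℝ) :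
    ∑ a, ∑ b, gramResolvent X a b ^ 2 ≤ Fintype.card m := by
  calc ∑ a, ∑ b, gramResolvent X a b ^ 2
      = (gramResolvent X * (gramResolvent X)ᵀ).trace := by
        simp [trace, mul_apply, sq]
    _ ≤ (gramResolvent X).trace := by
        simpa [transpose_gramResolvent] using (posSemidef_gramResolvent_sub_sq X).trace_nonneg
    _ ≤ Fintype.card m := trace_gramResolvent_le_card X

lemma dotProduct_self_gramResolvent_mulVec_le (X : Matrix m n ℝ) (u : m → ℝ) :
    gramResolvent X *ᵥ u ⬝ᵥ gramResolvent X *ᵥ u ≤ u ⬝ᵥ gramResolvent X *ᵥ u := by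
  have h := (posSemidef_gramResolvent_sub_sq X).dotProduct_mulVec_nonneg u
  rw [star_trivial, sub_mulVec, dotProduct_sub, sub_nonneg, ← mulVec_mulVec,
    dotProduct_mulVec, ← mulVec_transpose, transpose_gramResolvent] at h
  exact h

end GramResolvent

lemma inv_add_vecMulVec {m 𝕜 : Type*} [Fintype m] [DecidableEq m] [Field 𝕜] {A : Matrix m m 𝕜}
    (hA : IsUnit A) (u v : m → 𝕜) (huv : 1 + v ⬝ᵥ A⁻¹ *ᵥ u ≠ 0) :
    (A + vecMulVec u v)⁻¹ =
      A⁻¹ - (1 + v ⬝ᵥ A⁻¹ *ᵥ u)⁻¹ • vecMulVec (A⁻¹ *ᵥ u) (v ᵥ* A⁻¹) := by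
  have hdet := (isUnit_iff_isUnit_det A).1 hA
  refine inv_eq_right_inv ?_
  rw [Matrix.add_mul, Matrix.mul_sub, Matrix.mul_sub, mul_nonsing_inv A hdet, vecMulVec_mul,
    Matrix.mul_smul, Matrix.mul_smul, mul_vecMulVec, mulVec_mulVec, mul_nonsing_inv A hdet,
    one_mulVec, vecMulVec_mul_vecMulVec]
  set q := v ⬝ᵥ A⁻¹ *ᵥ u
  ext a b
  simp only [vecMulVec_smul, Matrix.add_apply, Matrix.sub_apply, Matrix.smul_apply, smul_eq_mul]
  field_simp
  ring

lemma mul_transpose_eq_updateCol_zero_add {m n : Type*} [Fintype n] [DecidableEq n]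
    (X : Matrix m n ℝ) (i : n) :
    X * Xᵀ = X.updateCol i 0 * (X.updateCol i 0)ᵀ + vecMulVec (X.col i) (X.col i) := by
  ext a b
  rw [Matrix.add_apply, mul_apply, mul_apply, vecMulVec_apply, col_apply, col_apply,
    ← Fintype.sum_ite_eq' i fun j => X a j * X b j, ← Finset.sum_add_distrib]
  refine Finset.sum_congr rfl fun j _ => ?_
  by_cases hj : j = i <;> simp [hj]

section LeaveOneOut

variable {m n : Type*} [Fintype m] [DecidableEq m] [Fintype n] [DecidableEq n]

lemma cavityQuad_nonneg (X : Matrix m n ℝ) (i : n) : 0 ≤ cavityQuad X i :=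
  (posDef_gramResolvent _).posSemidef.dotProduct_mulVec_nonneg _

lemma gramResolvent_eq_updateCol_sub (X : Matrix m n ℝ) (i : n) :
    gramResolvent X = gramResolvent (X.updateCol i 0) - (1 + cavityQuad X i)⁻¹ •
      vecMulVec (gramResolvent (X.updateCol i 0) *ᵥ X.col i)
        (gramResolvent (X.updateCol i 0) *ᵥ X.col i) := by
  have hq : 1 + cavityQuad X i ≠ 0 := by linarith [cavityQuad_nonneg X i]
  have h := inv_add_vecMulVec (posDef_one_add_mul_transpose (X.updateCol i 0)).isUnit
    (X.col i) (X.col i) hq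
  rw [add_assoc, ← mul_transpose_eq_updateCol_zero_add, ← mulVec_transpose] at h
  change gramResolvent X = gramResolvent _ - _ • vecMulVec _ ((gramResolvent _)ᵀ *ᵥ _) at h
  rwa [transpose_gramResolvent] at h

lemma gramResolvent_mulVec_col (X : Matrix m n ℝ) (i : n) :
    gramResolvent X *ᵥ X.col i =
      (1 + cavityQuad X i)⁻¹ • gramResolvent (X.updateCol i 0) *ᵥ X.col i := by
  have hq : 1 + cavityQuad X i ≠ 0 := by linarith [cavityQuad_nonneg X i]
  rw [gramResolvent_eq_updateCol_sub X i, sub_mulVec, smul_mulVec, vecMulVec_mulVec,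
    dotProduct_comm]
  change _ - _ • MulOpposite.op (cavityQuad X i) • _ = _
  ext a
  simp only [op_smul_eq_smul, Pi.sub_apply, Pi.smul_apply, smul_eq_mul]
  field_simp
  ring

lemma abs_trace_gramResolvent_updateCol_sub_le (X : Matrix m n ℝ) (i : n) :
    |(gramResolvent (X.updateCol i 0)).trace - (gramResolvent X).trace| ≤ 1 := by
  set v := gramResolvent (X.updateCol i 0) *ᵥ X.col i with hv
  have trace_sub : (gramResolvent (X.updateCol i 0)).trace - (gramResolvent X).trace =
      (v ⬝ᵥ v) / (1 + cavityQuad X i) := by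
    rw [gramResolvent_eq_updateCol_sub X i, Matrix.trace_sub, trace_smul, trace_vecMulVec, ← hv,
      smul_eq_mul]
    ring
  have hvq : v ⬝ᵥ v ≤ cavityQuad X i := dotProduct_self_gramResolvent_mulVec_le _ _
  have hv0 : 0 ≤ v ⬝ᵥ v := by simpa using dotProduct_star_self_nonneg v
  have hq : 0 < 1 + cavityQuad X i := by linarith
  rw [trace_sub, abs_of_nonneg (by positivity), div_le_one hq]
  linarith

lemma gramResolvent_transpose (X : Matrix m n ℝ) :
    gramResolvent Xᵀ = 1 - Xᵀ * gramResolvent X * X := by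
  have h := add_mul_mul_inv_eq_sub (1 : Matrix n n ℝ) Xᵀ (1 : Matrix m m ℝ) X
    isUnit_one isUnit_one (by simpa using (posDef_one_add_mul_transpose X).isUnit)
  simpa [gramResolvent] using h

lemma gramResolvent_transpose_apply_self (X : Matrix m n ℝ) (i : n) :
    gramResolvent Xᵀ i i = (1 + cavityQuad X i)⁻¹ := by
  have hq : 1 + cavityQuad X i ≠ 0 := by linarith [cavityQuad_nonneg X i]
  have quad : (Xᵀ * gramResolvent X * X) i i = X.col i ⬝ᵥ gramResolvent X *ᵥ X.col i := by
    rw [Matrix.mul_assoc, mul_apply]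
    rfl
  rw [gramResolvent_transpose, Matrix.sub_apply, one_apply_eq, quad, gramResolvent_mulVec_col,
    dotProduct_smul, smul_eq_mul]
  change 1 - _ * cavityQuad X i = _
  field_simp
  ring

lemma trace_gramResolvent_transpose (X : Matrix m n ℝ) :
    (gramResolvent Xᵀ).trace =
      Fintype.card n - Fintype.card m + (gramResolvent X).trace := by
  have h : (gramResolvent X * (X * Xᵀ)).trace = Fintype.card m - (gramResolvent X).trace := by
    rw [eq_sub_iff_add_eq', ← Matrix.trace_one, ← gramResolvent_mul_one_add X, Matrix.mul_add,
      Matrix.trace_add, Matrix.mul_one]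
  rw [gramResolvent_transpose, Matrix.trace_sub, Matrix.trace_one, Matrix.mul_assoc,
    Matrix.trace_mul_comm, Matrix.mul_assoc, h]
  ring

end LeaveOneOut

/-- The residual `w τ + β τ / (1 + τ) - 1` of the asymptotic self-consistency equation for the
common value `τ` of the leave-one-out quadratic forms, with noise level `w = σ²` and load
`β = K / N`. The posterior variance belonging to `τ` is `1 / (1 + τ)`. -/
noncomputable def varResidual (w β τ : ℝ) : ℝ := w * τ + β * (τ / (1 + τ)) - 1

lemma inv_one_add_sub_inv_one_add_sq_le {x y : ℝ} (hx : 0 ≤ x) (hy : 0 ≤ y) :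
    ((1 + x)⁻¹ - (1 + y)⁻¹) ^ 2 ≤ (x - y) ^ 2 := by
  have quotient : (1 + x)⁻¹ - (1 + y)⁻¹ = (y - x) / ((1 + x) * (1 + y)) := by
    field_simp
    ring
  have one_le : 1 ≤ ((1 + x) * (1 + y)) ^ 2 := one_le_pow₀ (by nlinarith)
  rw [quotient, div_pow, sub_sq_comm y x]
  exact div_le_self (sq_nonneg _) one_le

lemma varResidual_sub_varResidual (w β : ℝ) {x y : ℝ} (hx : 0 ≤ x) (hy : 0 ≤ y) :
    varResidual w β x - varResidual w β y = (w + β / ((1 + x) * (1 + y))) * (x - y) := by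
  unfold varResidual
  field_simp
  ring

-- The slope of the residual is at least `w + β / (1 + w⁻¹)²`, which dominates both the scale `β` of
-- the residual at `x` and the scale `w` of that at `y`: this makes the bound uniform in `β`.
lemma sub_sq_le_varResidual_sq {w β x y : ℝ} (hw : 0 < w) (hβ : 0 < β)
    (hx : 0 ≤ x) (hxw : x ≤ w⁻¹) (hy : 0 ≤ y) (hyw : y ≤ w⁻¹) :
    (x - y) ^ 2 ≤
      2 * ((1 + w⁻¹) ^ 4 * (varResidual w β x / β) ^ 2 + (varResidual w β y / w) ^ 2) := by
  set slope := w + β / ((1 + x) * (1 + y)) with hslope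
  have hden : (1 + x) * (1 + y) ≤ (1 + w⁻¹) ^ 2 := by rw [sq]; gcongr
  have hwβ : w ≤ slope := by rw [hslope]; linarith [show 0 ≤ β / ((1 + x) * (1 + y)) by positivity]
  have hβslope : β ≤ (1 + w⁻¹) ^ 2 * slope := by
    calc β = (1 + x) * (1 + y) * (β / ((1 + x) * (1 + y))) := by field_simp
      _ ≤ (1 + w⁻¹) ^ 2 * slope := by
        gcongr
        exact le_add_of_nonneg_left hw.le
  have hpos : 0 < slope := hw.trans_le hwβ
  have hxy : x - y = varResidual w β x / slope - varResidual w β y / slope := by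
    rw [← sub_div, varResidual_sub_varResidual w β hx hy, mul_div_cancel_left₀ _ hpos.ne']
  have residual_x :
      (varResidual w β x / slope) ^ 2 ≤ (1 + w⁻¹) ^ 4 * (varResidual w β x / β) ^ 2 := by
    rw [div_pow, div_pow, ← mul_div_assoc, div_le_div_iff₀ (by positivity) (by positivity)]
    calc varResidual w β x ^ 2 * β ^ 2
        ≤ varResidual w β x ^ 2 * ((1 + w⁻¹) ^ 2 * slope) ^ 2 := by gcongr
      _ = (1 + w⁻¹) ^ 4 * varResidual w β x ^ 2 * slope ^ 2 := by ring
  have residual_y : (varResidual w β y / slope) ^ 2 ≤ (varResidual w β y / w) ^ 2 := by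
    rw [div_pow, div_pow]
    gcongr
  calc (x - y) ^ 2
      ≤ 2 * ((varResidual w β x / slope) ^ 2 + (-(varResidual w β y / slope)) ^ 2) := by
        rw [hxy, sub_eq_add_neg]
        exact add_sq_le
    _ ≤ 2 * ((1 + w⁻¹) ^ 4 * (varResidual w β x / β) ^ 2 + (varResidual w β y / w) ^ 2) := by
        rw [neg_sq]
        gcongr

section CavityMean

variable {m n : Type*} [Fintype m] [DecidableEq m] [Fintype n]

/-- `tr (1 + X Xᵀ)⁻¹ / (w N)`, where `N` is the number of rows of `X`. It is the common value around
which the leave-one-out quadratic forms concentrate when `X = σ⁻¹ S̃` and `w = σ²`. -/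
noncomputable def cavityMean (w : ℝ) (X : Matrix m n ℝ) : ℝ :=
  (gramResolvent X).trace / (w * Fintype.card m)

lemma cavityMean_nonneg {w : ℝ} (hw : 0 < w) (X : Matrix m n ℝ) : 0 ≤ cavityMean w X :=
  div_nonneg (trace_gramResolvent_nonneg X) (by positivity)

lemma cavityMean_le_inv {w : ℝ} (hw : 0 < w) (X : Matrix m n ℝ) : cavityMean w X ≤ w⁻¹ := by
  refine div_le_of_le_mul₀ (by positivity) (by positivity) ?_
  rw [inv_mul_cancel_left₀ hw.ne']
  exact trace_gramResolvent_le_card X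

lemma cavityMean_updateCol_sub_cavityMean_sq_le [DecidableEq n] (w : ℝ)
    (X : Matrix m n ℝ) (i : n) :
    (cavityMean w (X.updateCol i 0) - cavityMean w X) ^ 2 ≤ (w * Fintype.card m)⁻¹ ^ 2 := by
  rw [cavityMean, cavityMean, ← sub_div, div_eq_mul_inv, mul_pow]
  refine mul_le_of_le_one_left (sq_nonneg _) ?_
  rw [sq_le_one_iff_abs_le_one]
  exact abs_trace_gramResolvent_updateCol_sub_le X i

end CavityMean

section SelfConsistency

variable {m n : Type*} [Fintype m] [DecidableEq m] [Nonempty m]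
  [Fintype n] [DecidableEq n] [Nonempty n]

lemma varResidual_cavityMean {w : ℝ} (hw : 0 < w) (X : Matrix m n ℝ) :
    varResidual w (Fintype.card n / Fintype.card m) (cavityMean w X) =
      Fintype.card n / Fintype.card m *
        𝔼 i, ((1 + cavityQuad X i)⁻¹ - (1 + cavityMean w X)⁻¹) := by
  have htrace : (gramResolvent X).trace = w * Fintype.card m * cavityMean w X := by
    rw [cavityMean]; field_simp
  have hmean : 𝔼 i, (1 + cavityQuad X i)⁻¹ =
      (Fintype.card n - Fintype.card m + (gramResolvent X).trace) / Fintype.card n := by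
    rw [← trace_gramResolvent_transpose, Fintype.expect_eq_sum_div_card, trace]
    simp only [diag_apply, gramResolvent_transpose_apply_self]
  have := cavityMean_nonneg hw X
  rw [Finset.expect_sub_distrib, Fintype.expect_const, hmean, htrace, varResidual]
  field_simp
  ring

lemma sq_varResidual_cavityMean_le {w : ℝ} (hw : 0 < w) (X : Matrix m n ℝ) :
    (varResidual w (Fintype.card n / Fintype.card m) (cavityMean w X) /
      (Fintype.card n / Fintype.card m)) ^ 2 ≤ 𝔼 i, (cavityQuad X i - cavityMean w X) ^ 2 := by
  have hβ : (Fintype.card n / Fintype.card m : ℝ) ≠ 0 := by simp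
  rw [varResidual_cavityMean hw, mul_div_cancel_left₀ _ hβ]
  calc (𝔼 i, ((1 + cavityQuad X i)⁻¹ - (1 + cavityMean w X)⁻¹)) ^ 2
      ≤ 𝔼 i, ((1 + cavityQuad X i)⁻¹ - (1 + cavityMean w X)⁻¹) ^ 2 := by
        simpa using expect_mul_sq_le_sq_mul_sq univ
          (fun i => (1 + cavityQuad X i)⁻¹ - (1 + cavityMean w X)⁻¹) 1
    _ ≤ 𝔼 i, (cavityQuad X i - cavityMean w X) ^ 2 :=
        expect_le_expect fun i _ =>
          inv_one_add_sub_inv_one_add_sq_le (cavityQuad_nonneg X i) (cavityMean_nonneg hw X)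

lemma expect_inv_one_add_sub_gramResolvent_sq_le {w τ : ℝ} (hw : 0 < w) (hτ : 0 ≤ τ)
    (hτw : τ ≤ w⁻¹) (X : Matrix m n ℝ) :
    𝔼 i, ((1 + τ)⁻¹ - gramResolvent Xᵀ i i) ^ 2 ≤
      (2 + 4 * (1 + w⁻¹) ^ 4) * 𝔼 i, (cavityQuad X i - cavityMean w X) ^ 2 +
        4 * (varResidual w (Fintype.card n / Fintype.card m) τ / w) ^ 2 := by
  set E := 𝔼 i, (cavityQuad X i - cavityMean w X) ^ 2
  have stable : (cavityMean w X - τ) ^ 2 ≤ 2 * ((1 + w⁻¹) ^ 4 * E +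
      (varResidual w (Fintype.card n / Fintype.card m) τ / w) ^ 2) := by
    refine (sub_sq_le_varResidual_sq (β := Fintype.card n / Fintype.card m) hw (by positivity)
      (cavityMean_nonneg hw X) (cavityMean_le_inv hw X) hτ hτw).trans ?_
    gcongr
    exact sq_varResidual_cavityMean_le hw X
  calc 𝔼 i, ((1 + τ)⁻¹ - gramResolvent Xᵀ i i) ^ 2
      ≤ 𝔼 i, 2 * ((cavityQuad X i - cavityMean w X) ^ 2 + (cavityMean w X - τ) ^ 2) := by
        refine expect_le_expect fun i _ => ?_
        rw [gramResolvent_transpose_apply_self, sub_sq_comm]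
        refine (inv_one_add_sub_inv_one_add_sq_le (cavityQuad_nonneg X i) hτ).trans ?_
        rw [← sub_add_sub_cancel _ (cavityMean w X)]
        exact add_sq_le
    _ = 2 * (E + (cavityMean w X - τ) ^ 2) := by
        rw [← mul_expect, expect_add_distrib, Fintype.expect_const]
    _ ≤ (2 + 4 * (1 + w⁻¹) ^ 4) * E +
          4 * (varResidual w (Fintype.card n / Fintype.card m) τ / w) ^ 2 := by linarith

end SelfConsistency

section FixedPoint

variable {σ l : ℝ} {K N : ℕ}

lemma sq_le_lamHatStar (σ : ℝ) (N : ℕ) (hK : 0 < K) (hl : 0 < l) :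
    σ ^ 2 ≤ lamHatStar σ K N l := by
  have hK' : (0 : ℝ) ≤ K - 1 := sub_nonneg.2 (mod_cast hK)
  exact le_add_of_nonneg_right (by positivity)

lemma lamHatStar_pos (hσ : σ ≠ 0) (N : ℕ) (hK : 0 < K) (hl : 0 < l) : 0 < lamHatStar σ K N l :=
  (by positivity : 0 < σ ^ 2).trans_le (sq_le_lamHatStar σ N hK hl)

lemma varResidual_inv_lamHatStar (hσ : σ ≠ 0) (hK : 0 < K) (hN : 0 < N) (hl : 0 < l)
    (hfix : bpVarMap σ K N l = l) :
    varResidual (σ ^ 2) (K / N) (lamHatStar σ K N l)⁻¹ =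
      σ ^ 2 * (lamHatStar σ K N l)⁻¹ ^ 2 / (N * (1 + (lamHatStar σ K N l)⁻¹)) := by
  have hh := lamHatStar_pos hσ N hK hl
  set τ := (lamHatStar σ K N l)⁻¹ with hτ
  have hτ0 : 0 < τ := inv_pos.2 hh
  have precision : 1 + (N - 1) / N * τ = l := by rw [hτ, ← div_eq_mul_inv]; exact hfix
  have normalization : (σ ^ 2 + (K - 1) / N / l) * τ = 1 := mul_inv_cancel₀ hh.ne'
  have balance : (1 - σ ^ 2 * τ) * l = (K - 1) / N * τ := by
    field_simp at normalization ⊢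
    linarith
  rw [← precision] at balance
  unfold varResidual
  field_simp at balance ⊢
  linarith

lemma varResidual_inv_lamHatStar_div_sq_le (hσ : σ ≠ 0) (hK : 0 < K) (hN : 0 < N) (hl : 0 < l)
    (hfix : bpVarMap σ K N l = l) :
    (varResidual (σ ^ 2) (K / N) (lamHatStar σ K N l)⁻¹ / σ ^ 2) ^ 2 ≤ (σ ^ 2 * N)⁻¹ ^ 2 := by
  have hw : 0 < σ ^ 2 := by positivity
  have hh := lamHatStar_pos hσ N hK hl
  have hτw : (lamHatStar σ K N l)⁻¹ ≤ (σ ^ 2)⁻¹ := inv_anti₀ hw (sq_le_lamHatStar σ N hK hl)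
  rw [varResidual_inv_lamHatStar hσ hK hN hl hfix]
  set τ := (lamHatStar σ K N l)⁻¹
  have hτ : 0 < τ := inv_pos.2 hh
  gcongr
  calc σ ^ 2 * τ ^ 2 / (N * (1 + τ)) / σ ^ 2 = τ / (1 + τ) * τ / N := by field_simp
    _ ≤ 1 * (σ ^ 2)⁻¹ / N := by
      gcongr
      exact div_le_one_of_le₀ (by linarith) (by positivity)
    _ = (σ ^ 2 * N)⁻¹ := by rw [one_mul, mul_inv, div_eq_mul_inv]

end FixedPoint

section Signs

variable {ι : Type*}

/-- The sign vector in `{±1}^ι` encoded by `x`, so that a uniform `x` gives independent uniform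
signs. -/
def signVec (x : ι → Bool) : ι → ℝ := fun a => if x a then 1 else -1

lemma signVec_mul_self (x : ι → Bool) (a : ι) : signVec x a * signVec x a = 1 := by
  cases h : x a <;> simp [signVec, h]

variable [DecidableEq ι]

lemma signVec_update_not (x : ι → Bool) (a : ι) :
    signVec (Function.update x a !x a) = Function.update (signVec x) a (-signVec x a) := by
  ext b
  obtain rfl | hb := eq_or_ne b a
  · cases h : x b <;> simp [signVec, h]
  · simp [signVec, hb]

variable [Fintype ι]

lemma expect_eq_zero_of_update_not (a : ι) {F : (ι → Bool) → ℝ}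
    (hF : ∀ x, F (Function.update x a !x a) = -F x) : 𝔼 x, F x = 0 := by
  have flip : Function.Involutive fun x : ι → Bool => Function.update x a !x a := fun x => by simp
  have : 𝔼 x, F x = 𝔼 x, -F x :=
    (Fintype.expect_equiv flip.toPerm _ _ fun x => (hF x).symm).symm
  rw [expect_neg_distrib] at this
  linarith

lemma expect_signVec_mul_eq_zero {a b c d : ι} (hb : b ≠ a) (hc : c ≠ a) (hd : d ≠ a) :
    𝔼 x, signVec x a * signVec x b * (signVec x c * signVec x d) = 0 :=
  expect_eq_zero_of_update_not a fun x => by simp [signVec_update_not, hb, hc, hd]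

lemma expect_signVec_mul_of_ne {a b c d : ι} (hab : a ≠ b) (hcd : c ≠ d) :
    𝔼 x, signVec x a * signVec x b * (signVec x c * signVec x d) =
      (if c = a then if d = b then 1 else 0 else 0) +
        if d = a then if c = b then 1 else 0 else 0 := by
  by_cases hca : c = a
  · subst hca
    by_cases hdb : d = b
    · subst hdb
      simp [hab.symm, mul_mul_mul_comm _ _ (signVec _ c), signVec_mul_self]
    · simpa [hdb, hcd.symm, mul_comm (signVec _ c) (signVec _ b)] using
        expect_signVec_mul_eq_zero hab hab hdb
  by_cases hda : d = a
  · subst hda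
    by_cases hcb : c = b
    · subst hcb
      simp [hca, mul_comm (signVec _ c), mul_mul_mul_comm _ _ (signVec _ d), signVec_mul_self]
    · simpa [hca, hcb, mul_comm (signVec _ d) (signVec _ b)] using
        expect_signVec_mul_eq_zero hab hcb hab
  simpa [hca, hda] using expect_signVec_mul_eq_zero hab.symm hca hda

lemma expect_sq_signVec_quadForm {A : Matrix ι ι ℝ} (hA : ∀ a, A a a = 0) :
    𝔼 x, (signVec x ⬝ᵥ A *ᵥ signVec x) ^ 2 = ∑ a, ∑ b, (A a b ^ 2 + A a b * A b a) := by
  have expand (x : ι → Bool) : (signVec x ⬝ᵥ A *ᵥ signVec x) ^ 2 = ∑ a, ∑ b, ∑ c, ∑ d,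
      A a b * A c d * (signVec x a * signVec x b * (signVec x c * signVec x d)) := by
    have quad : signVec x ⬝ᵥ A *ᵥ signVec x = ∑ a, ∑ b, A a b * (signVec x a * signVec x b) := by
      simp only [dotProduct, mulVec, Finset.mul_sum, mul_left_comm]
    simp only [quad, sq, Finset.sum_mul]
    simp only [Finset.mul_sum, mul_mul_mul_comm]
  have moment (a b c d : ι) :
      A a b * A c d * 𝔼 x, signVec x a * signVec x b * (signVec x c * signVec x d) =
        A a b * A c d * ((if c = a then if d = b then 1 else 0 else 0) +
          if d = a then if c = b then 1 else 0 else 0) := by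
    obtain rfl | hab := eq_or_ne a b
    · simp [hA]
    obtain rfl | hcd := eq_or_ne c d
    · simp [hA]
    rw [expect_signVec_mul_of_ne hab hcd]
  simp only [expand, expect_sum_comm, ← mul_expect, moment]
  refine Finset.sum_congr rfl fun a _ => Finset.sum_congr rfl fun b _ => ?_
  simp [mul_add, Finset.sum_add_distrib, sq]

lemma expect_signVec_quadForm_sub_trace_sq_le (M : Matrix ι ι ℝ) :
    𝔼 x, (signVec x ⬝ᵥ M *ᵥ signVec x - M.trace) ^ 2 ≤ 2 * ∑ a, ∑ b, M a b ^ 2 := by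
  set A := M - diagonal M.diag with hA
  have centred (x : ι → Bool) :
      signVec x ⬝ᵥ M *ᵥ signVec x - M.trace = signVec x ⬝ᵥ A *ᵥ signVec x := by
    rw [hA, sub_mulVec, dotProduct_sub, sub_right_inj, trace, dotProduct]
    simp [mulVec_diagonal, mul_left_comm _ (M _ _), signVec_mul_self]
  have entry_le (a b : ι) : A a b ^ 2 ≤ M a b ^ 2 := by
    obtain rfl | hab := eq_or_ne a b
    · simpa [hA] using sq_nonneg (M a a)
    · simp [hA, hab]
  calc 𝔼 x, (signVec x ⬝ᵥ M *ᵥ signVec x - M.trace) ^ 2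
      = ∑ a, ∑ b, (A a b ^ 2 + A a b * A b a) := by
        simp only [centred]
        exact expect_sq_signVec_quadForm fun a => by simp [hA]
    _ ≤ ∑ a, ∑ b, (A a b ^ 2 + (A a b ^ 2 + A b a ^ 2) / 2) := by
        gcongr with a _ b _
        linarith [two_mul_le_add_sq (A a b) (A b a)]
    _ = 2 * ∑ a, ∑ b, A a b ^ 2 := by
        simp only [Finset.sum_add_distrib, ← Finset.sum_div]
        rw [Finset.sum_comm (f := fun a b => A b a ^ 2)]
        ring
    _ ≤ 2 * ∑ a, ∑ b, M a b ^ 2 := by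
        gcongr 2 * ∑ a, ∑ b, ?_
        exact entry_le _ _

end Signs

lemma expect_expect_update {ι α M : Type*} [Fintype ι] [DecidableEq ι] [Fintype α] [Nonempty α]
    [AddCommMonoid M] [Module ℚ≥0 M] (i : ι) (F : (ι → α) → M) :
    𝔼 s, 𝔼 x, F (Function.update s i x) = 𝔼 s, F s := by
  have swap : Function.Involutive fun p : (ι → α) × α => (Function.update p.1 i p.2, p.1 i) :=
    fun p => by simp
  calc 𝔼 s, 𝔼 x, F (Function.update s i x)
      = 𝔼 p : (ι → α) × α, F (Function.update p.1 i p.2) := by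
        rw [← univ_product_univ, expect_product]
    _ = 𝔼 p : (ι → α) × α, F p.1 :=
        Fintype.expect_equiv swap.toPerm _ _ fun p => rfl
    _ = 𝔼 s, F s := by
        rw [← univ_product_univ, expect_product]
        simp only [Fintype.expect_const]

lemma card_lt_div_card_le_expect_div {Ω : Type*} [Fintype Ω] {D : Ω → ℝ} (hD : ∀ s, 0 ≤ D s)
    {ε : ℝ} (hε : 0 < ε) :
    (Nat.card {s // ε < D s} : ℝ) / Fintype.card Ω ≤ (𝔼 s, D s) / ε := by
  classical
  rw [Fintype.expect_eq_sum_div_card, div_right_comm]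
  gcongr
  rw [le_div_iff₀ hε, Nat.card_eq_fintype_card, Fintype.card_subtype, ← nsmul_eq_mul]
  calc #{s | ε < D s} • ε ≤ ∑ s with ε < D s, D s :=
        card_nsmul_le_sum _ _ _ fun s hs => (mem_filter.1 hs).2.le
    _ ≤ ∑ s, D s := sum_le_univ_sum_of_nonneg hD

lemma inv_mul_natCast_sq_le (w : ℝ) (N : ℕ) : (w * N)⁻¹ ^ 2 ≤ 1 / (w ^ 2 * N) := by
  rw [mul_inv, mul_pow, one_div, mul_inv, inv_pow]
  gcongr
  exact pow_le_of_le_one (by positivity) (Nat.cast_inv_le_one N) two_ne_zero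

section Signatures

variable {K N : ℕ}

/-- The matrix `σ⁻¹ S̃` of signatures, scaled to unit noise. -/
noncomputable def scaledSignatures (σ : ℝ) (s : Fin K → Fin N → Bool) :
    Matrix (Fin N) (Fin K) ℝ :=
  σ⁻¹ • Stilde (toSign s)

lemma scaledSignatures_col (σ : ℝ) (s : Fin K → Fin N → Bool) (i : Fin K) :
    (scaledSignatures σ s).col i = (σ⁻¹ / √N) • signVec (s i) := by
  ext a
  simp [scaledSignatures, Stilde, toSign, signVec, div_eq_mul_inv]

lemma scaledSignatures_update_updateCol (σ : ℝ) (s : Fin K → Fin N → Bool) (i : Fin K)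
    (x : Fin N → Bool) : (scaledSignatures σ (Function.update s i x)).updateCol i 0 =
      (scaledSignatures σ s).updateCol i 0 := by
  ext a j
  by_cases hj : j = i <;> simp [hj, scaledSignatures, Stilde, toSign]

lemma cavityQuad_sub_cavityMean_updateCol (σ : ℝ) (s : Fin K → Fin N → Bool) (i : Fin K) :
    cavityQuad (scaledSignatures σ s) i -
        cavityMean (σ ^ 2) ((scaledSignatures σ s).updateCol i 0) =
      (signVec (s i) ⬝ᵥ gramResolvent ((scaledSignatures σ s).updateCol i 0) *ᵥ signVec (s i) -
        (gramResolvent ((scaledSignatures σ s).updateCol i 0)).trace) / (σ ^ 2 * N) := by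
  have scale : σ⁻¹ / √N * (σ⁻¹ / √N) = (σ ^ 2 * N)⁻¹ := by
    rw [div_mul_div_comm, Real.mul_self_sqrt N.cast_nonneg, div_eq_mul_inv, mul_inv, sq, mul_inv]
  rw [cavityQuad, scaledSignatures_col, mulVec_smul, dotProduct_smul, smul_dotProduct, smul_smul,
    scale, cavityMean, Fintype.card_fin, sub_div, smul_eq_mul, inv_mul_eq_div]

lemma expect_cavityQuad_sub_cavityMean_updateCol_sq_le (σ : ℝ) (i : Fin K) :
    𝔼 s : Fin K → Fin N → Bool, (cavityQuad (scaledSignatures σ s) i -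
        cavityMean (σ ^ 2) ((scaledSignatures σ s).updateCol i 0)) ^ 2 ≤
      2 / ((σ ^ 2) ^ 2 * N) := by
  rw [← expect_expect_update i]
  refine expect_le univ_nonempty fun s _ => ?_
  simp only [cavityQuad_sub_cavityMean_updateCol]
  simp only [scaledSignatures_update_updateCol, Function.update_self]
  set R := gramResolvent ((scaledSignatures σ s).updateCol i 0)
  calc 𝔼 x, ((signVec x ⬝ᵥ R *ᵥ signVec x - R.trace) / (σ ^ 2 * N)) ^ 2
      = (𝔼 x, (signVec x ⬝ᵥ R *ᵥ signVec x - R.trace) ^ 2) / (σ ^ 2 * N) ^ 2 := by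
        simp only [div_pow, expect_div]
    _ ≤ 2 * N / (σ ^ 2 * N) ^ 2 := by
        gcongr
        refine (expect_signVec_quadForm_sub_trace_sq_le R).trans ?_
        gcongr
        simpa using sum_sq_gramResolvent_le_card ((scaledSignatures σ s).updateCol i 0)
    _ = 2 / ((σ ^ 2) ^ 2 * N) := by
        obtain rfl | hN := N.eq_zero_or_pos
        · simp
        · field_simp

lemma expect_cavityQuad_sub_cavityMean_sq_le (σ : ℝ) (i : Fin K) :
    𝔼 s : Fin K → Fin N → Bool,
        (cavityQuad (scaledSignatures σ s) i - cavityMean (σ ^ 2) (scaledSignatures σ s)) ^ 2 ≤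
      6 / ((σ ^ 2) ^ 2 * N) := by
  set X := scaledSignatures (K := K) (N := N) σ
  calc 𝔼 s, (cavityQuad (X s) i - cavityMean (σ ^ 2) (X s)) ^ 2
      ≤ 𝔼 s, 2 * ((cavityQuad (X s) i - cavityMean (σ ^ 2) ((X s).updateCol i 0)) ^ 2 +
          1 / ((σ ^ 2) ^ 2 * N)) := by
        refine expect_le_expect fun s _ => ?_
        rw [← sub_add_sub_cancel _ (cavityMean (σ ^ 2) ((X s).updateCol i 0))]
        refine add_sq_le.trans ?_
        gcongr
        refine (cavityMean_updateCol_sub_cavityMean_sq_le _ _ _).trans ?_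
        simpa using inv_mul_natCast_sq_le (σ ^ 2) N
    _ ≤ 2 * (2 / ((σ ^ 2) ^ 2 * N) + 1 / ((σ ^ 2) ^ 2 * N)) := by
        rw [← mul_expect, expect_add_distrib, Fintype.expect_const]
        gcongr
        exact expect_cavityQuad_sub_cavityMean_updateCol_sq_le σ i
    _ = 6 / ((σ ^ 2) ^ 2 * N) := by ring

lemma gramResolvent_transpose_scaledSignatures (σ : ℝ) (s : Fin K → Fin N → Bool) :
    gramResolvent (scaledSignatures σ s)ᵀ =
      (1 + (σ ^ 2)⁻¹ • ((Stilde (toSign s))ᵀ * Stilde (toSign s)))⁻¹ := by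
  rw [gramResolvent, scaledSignatures, transpose_transpose, transpose_smul, Matrix.smul_mul,
    Matrix.mul_smul, smul_smul, ← mul_inv, ← sq]

end Signatures

section Consistency

variable {σ l : ℝ} {K N : ℕ}

/-- The mean square discrepancy `D` between the posterior variances and their BP estimate, as a
function of the signatures. -/
noncomputable def varDiscrepancy (σ l : ℝ) (s : Fin K → Fin N → Bool) : ℝ :=
  𝔼 i, ((1 + (lamHatStar σ K N l)⁻¹)⁻¹ - gramResolvent (scaledSignatures σ s)ᵀ i i) ^ 2

lemma varDiscrepancy_nonneg (σ l : ℝ) (s : Fin K → Fin N → Bool) : 0 ≤ varDiscrepancy σ l s :=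
  expect_nonneg fun _ _ => sq_nonneg _

lemma varDiscrepancy_eq_sum (σ l : ℝ) (s : Fin K → Fin N → Bool) :
    varDiscrepancy σ l s = (1 / (K : ℝ)) * ∑ i : Fin K, (1 / (1 + 1 / lamHatStar σ K N l) -
      (((1 + (σ ^ 2)⁻¹ • ((Stilde (toSign s))ᵀ * Stilde (toSign s)) :
        Matrix (Fin K) (Fin K) ℝ))⁻¹ i i)) ^ 2 := by
  simp only [varDiscrepancy, Fintype.expect_eq_sum_div_card, Fintype.card_fin,
    gramResolvent_transpose_scaledSignatures, one_div, div_eq_inv_mul (∑ _, _)]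

lemma expect_varDiscrepancy_le (hσ : σ ≠ 0) (hK : 0 < K) (hN : 0 < N) (hl : 0 < l)
    (hfix : bpVarMap σ K N l = l) :
    𝔼 s : Fin K → Fin N → Bool, varDiscrepancy σ l s ≤
      (16 + 24 * (1 + (σ ^ 2)⁻¹) ^ 4) / (σ ^ 2) ^ 2 / N := by
  have : NeZero K := ⟨hK.ne'⟩
  have : NeZero N := ⟨hN.ne'⟩
  have hw : 0 < σ ^ 2 := by positivity
  have hh := lamHatStar_pos hσ N hK hl
  have hτw : (lamHatStar σ K N l)⁻¹ ≤ (σ ^ 2)⁻¹ := inv_anti₀ hw (sq_le_lamHatStar σ N hK hl)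
  set X := scaledSignatures (K := K) (N := N) σ
  have pointwise (s : Fin K → Fin N → Bool) : varDiscrepancy σ l s ≤
      (2 + 4 * (1 + (σ ^ 2)⁻¹) ^ 4) * 𝔼 i, (cavityQuad (X s) i - cavityMean (σ ^ 2) (X s)) ^ 2 +
        4 * (σ ^ 2 * N)⁻¹ ^ 2 := by
    refine (expect_inv_one_add_sub_gramResolvent_sq_le hw (by positivity) hτw _).trans ?_
    gcongr _ + 4 * ?_
    simpa only [Fintype.card_fin] using
      varResidual_inv_lamHatStar_div_sq_le hσ hK hN hl hfix
  calc 𝔼 s, varDiscrepancy σ l s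
      ≤ (2 + 4 * (1 + (σ ^ 2)⁻¹) ^ 4) *
          𝔼 i, 𝔼 s, (cavityQuad (X s) i - cavityMean (σ ^ 2) (X s)) ^ 2 +
            4 * (σ ^ 2 * N)⁻¹ ^ 2 := by
        rw [expect_comm, mul_expect, ← Fintype.expect_const (ι := Fin K → Fin N → Bool)
          (4 * (σ ^ 2 * N : ℝ)⁻¹ ^ 2), ← expect_add_distrib]
        exact expect_le_expect fun s _ => pointwise s
    _ ≤ (2 + 4 * (1 + (σ ^ 2)⁻¹) ^ 4) * (6 / ((σ ^ 2) ^ 2 * N)) +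
          4 * (1 / ((σ ^ 2) ^ 2 * N)) := by
        gcongr
        · exact expect_le univ_nonempty fun i _ => expect_cavityQuad_sub_cavityMean_sq_le σ i
        · exact inv_mul_natCast_sq_le _ N
    _ = (16 + 24 * (1 + (σ ^ 2)⁻¹) ^ 4) / (σ ^ 2) ^ 2 / N := by ring

end Consistency

theorem bp_variance_estimate_consistency_general (σ : ℝ) (hσ : σ ≠ 0) (K : ℕ → ℕ)
    (lamStar : ℕ → ℝ)
    (hfix : ∀ᶠ N in Filter.atTop, 0 < K N ∧ 0 < lamStar N ∧
      bpVarMap σ (K N) N (lamStar N) = lamStar N) (ε : ℝ) (hε : 0 < ε) :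
    Filter.Tendsto
      (fun N : ℕ =>
        (Nat.card {s : Fin (K N) → Fin N → Bool //
          ε < (1 / (K N : ℝ)) * ∑ i : Fin (K N),
            (1 / (1 + 1 / lamHatStar σ (K N) N (lamStar N)) -
              (((1 + (σ ^ 2)⁻¹ • ((Stilde (toSign s))ᵀ * Stilde (toSign s)) :
                  Matrix (Fin (K N)) (Fin (K N)) ℝ))⁻¹ i i)) ^ 2} : ℝ) /
          2 ^ (K N * N))
      Filter.atTop (nhds 0) := by
  simp only [← varDiscrepancy_eq_sum]
  refine squeeze_zero' (.of_forall fun N => by positivity) ?_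
    (tendsto_const_div_atTop_nhds_zero_nat
      ((16 + 24 * (1 + (σ ^ 2)⁻¹) ^ 4) / (σ ^ 2) ^ 2 / ε))
  filter_upwards [hfix, Filter.eventually_gt_atTop 0] with N ⟨hK, hl, hfixN⟩ hN
  calc (Nat.card {s : Fin (K N) → Fin N → Bool // ε < varDiscrepancy σ (lamStar N) s} : ℝ) /
        2 ^ (K N * N)
      ≤ (𝔼 s : Fin (K N) → Fin N → Bool, varDiscrepancy σ (lamStar N) s) / ε := by
        simpa [pow_mul'] using card_lt_div_card_le_expect_div
          (varDiscrepancy_nonneg (K := K N) (N := N) σ (lamStar N)) hε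
    _ ≤ (16 + 24 * (1 + (σ ^ 2)⁻¹) ^ 4) / (σ ^ 2) ^ 2 / N / ε := by
        gcongr
        exact expect_varDiscrepancy_le hσ hK hN hl hfixN
    _ = (16 + 24 * (1 + (σ ^ 2)⁻¹) ^ 4) / (σ ^ 2) ^ 2 / ε / N := div_right_comm _ _ _

/-- **Theorem 3.** With K = ⌈αN⌉ and i.i.d. uniform ±1 signatures, the
mean square discrepancy D = (1/K)Σᵢ(1/L^{(∞)}_N − [(I + σ⁻²S̃ᵀS̃)⁻¹]ᵢᵢ)² between the BP
precision estimate L^{(∞)}_N = 1 + 1/λ̂*_N and the exact posterior variances tends to 0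
in probability as N → ∞. -/
theorem bp_variance_estimate_consistency (σ α : ℝ) (hσ : 0 < σ) (hα : 0 < α)
    (lamStar : ℕ → ℝ)
    (hfix : ∀ N : ℕ, 2 ≤ N →
      1 < lamStar N ∧
      bpVarMap σ ⌈α * (N : ℝ)⌉₊ N (lamStar N) = lamStar N ∧
      (∀ l : ℝ, 0 < l → bpVarMap σ ⌈α * (N : ℝ)⌉₊ N l = l → l = lamStar N)) :
    ∀ ε : ℝ, 0 < ε →
      Filter.Tendsto
        (fun N : ℕ =>
          (Nat.card {s : Fin ⌈α * (N : ℝ)⌉₊ → Fin N → Bool //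
            ε < (1 / (⌈α * (N : ℝ)⌉₊ : ℝ)) * ∑ i : Fin ⌈α * (N : ℝ)⌉₊,
              (1 / (1 + 1 / lamHatStar σ ⌈α * (N : ℝ)⌉₊ N (lamStar N)) -
                (((1 + (σ ^ 2)⁻¹ • ((Stilde (toSign s))ᵀ * Stilde (toSign s)) :
                    Matrix (Fin ⌈α * (N : ℝ)⌉₊) (Fin ⌈α * (N : ℝ)⌉₊) ℝ))⁻¹ i i)) ^ 2} : ℝ) /
            2 ^ (⌈α * (N : ℝ)⌉₊ * N))
        Filter.atTop (nhds 0) :=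
  bp_variance_estimate_consistency_general σ hσ.ne' (fun N => ⌈α * (N : ℝ)⌉₊) lamStar <| by
    filter_upwards [Filter.eventually_ge_atTop 2] with N hN
    have hN0 : (0 : ℝ) < N := mod_cast two_pos.trans_le hN
    exact ⟨Nat.ceil_pos.2 (mul_pos hα hN0), one_pos.trans (hfix N hN).1, (hfix N hN).2.1⟩
end
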